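/- For every m ≥ 1 and every first-order formula φ in the language of rings with m free variables, there exists N such that for every prime p and k ≥ 1 with p^k ≥ N, the number of m-tuples x ∈ (GaloisField p (2k))^m at which φ is satisfied is not equal to p^k. -/

import Mathlib

open FirstOrder

/-- The number of `k`-tuples of a (finite) ring `K` satisfying the ring-language formula `φ`,
where `K` is viewed as a structure for the language of rings via `compatibleRingOfRing`. -/
noncomputable def ringFormulaCount {k : ℕ} (φ : Language.ring.Formula (Fin k))
    (K : Type*) [Add K] [Mul K] [Neg K] [One K] [Zero K] : ℕ :=
  letI := Ring.compatibleRingOfRing K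
  Nat.card {x : Fin k → K // φ.Realize x}

/-!
Let `K` be a nonprincipal ultraproduct of algebraic closures of finite fields of orders `q ^ 2`, and
let `σ` be the ultraproduct of the Frobenius maps `x ↦ x ^ (q ^ 2)`, whose fixed field is the
ultraproduct of the finite fields. A `σ`-equivariant isomorphism between countable algebraically
closed subfields of `K`, algebraic over their fixed fields, extends to any further fixed point `y`
of `σ`. By saturation it suffices to find points of a plane curve of degree `d` over `y` at which
`σ` acts by a prescribed one of `d` rational functions. For each of these functions, Stepanov's
method in Bombieri's form gives at most `q ^ 2 + O(q)` points with `y` in the finite field; together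
they have `d * q ^ 2 - O(1)` such points, so that each one has `q ^ 2 - O(q)`, enough to leave a set
of size `o(q ^ 2)`. By back-and-forth, first-order formulas are invariant under these isomorphisms.

It follows that the fibres of a definable family of subsets of the field of order `q ^ 2` have at
most `C` or at least `q ^ 2 / C` elements, for otherwise `y` could be taken in a large fibre of size
`o(q ^ 2)` and moved out of it. By induction on the number of variables, the number of points of a
definable set is zero or within a constant factor of a power of `q ^ 2`, which a large `q` is not.
-/

namespace Felgner

/-! ### Bidegrees and resultants -/

section Bidegree

open Polynomial Bivariate

section CommRing

variable {R : Type*} [CommRing R]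

/-- The degree of a bivariate polynomial in its inner variable `X`; the degree in `Y` is
`natDegree`. -/
noncomputable def degX (f : R[X][Y]) : ℕ := (Bivariate.swap f).natDegree

lemma coeff_coeff_swap (f : R[X][Y]) (i j : ℕ) :
    ((Bivariate.swap f).coeff i).coeff j = (f.coeff j).coeff i := by
  induction f using Polynomial.induction_on' with
  | add f g hf hg => simp [hf, hg]
  | monomial n a =>
    rw [Bivariate.swap_monomial, coeff_mul_C, coeff_map, coeff_C_mul, coeff_X_pow, coeff_monomial]
    aesop

lemma degX_le_iff {f : R[X][Y]} {n : ℕ} : degX f ≤ n ↔ ∀ i, (f.coeff i).natDegree ≤ n := by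
  simp only [degX, natDegree_le_iff_coeff_eq_zero, Polynomial.ext_iff, coeff_coeff_swap,
    coeff_zero]
  exact ⟨fun h i N hN => h N hN i, fun h N hN i => h i N hN⟩

lemma natDegree_coeff_le_degX (f : R[X][Y]) (i : ℕ) : (f.coeff i).natDegree ≤ degX f :=
  degX_le_iff.1 le_rfl i

lemma degX_C_le (p : R[X]) : degX (C p) ≤ p.natDegree := by
  rw [degX, Bivariate.swap_C]
  exact natDegree_map_le

lemma degX_mul_le (f g : R[X][Y]) : degX (f * g) ≤ degX f + degX g := by
  simpa only [degX, map_mul] using natDegree_mul_le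

lemma degX_pow_le (f : R[X][Y]) (n : ℕ) : degX (f ^ n) ≤ n * degX f := by
  simpa only [degX, map_pow] using natDegree_pow_le

lemma degX_sum_le {ι : Type*} (s : Finset ι) (f : ι → R[X][Y]) {n : ℕ}
    (hf : ∀ i ∈ s, degX (f i) ≤ n) : degX (∑ i ∈ s, f i) ≤ n := by
  simpa only [degX, map_sum] using natDegree_sum_le_of_forall_le s _ hf

lemma degX_derivative_le (f : R[X][Y]) : degX (derivative f) ≤ degX f := by
  refine degX_le_iff.2 fun i => ?_
  rw [coeff_derivative, ← Nat.cast_succ, ← C_eq_natCast]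
  exact (natDegree_mul_C_le _ _).trans (natDegree_coeff_le_degX f _)

lemma degX_smul_le (a : R) (f : R[X][Y]) : degX (a • f) ≤ degX f :=
  degX_le_iff.2 fun i => by
    rw [coeff_smul]
    exact (natDegree_smul_le _ _).trans (natDegree_coeff_le_degX f i)

lemma degX_map_le {S : Type*} [CommRing S] (φ : R →+* S) (f : R[X][Y]) :
    degX (f.map (mapRingHom φ)) ≤ degX f :=
  degX_le_iff.2 fun i => by
    rw [coeff_map, coe_mapRingHom]
    exact natDegree_map_le.trans (natDegree_coeff_le_degX f i)

lemma degX_le_of_dvd [IsDomain R] {f g : R[X][Y]} (hfg : f ∣ g) (hg : g ≠ 0) :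
    degX f ≤ degX g := by
  obtain ⟨c, rfl⟩ := hfg
  have hswap : Bivariate.swap (f * c) = Bivariate.swap f * Bivariate.swap c := map_mul _ f c
  rw [degX, degX, hswap]
  refine natDegree_le_of_dvd (dvd_mul_right _ _) fun h0 => hg ?_
  rwa [← hswap, EmbeddingLike.map_eq_zero_iff] at h0

lemma natDegree_resultant_le (h f : R[X][Y]) (d n : ℕ) :
    (resultant h f d n).natDegree ≤ d * degX f + n * degX h := by
  unfold resultant
  rw [Matrix.det_apply]
  refine natDegree_sum_le_of_forall_le _ _ fun σ _ => (natDegree_smul_le _ _).trans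
    ((natDegree_prod_le _ _).trans ?_)
  rw [Fin.sum_univ_add]
  refine add_le_add ((Finset.sum_le_card_nsmul _ _ (degX f) fun i _ => ?_).trans (by simp))
    ((Finset.sum_le_card_nsmul _ _ (degX h) fun i _ => ?_).trans (by simp))
  · simp only [sylvester, Matrix.of_apply, Fin.addCases_left]
    split_ifs
    exacts [natDegree_coeff_le_degX _ _, by simp]
  · simp only [sylvester, Matrix.of_apply, Fin.addCases_right]
    split_ifs
    exacts [natDegree_coeff_le_degX _ _, by simp]

end CommRing

lemma dvd_of_resultant_eq_zero {R : Type*} [CommRing R] [IsDomain R] [IsIntegrallyClosed R]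
    {h f : R[X]} (hm : h.Monic) (hi : Irreducible h) (hr : resultant h f = 0) : h ∣ f := by
  let K := FractionRing R
  have hinj : Function.Injective (algebraMap R K) := IsFractionRing.injective R K
  have hiK := (hm.irreducible_iff_irreducible_map_fraction_map (K := K)).1 hi
  have hrK : resultant (h.map (algebraMap R K)) (f.map (algebraMap R K)) = 0 := by
    rw [natDegree_map_eq_of_injective hinj, natDegree_map_eq_of_injective hinj,
      resultant_map_map, hr, map_zero]
  refine (map_dvd_map _ hinj hm).1 ?_
  by_contra hnd
  exact (resultant_eq_zero_iff.1 hrK).2 (hiK.coprime_iff_not_dvd.2 hnd)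

end Bidegree

/-! ### Branches of a plane curve -/

section Branches

open Polynomial Bivariate
open scoped PowerSeries

variable {k : Type*} [Field k] {ι : Type*} [Fintype ι]

/-- The expansion of a polynomial at `c`, as a power series in the local parameter `X - c`. -/
noncomputable def taylorSeries (c : k) : k[X] →ₐ[k] k⟦X⟧ :=
  aeval (PowerSeries.X + PowerSeries.C c)

lemma taylorSeries_apply (c : k) (p : k[X]) : taylorSeries c p = (taylor c p : k[X]) := by
  have : taylorSeries c = (coeToPowerSeries.algHom k).comp (taylorAlgHom c) := by
    ext; simp [taylorSeries]
  simp [this]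

lemma constantCoeff_comp_taylorSeries (c : k) :
    (PowerSeries.constantCoeff (R := k)).comp (taylorSeries c : k[X] →+* k⟦X⟧) =
      evalRingHom c := by
  ext <;> simp [taylorSeries]

lemma taylorSeries_injective (c : k) : Function.Injective (taylorSeries c) := fun p q hpq => by
  rw [taylorSeries_apply, taylorSeries_apply] at hpq
  exact taylor_injective c (Polynomial.coe_injective _ hpq)

lemma taylorSeries_map {φ : k →+* k} {c : k} (hc : φ c = c) (p : k[X]) :
    taylorSeries c (p.map φ) = PowerSeries.map φ (taylorSeries c p) := by
  rw [taylorSeries_apply, taylorSeries_apply, ← polynomial_map_coe, taylor_apply, taylor_apply,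
    Polynomial.map_comp]
  simp [hc]

lemma X_sub_C_pow_dvd_of_X_pow_dvd_taylorSeries {c : k} {p : k[X]} {n : ℕ}
    (h : PowerSeries.X ^ n ∣ taylorSeries c p) : (X - C c) ^ n ∣ p := by
  have htaylor : X ^ n ∣ taylor c p := by
    rw [X_pow_dvd_iff]
    intro i hi
    rw [← coeff_coe, ← taylorSeries_apply]
    exact PowerSeries.X_pow_dvd_iff.1 h i hi
  obtain ⟨r, hr⟩ := htaylor
  refine ⟨taylor (-c) r, taylor_injective c ?_⟩
  rw [hr, taylor_mul, taylor_pow]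
  simp [taylor_taylor]

/-- The value of `f(X, Y)` at the formal point `(c + X, z)`. -/
noncomputable def branchEval (c : k) (z : k⟦X⟧) : k[X][Y] →ₐ[k] k⟦X⟧ :=
  eval₂AlgHom (taylorSeries c) z fun _ => Commute.all _ _

lemma branchEval_eq_eval_map (c : k) (z : k⟦X⟧) (f : k[X][Y]) :
    branchEval c z f = (f.map (taylorSeries c : k[X] →+* k⟦X⟧)).eval z :=
  eval₂_eq_eval_map _

lemma branchEval_C (c : k) (z : k⟦X⟧) (p : k[X]) : branchEval c z (C p) = taylorSeries c p :=
  eval₂_C _ _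

lemma branchEval_Y (c : k) (z : k⟦X⟧) : branchEval c z Y = z :=
  eval₂_X _ _

lemma branchEval_comp (c : k) (z : k⟦X⟧) (f g : k[X][Y]) :
    branchEval c z (f.comp g) = branchEval c (branchEval c z g) f := by
  change (branchEval c z : k[X][Y] →+* k⟦X⟧) (eval₂ C g f) = _
  rw [hom_eval₂]
  exact congrArg (fun φ => eval₂ φ (branchEval c z g) f) (RingHom.ext (branchEval_C c z))

lemma constantCoeff_branchEval (c : k) (z : k⟦X⟧) (f : k[X][Y]) :
    PowerSeries.constantCoeff (branchEval c z f) =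
      evalEval c (PowerSeries.constantCoeff z) f := by
  rw [branchEval_eq_eval_map, ← eval_map_apply, map_map, constantCoeff_comp_taylorSeries,
    map_evalRingHom_eval]

/-- The power series `ζ j` are the branches above `X = c` of the curve `h(X, Y) = 0`, monic in
`Y`: in the local parameter `X - c` the polynomial `h` is the product of the `Y - ζ j`. -/
def HasBranches (h : k[X][Y]) (c : k) (ζ : ι → k⟦X⟧) : Prop :=
  h.map (taylorSeries c : k[X] →+* k⟦X⟧) = ∏ j, (X - C (ζ j))

namespace HasBranches

variable {h f : k[X][Y]} {c : k} {ζ : ι → k⟦X⟧}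

lemma monic (hζ : HasBranches h c ζ) : h.Monic := by
  refine Polynomial.monic_of_injective (f := (taylorSeries c : k[X] →+* k⟦X⟧))
    (taylorSeries_injective c) ?_
  rw [show h.map _ = _ from hζ]
  exact monic_prod_X_sub_C _ _

lemma natDegree_eq (hζ : HasBranches h c ζ) : h.natDegree = Fintype.card ι := by
  rw [← hζ.monic.natDegree_map (taylorSeries c : k[X] →+* k⟦X⟧), show h.map _ = _ from hζ,
    natDegree_finsetProd_X_sub_C_eq_card, Finset.card_univ]

lemma branchEval_eq_prod (hζ : HasBranches h c ζ) (z : k⟦X⟧) :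
    branchEval c z h = ∏ j, (z - ζ j) := by
  rw [branchEval_eq_eval_map, show h.map _ = _ from hζ, eval_prod]
  simp

lemma branchEval_eq_zero_of_dvd (hζ : HasBranches h c ζ) (hdvd : h ∣ f) (j : ι) :
    branchEval c (ζ j) f = 0 := by
  obtain ⟨g, rfl⟩ := hdvd
  rw [map_mul, hζ.branchEval_eq_prod, Finset.prod_eq_zero (Finset.mem_univ j) (sub_self _),
    zero_mul]

lemma evalEval_eq_prod (hζ : HasBranches h c ζ) (z : k) :
    evalEval c z h = ∏ j, (z - PowerSeries.constantCoeff (ζ j)) := by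
  have := constantCoeff_branchEval c (PowerSeries.C z) h
  rw [PowerSeries.constantCoeff_C] at this
  rw [← this, hζ.branchEval_eq_prod, map_prod]
  simp

lemma taylorSeries_resultant (hζ : HasBranches h c ζ) (f : k[X][Y]) :
    taylorSeries c (resultant h f) = ∏ j, branchEval c (ζ j) f := by
  let φ : k[X] →+* k⟦X⟧ := taylorSeries c
  have hmap : h.map φ = ∏ j, (X - C (ζ j)) := hζ
  have hsplits : (h.map φ).Splits := hmap ▸ Splits.prod fun j _ => Splits.X_sub_C _
  have hroots : (h.map φ).roots = Finset.univ.val.map ζ := by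
    rw [hmap, ← roots_multiset_prod_X_sub_C (Finset.univ.val.map ζ), Multiset.map_map]
    rfl
  have hres := resultant_eq_prod_eval (h.map φ) (f.map φ) f.natDegree natDegree_map_le hsplits
  rw [hζ.monic.natDegree_map, resultant_map_map, (hζ.monic.map _).leadingCoeff, one_pow, one_mul,
    hroots, Multiset.map_map] at hres
  exact hres.trans (Finset.prod_congr rfl fun j _ => (branchEval_eq_eval_map ..).symm)

end HasBranches

lemma exists_root_constantCoeff_eq {H : k⟦X⟧[X]} (hH : H.Monic) {z : k}
    (hz : (H.map PowerSeries.constantCoeff).eval z = 0)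
    (hz' : (H.map PowerSeries.constantCoeff).derivative.eval z ≠ 0) :
    ∃ ξ : k⟦X⟧, H.IsRoot ξ ∧ PowerSeries.constantCoeff ξ = z := by
  have hconst (P : k⟦X⟧[X]) : PowerSeries.constantCoeff (P.eval (PowerSeries.C z)) =
      (P.map PowerSeries.constantCoeff).eval z := by
    rw [← eval_map_apply, PowerSeries.constantCoeff_C]
  obtain ⟨ξ, hξ, hξz⟩ := HenselianRing.is_henselian (I := Ideal.span {(PowerSeries.X : k⟦X⟧)}) H hH
    (PowerSeries.C z)
    (by rwa [Ideal.mem_span_singleton, PowerSeries.X_dvd_iff, hconst])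
    (by
      refine IsUnit.map _ (PowerSeries.isUnit_iff_constantCoeff.2 ?_)
      rwa [hconst, ← derivative_map, isUnit_iff_ne_zero])
  rw [Ideal.mem_span_singleton, PowerSeries.X_dvd_iff, map_sub, sub_eq_zero] at hξz
  exact ⟨ξ, hξ, by simpa using hξz⟩

/-- Hensel's lemma, one root of the separable fibre at a time. -/
lemma exists_hasBranches [IsAlgClosed k] {h : k[X][Y]} (hm : h.Monic) {c : k}
    (hs : (h.map (evalRingHom c)).Separable) :
    ∃ ζ : Fin h.natDegree → k⟦X⟧, Function.Injective (fun j => PowerSeries.constantCoeff (ζ j)) ∧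
      HasBranches h c ζ := by
  set h₀ := h.map (evalRingHom c)
  set H := h.map (taylorSeries c : k[X] →+* k⟦X⟧) with hH
  have hH₀ : H.map PowerSeries.constantCoeff = h₀ := by
    rw [hH, map_map, constantCoeff_comp_taylorSeries]
  have hcard : Fintype.card (h₀.rootSet k) = h.natDegree := by
    rw [card_rootSet_eq_natDegree hs (IsAlgClosed.splits _), hm.natDegree_map]
  let e := (Fintype.equivFinOfCardEq hcard).symm
  have hroot (j) : h₀.eval (e j : k) = 0 := by
    simpa using (mem_rootSet.1 (e j).2).2
  have hroot' (j) : h₀.derivative.eval (e j : k) ≠ 0 := by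
    simpa using hs.aeval_derivative_ne_zero (x := (e j : k)) (by simpa using hroot j)
  have hlift (j) : ∃ ξ : k⟦X⟧, H.IsRoot ξ ∧ PowerSeries.constantCoeff ξ = e j :=
    exists_root_constantCoeff_eq (hm.map _) (by rw [hH₀, hroot]) (by rw [hH₀]; exact hroot' j)
  choose ζ hζ hζe using hlift
  have hinj : Function.Injective fun j => PowerSeries.constantCoeff (ζ j) := fun i j hij => by
    simp only [hζe] at hij
    exact e.injective (Subtype.ext hij)
  have hcoprime : Pairwise fun i j => IsCoprime (X - C (ζ i)) (X - C (ζ j)) := fun i j hij =>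
    isCoprime_X_sub_C_of_isUnit_sub <| PowerSeries.isUnit_iff_constantCoeff.2 <| by
      rw [map_sub, isUnit_iff_ne_zero, sub_ne_zero]
      exact hinj.ne hij
  have hdvd : ∏ j, (X - C (ζ j)) ∣ H :=
    Fintype.prod_dvd_of_coprime hcoprime fun j => dvd_iff_isRoot.2 (hζ j)
  refine ⟨ζ, hinj, eq_of_monic_of_dvd_of_natDegree_le (monic_prod_X_sub_C _ _) (hm.map _) hdvd ?_⟩
  rw [natDegree_finsetProd_X_sub_C_eq_card, hm.natDegree_map, Finset.card_fin]

end Branches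

/-! ### Counting zeros on a plane curve -/

section ZeroCount

open Polynomial Bivariate
open scoped PowerSeries

variable {k : Type*} [Field k] {ι : Type*} [Fintype ι] {h f : k[X][Y]} {c : k} {ζ : ι → k⟦X⟧}

lemma HasBranches.sum_le_rootMultiplicity_resultant (hζ : HasBranches h c ζ)
    (hr : resultant h f ≠ 0) (o : ι → ℕ) (ho : ∀ j, PowerSeries.X ^ o j ∣ branchEval c (ζ j) f) :
    ∑ j, o j ≤ rootMultiplicity c (resultant h f) := by
  refine (le_rootMultiplicity_iff hr).2 (X_sub_C_pow_dvd_of_X_pow_dvd_taylorSeries ?_)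
  rw [hζ.taylorSeries_resultant, ← Finset.prod_pow_eq_pow_sum]
  exact Finset.prod_dvd_prod_of_dvd _ _ fun j _ => ho j

lemma card_le_rootMultiplicity_resultant [IsAlgClosed k] (hm : h.Monic) {t : k}
    (hs : (h.map (evalRingHom t)).Separable) (hr : resultant h f ≠ 0) (S : Finset k)
    (hh : ∀ z ∈ S, evalEval t z h = 0) (hf : ∀ z ∈ S, evalEval t z f = 0) :
    S.card ≤ rootMultiplicity t (resultant h f) := by
  classical
  obtain ⟨ξ, -, hξ⟩ := exists_hasBranches hm hs
  let value (j : Fin h.natDegree) : k := PowerSeries.constantCoeff (ξ j)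
  have hsub : S ⊆ (Finset.univ.filter fun j => value j ∈ S).image value := fun z hz => by
    obtain ⟨j, -, hj⟩ := Finset.prod_eq_zero_iff.1 (hξ.evalEval_eq_prod z ▸ hh z hz)
    rw [sub_eq_zero] at hj
    subst hj
    exact Finset.mem_image_of_mem _ (Finset.mem_filter.2 ⟨Finset.mem_univ _, hz⟩)
  calc S.card ≤ (Finset.univ.filter fun j => value j ∈ S).card :=
        (Finset.card_le_card hsub).trans Finset.card_image_le
    _ = ∑ j, if value j ∈ S then 1 else 0 := Finset.card_filter _ _
    _ ≤ rootMultiplicity t (resultant h f) :=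
        hξ.sum_le_rootMultiplicity_resultant hr _ fun j => ?_
  split_ifs with hj
  · rw [pow_one, PowerSeries.X_dvd_iff, constantCoeff_branchEval, hf _ hj]
  · simp

lemma sum_rootMultiplicity_le_natDegree (p : k[X]) (T : Finset k) :
    ∑ t ∈ T, rootMultiplicity t p ≤ p.natDegree := by
  classical
  calc ∑ t ∈ T, rootMultiplicity t p = ∑ t ∈ T, p.roots.count t := by simp only [count_roots]
    _ ≤ ∑ t ∈ T ∪ p.roots.toFinset, p.roots.count t :=
        Finset.sum_le_sum_of_subset Finset.subset_union_left
    _ = p.roots.card := Multiset.sum_count_eq_card fun a ha => by simp [Multiset.mem_toFinset.2 ha]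
    _ ≤ p.natDegree := card_roots' p

/-- Bézout: both the orders of vanishing along the branches above `c` and the zeros above other
points contribute to the zeros of the resultant of `h` and `f`. -/
lemma HasBranches.sum_add_card_le [IsAlgClosed k] (hζ : HasBranches h c ζ) (hi : Irreducible h)
    (hnd : ¬ h ∣ f) (o : ι → ℕ) (ho : ∀ j, PowerSeries.X ^ o j ∣ branchEval c (ζ j) f)
    (P : Finset (k × k)) (hc : ∀ x ∈ P, x.1 ≠ c)
    (hs : ∀ x ∈ P, (h.map (evalRingHom x.1)).Separable)
    (hh : ∀ x ∈ P, evalEval x.1 x.2 h = 0) (hf : ∀ x ∈ P, evalEval x.1 x.2 f = 0) :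
    ∑ j, o j + P.card ≤ Fintype.card ι * degX f + f.natDegree * degX h := by
  classical
  have hr : resultant h f ≠ 0 := mt (dvd_of_resultant_eq_zero hζ.monic hi) hnd
  have hfibre (t) (ht : t ∈ P.image Prod.fst) :
      (P.filter fun x => x.1 = t).card ≤ rootMultiplicity t (resultant h f) := by
    obtain ⟨y, hy, rfl⟩ := Finset.mem_image.1 ht
    have hinj : Set.InjOn (Prod.snd : k × k → k) ↑(P.filter fun x => x.1 = y.1) := by
      intro a ha b hb hab
      rw [Finset.mem_coe, Finset.mem_filter] at ha hb
      exact Prod.ext (ha.2.trans hb.2.symm) hab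
    rw [← Finset.card_image_of_injOn hinj]
    refine card_le_rootMultiplicity_resultant hζ.monic (hs y hy) hr _ ?_ ?_ <;>
    · simp only [Finset.mem_image, Finset.mem_filter]
      rintro _ ⟨x, ⟨hx, hxy⟩, rfl⟩
      rw [← hxy]
      first | exact hh x hx | exact hf x hx
  have hcP : c ∉ P.image Prod.fst := fun h => by
    obtain ⟨x, hx, hxc⟩ := Finset.mem_image.1 h
    exact hc x hx hxc
  calc ∑ j, o j + P.card
      = ∑ j, o j + ∑ t ∈ P.image Prod.fst, (P.filter fun x => x.1 = t).card := by
        rw [← Finset.card_eq_sum_card_image]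
    _ ≤ rootMultiplicity c (resultant h f) +
          ∑ t ∈ P.image Prod.fst, rootMultiplicity t (resultant h f) :=
        add_le_add (hζ.sum_le_rootMultiplicity_resultant hr o ho) (Finset.sum_le_sum hfibre)
    _ = ∑ t ∈ insert c (P.image Prod.fst), rootMultiplicity t (resultant h f) := by
        rw [Finset.sum_insert hcP]
    _ ≤ (resultant h f).natDegree := sum_rootMultiplicity_le_natDegree _ _
    _ ≤ Fintype.card ι * degX f + f.natDegree * degX h := by
        rw [← hζ.natDegree_eq]
        exact natDegree_resultant_le ..

end ZeroCount

/-! ### Functions with a pole at one branch -/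

section OnePole

open Polynomial Bivariate
open scoped PowerSeries

variable {k : Type*} [Field k] {ι : Type*} [Fintype ι]

/-- The polynomials of `X`-degree at most `n` and `Y`-degree less than the number of branches which
vanish to order `n` on all branches but `ζ j₀`: the functions `f / (X - c) ^ n` on the curve that
have poles above `c` on the branch `ζ j₀` only. -/
def onePoleSpace (c : k) (ζ : ι → k⟦X⟧) (j₀ : ι) (n : ℕ) : Submodule k k[X][Y] where
  carrier := {f | f.natDegree < Fintype.card ι ∧ degX f ≤ n ∧
    ∀ j ≠ j₀, PowerSeries.X ^ n ∣ branchEval c (ζ j) f}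
  add_mem' {f g} hf hg := by
    refine ⟨(natDegree_add_le f g).trans_lt (max_lt hf.1 hg.1), ?_, fun j hj => ?_⟩
    · rw [degX, map_add]
      exact natDegree_add_le_of_degree_le hf.2.1 hg.2.1
    · rw [map_add]
      exact dvd_add (hf.2.2 j hj) (hg.2.2 j hj)
  zero_mem' := ⟨by simpa using Fintype.card_pos_iff.2 ⟨j₀⟩, by simp [degX], by simp⟩
  smul_mem' a f hf := by
    refine ⟨(natDegree_smul_le a f).trans_lt hf.1, (degX_smul_le a f).trans hf.2.1,
      fun j hj => ?_⟩
    rw [map_smul, PowerSeries.smul_eq_C_mul]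
    exact (hf.2.2 j hj).mul_left _

open Classical in
/-- The bivariate polynomial with given coefficients, of degree less than `n` in `X` and less than
`d` in `Y`. -/
noncomputable def ofCoeffs (d n : ℕ) : (Fin d → Fin n → k) →ₗ[k] k[X][Y] :=
  (ofFn d).restrictScalars k ∘ₗ (ofFn n).compLeft (Fin d)

lemma ofCoeffs_injective (d n : ℕ) : Function.Injective (ofCoeffs (k := k) d n) := by
  classical exact (injective_ofFn d).comp (injective_ofFn n).comp_left

lemma natDegree_ofCoeffs_lt {d : ℕ} (hd : 0 < d) {n : ℕ} (u : Fin d → Fin n → k) :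
    (ofCoeffs d n u).natDegree < d := by
  classical exact ofFn_natDegree_lt hd _

lemma degX_ofCoeffs_le {d n : ℕ} (u : Fin d → Fin (n + 1) → k) :
    degX (ofCoeffs d (n + 1) u) ≤ n := by
  classical
  refine degX_le_iff.2 fun i => ?_
  by_cases hi : i < d
  · have hcoeff : (ofCoeffs d (n + 1) u).coeff i = ofFn (n + 1) (u ⟨i, hi⟩) :=
      ofFn_coeff_eq_val_of_lt _ hi
    rw [hcoeff]
    exact Nat.le_of_lt_succ (ofFn_natDegree_lt n.succ_pos _)
  · have hzero : (ofCoeffs d (n + 1) u).coeff i = 0 := ofFn_coeff_eq_zero_of_ge _ (not_lt.1 hi)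
    rw [hzero, natDegree_zero]
    exact n.zero_le

/-- Vanishing to order `n` on the other `d - 1` branches imposes `(d - 1) n` linear conditions on
the `d (n + 1)` coefficients. -/
lemma exists_linearIndependent_onePoleSpace (c : k) (ζ : ι → k⟦X⟧) (j₀ : ι) (n : ℕ) :
    ∃ b : Fin (n + 1) → k[X][Y], LinearIndependent k b ∧ ∀ i, b i ∈ onePoleSpace c ζ j₀ n := by
  classical
  set d := Fintype.card ι with hd
  have hdpos : 0 < d := Fintype.card_pos_iff.2 ⟨j₀⟩
  obtain ⟨conditions, hconditions⟩ :
      ∃ L : (Fin d → Fin (n + 1) → k) →ₗ[k] ({j : ι // j ≠ j₀} → Fin n → k),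
        ∀ u j i, L u j i = PowerSeries.coeff i (branchEval c (ζ j) (ofCoeffs d (n + 1) u)) :=
    ⟨LinearMap.pi fun j => LinearMap.pi fun i =>
      PowerSeries.coeff (i : ℕ) ∘ₗ (branchEval c (ζ j)).toLinearMap ∘ₗ ofCoeffs d (n + 1),
      fun _ _ _ => rfl⟩
  have hker : n + 1 ≤ Module.finrank k (LinearMap.ker conditions) := by
    have hdim := LinearMap.finrank_range_add_finrank_ker conditions
    have hrange : Module.finrank k (LinearMap.range conditions) ≤ (d - 1) * n :=
      (Submodule.finrank_le _).trans (by
        simp [Module.finrank_pi_fintype, Fintype.card_subtype_compl, hd])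
    rw [Module.finrank_pi_fintype, Finset.sum_const, Finset.card_fin, Module.finrank_fin_fun,
      smul_eq_mul] at hdim
    have hcount : (d - 1) * n + (n + d) = d * (n + 1) := by
      rw [← add_assoc, ← Nat.succ_mul, Nat.succ_eq_add_one, Nat.sub_add_cancel hdpos, mul_add_one]
    omega
  obtain ⟨u, hu⟩ := exists_linearIndependent_of_le_finrank hker
  refine ⟨fun i => ofCoeffs d (n + 1) (u i), ?_, fun i =>
    ⟨natDegree_ofCoeffs_lt hdpos _, degX_ofCoeffs_le _, fun j hj => ?_⟩⟩
  · exact (hu.map' (LinearMap.ker conditions).subtype (Submodule.ker_subtype _)).map' _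
      (LinearMap.ker_eq_bot.2 (ofCoeffs_injective d (n + 1)))
  · refine PowerSeries.X_pow_dvd_iff.2 fun r hr => ?_
    rw [← hconditions _ ⟨j, hj⟩ ⟨r, hr⟩, LinearMap.mem_ker.1 (u i).2]
    rfl

/-- A space of power series of dimension `N` realizes at least `N` orders, because the coefficients
at the realized orders determine its elements. -/
lemma exists_injective_order {N : ℕ} {u : Fin N → k⟦X⟧} (hu : LinearIndependent k u) :
    ∃ g : Fin N → k⟦X⟧, (∀ i, g i ∈ Submodule.span k (Set.range u)) ∧ (∀ i, g i ≠ 0) ∧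
      Function.Injective fun i => (g i).order := by
  classical
  let V := Submodule.span k (Set.range u)
  let orders : Set ℕ := {n | ∃ g ∈ V, g ≠ 0 ∧ g.order = n}
  have hV : Module.finrank k V = N := by rw [finrank_span_eq_card hu, Fintype.card_fin]
  have : FiniteDimensional k V := FiniteDimensional.span_of_finite k (Set.finite_range u)
  have hemb : Nonempty (Fin N ↪ orders) := by
    rcases Set.finite_or_infinite orders with hfin | hinf
    · have := hfin.fintype
      let coeffs : V →ₗ[k] (orders → k) :=
        LinearMap.pi fun n => PowerSeries.coeff (n : ℕ) ∘ₗ V.subtype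
      have hcoeffs : Function.Injective coeffs := by
        refine (injective_iff_map_eq_zero _).2 fun g hg => Subtype.ext ?_
        by_contra hne
        exact PowerSeries.coeff_order hne
          (congrFun hg ⟨_, g, g.2, hne, (PowerSeries.coe_toNat_order hne).symm⟩)
      have := LinearMap.finrank_le_finrank_of_injective hcoeffs
      rw [hV, Module.finrank_fintype_fun_eq_card] at this
      exact Function.Embedding.nonempty_of_card_le (by simpa using this)
    · have := hinf.to_subtype
      exact ⟨Fin.valEmbedding.trans (Infinite.natEmbedding orders)⟩
  obtain ⟨e⟩ := hemb
  choose g hgV hg0 hgo using fun i => (e i).2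
  refine ⟨g, hgV, hg0, fun i j hij => e.injective (Subtype.ext ?_)⟩
  simpa only [hgo, Nat.cast_inj] using hij

lemma sum_ite_eq_add_card_sub_one_mul [DecidableEq ι] (j₀ : ι) (r n : ℕ) :
    ∑ j, (if j = j₀ then r else n) = r + (Fintype.card ι - 1) * n := by
  rw [← Finset.add_sum_erase _ _ (Finset.mem_univ j₀), if_pos rfl,
    Finset.sum_congr rfl (g := fun _ => n) fun j hj => if_neg (Finset.ne_of_mem_erase hj),
    Finset.sum_const, Finset.card_erase_of_mem (Finset.mem_univ _), Finset.card_univ, smul_eq_mul]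

namespace HasBranches

variable [IsAlgClosed k] {h f : k[X][Y]} {c : k} {ζ : ι → k⟦X⟧}

lemma dvd_of_lt_sum (hζ : HasBranches h c ζ) (hi : Irreducible h) (o : ι → ℕ)
    (ho : ∀ j, PowerSeries.X ^ o j ∣ branchEval c (ζ j) f)
    (hlt : Fintype.card ι * degX f + f.natDegree * degX h < ∑ j, o j) : h ∣ f := by
  by_contra hnd
  have := hζ.sum_add_card_le hi hnd o ho ∅ (by simp) (by simp) (by simp) (by simp)
  rw [Finset.card_empty] at this
  omega

lemma le_of_X_pow_dvd_branchEval (hζ : HasBranches h c ζ) (hi : Irreducible h) {j₀ : ι} {n r : ℕ}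
    (hf : f ∈ onePoleSpace c ζ j₀ n) (hf0 : f ≠ 0)
    (hr : PowerSeries.X ^ r ∣ branchEval c (ζ j₀) f) :
    r ≤ n + (Fintype.card ι - 1) * degX h := by
  classical
  obtain ⟨hdeg, hdegX, hpole⟩ := hf
  by_contra! hlt
  have hdvd : h ∣ f := by
    refine hζ.dvd_of_lt_sum hi (fun j => if j = j₀ then r else n) (fun j => ?_) ?_
    · split_ifs with hj
      exacts [hj ▸ hr, hpole j hj]
    · rw [sum_ite_eq_add_card_sub_one_mul]
      have hX := Nat.mul_le_mul_left (Fintype.card ι) hdegX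
      have hY := Nat.mul_le_mul_right (degX h) (Nat.le_sub_one_of_lt hdeg)
      have hn : Fintype.card ι * n = n + (Fintype.card ι - 1) * n := by
        rw [add_comm, ← Nat.succ_mul, Nat.succ_eq_add_one, Nat.sub_add_cancel (by omega)]
      omega
  have := natDegree_le_of_dvd hdvd hf0
  rw [hζ.natDegree_eq] at this
  omega

lemma branchEval_ne_zero (hζ : HasBranches h c ζ) (hi : Irreducible h) {j₀ : ι} {n : ℕ}
    (hf : f ∈ onePoleSpace c ζ j₀ n) (hf0 : f ≠ 0) : branchEval c (ζ j₀) f ≠ 0 := fun h0 => by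
  have := hζ.le_of_X_pow_dvd_branchEval hi hf hf0
    (r := n + (Fintype.card ι - 1) * degX h + 1) (h0 ▸ dvd_zero _)
  omega

lemma exists_onePoleSpace_injective_order (hζ : HasBranches h c ζ) (hi : Irreducible h) (j₀ : ι)
    (n : ℕ) : ∃ f : Fin (n + 1) → k[X][Y], (∀ i, f i ∈ onePoleSpace c ζ j₀ n) ∧
      (∀ i, branchEval c (ζ j₀) (f i) ≠ 0) ∧
      Function.Injective fun i => (branchEval c (ζ j₀) (f i)).order := by
  obtain ⟨b, hb, hbmem⟩ := exists_linearIndependent_onePoleSpace c ζ j₀ n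
  have hspan : Submodule.span k (Set.range b) ≤ onePoleSpace c ζ j₀ n :=
    Submodule.span_le.2 (Set.range_subset_iff.2 hbmem)
  have hli : LinearIndependent k ((branchEval c (ζ j₀)).toLinearMap ∘ b) := by
    refine hb.map (Submodule.disjoint_def.2 fun f hf hf' => ?_)
    by_contra hf0
    exact hζ.branchEval_ne_zero hi (hspan hf) hf0 (LinearMap.mem_ker.1 hf')
  obtain ⟨g, hg, hg0, hgo⟩ := exists_injective_order hli
  simp only [Set.range_comp, Submodule.span_image] at hg
  choose f hf hfg using hg
  simp only [AlgHom.toLinearMap_apply] at hfg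
  exact ⟨f, fun i => hspan (hf i), fun i => hfg i ▸ hg0 i, by simpa only [hfg] using hgo⟩

end HasBranches

end OnePole

/-! ### The Bombieri–Stepanov upper bound -/

section Stepanov

open Polynomial Bivariate
open scoped PowerSeries

variable {k : Type*} [Field k]

/-- The polynomial `δ ^ d * F f` on a curve on which the endomorphism `F` acts by `δ * F Y = w` and
fixes `X`. -/
noncomputable def frobeniusTwist (d : ℕ) (F : k →+* k) (δ : k[X]) (w f : k[X][Y]) : k[X][Y] :=
  ∑ b ∈ Finset.range d, C ((f.coeff b).map F) * C δ ^ (d - b) * w ^ b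

lemma eval₂_frobeniusTwist {S : Type*} [CommRing S] {d : ℕ} {F : k →+* k} {δ : k[X]}
    {w f : k[X][Y]} (hf : f.natDegree < d) {ψ : k[X] →+* S} {Φ : S →+* S}
    (hψ : ∀ p : k[X], ψ (p.map F) = Φ (ψ p)) {z z' : S} (hz : ψ δ * Φ z' = w.eval₂ ψ z) :
    (frobeniusTwist d F δ w f).eval₂ ψ z = ψ δ ^ d * Φ (f.eval₂ ψ z') := by
  rw [eval₂_eq_sum_range' ψ hf, frobeniusTwist, eval₂_finsetSum, map_sum, Finset.mul_sum]
  refine Finset.sum_congr rfl fun b hb => ?_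
  simp only [eval₂_mul, eval₂_pow, eval₂_C, hψ, map_mul, map_pow, ← hz, mul_pow]
  rw [← pow_sub_mul_pow (ψ δ) (Finset.mem_range.1 hb).le]
  ring

lemma degX_frobeniusTwist_le {d m B : ℕ} {F : k →+* k} {δ : k[X]} {w f : k[X][Y]}
    (hf : degX f ≤ m) (hδ : δ.natDegree ≤ B) (hw : degX w ≤ B) :
    degX (frobeniusTwist d F δ w f) ≤ m + 2 * d * B := by
  refine degX_sum_le _ _ fun b hb => ?_
  have hb := Finset.mem_range.1 hb
  calc degX (C ((f.coeff b).map F) * C δ ^ (d - b) * w ^ b)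
      ≤ degX (C ((f.coeff b).map F)) + degX (C δ ^ (d - b)) + degX (w ^ b) :=
        (degX_mul_le _ _).trans (Nat.add_le_add_right (degX_mul_le _ _) _)
    _ ≤ m + d * B + d * B := by
        gcongr
        · exact (degX_C_le _).trans
            (natDegree_map_le.trans ((natDegree_coeff_le_degX f b).trans hf))
        · exact (degX_pow_le _ _).trans
            (Nat.mul_le_mul (Nat.sub_le _ _) ((degX_C_le δ).trans hδ))
        · exact (degX_pow_le _ _).trans (Nat.mul_le_mul hb.le hw)
    _ = m + 2 * d * B := by ring

lemma natDegree_frobeniusTwist_le {d B : ℕ} {F : k →+* k} {δ : k[X]} {w f : k[X][Y]}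
    (hw : w.natDegree ≤ B) : (frobeniusTwist d F δ w f).natDegree ≤ d * B := by
  refine natDegree_sum_le_of_forall_le _ _ fun b hb => ?_
  rw [← C_pow, ← C_mul]
  exact (natDegree_C_mul_le _ _).trans
    (natDegree_pow_le.trans (Nat.mul_le_mul (Finset.mem_range.1 hb).le hw))

lemma exists_ne_zero_X_pow_dvd_sum_smul {α : Type*} [Fintype α] (e : α → k⟦X⟧) (m K : ℕ)
    (he : ∀ a, PowerSeries.X ^ m ∣ e a) (hK : K < Fintype.card α) :
    ∃ v : α → k, v ≠ 0 ∧ PowerSeries.X ^ (m + K) ∣ ∑ a, v a • e a := by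
  classical
  choose e' he' using he
  let coeffs : (α → k) →ₗ[k] (Fin K → k) := LinearMap.pi fun r =>
    PowerSeries.coeff (r : ℕ) ∘ₗ Fintype.linearCombination k e'
  obtain ⟨v, hv, hv0⟩ := Submodule.exists_mem_ne_zero_of_ne_bot
    (LinearMap.ker_ne_bot_of_finrank_lt (f := coeffs) (by simpa using hK))
  refine ⟨v, hv0, ?_⟩
  simp only [he', ← mul_smul_comm, ← Finset.mul_sum, pow_add]
  exact mul_dvd_mul_left _
    (PowerSeries.X_pow_dvd_iff.2 fun r hr => congrFun (LinearMap.mem_ker.1 hv) ⟨r, hr⟩)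

lemma sum_ne_zero_of_injOn_order {α : Type*} [Fintype α] (g : α → k⟦X⟧)
    (hinj : Set.InjOn (fun a => (g a).order) {a | g a ≠ 0}) (hne : ∃ a, g a ≠ 0) :
    ∑ a, g a ≠ 0 := by
  classical
  obtain ⟨a, ha, hmin⟩ := Finset.exists_min_image (Finset.univ.filter fun a => g a ≠ 0)
    (fun a => (g a).order) (by simpa [Finset.filter_nonempty_iff] using hne)
  replace ha : g a ≠ 0 := by simpa using ha
  intro h0
  have hcoeff : PowerSeries.coeff (g a).order.toNat (∑ a, g a) =
      PowerSeries.coeff (g a).order.toNat (g a) := by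
    rw [map_sum, Finset.sum_eq_single a (fun b _ hba => ?_) (by simp)]
    by_cases hb : g b = 0
    · rw [hb, map_zero]
    · refine PowerSeries.coeff_of_lt_order _ ?_
      rw [PowerSeries.coe_toNat_order ha]
      exact (hmin b (by simpa using hb)).lt_of_ne fun h => hba (hinj hb ha h.symm)
  rw [h0, map_zero] at hcoeff
  exact PowerSeries.coeff_order ha hcoeff.symm

namespace HasBranches

variable [IsAlgClosed k] {ι : Type*} [Fintype ι] {h : k[X][Y]} {c : k} {ζ : ι → k⟦X⟧}

lemma exists_dvd_sum_smul (hζ : HasBranches h c ζ) (hi : Irreducible h) (j₀ : ι) {α : Type*}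
    [Fintype α] (E : α → k[X][Y]) (o : ι → ℕ)
    (ho : ∀ j a, PowerSeries.X ^ o j ∣ branchEval c (ζ j) (E a)) {M N K : ℕ}
    (hM : ∀ a, degX (E a) ≤ M) (hN : ∀ a, (E a).natDegree ≤ N) (hK : K < Fintype.card α)
    (hlt : Fintype.card ι * M + N * degX h < ∑ j, o j + K) :
    ∃ v : α → k, v ≠ 0 ∧ h ∣ ∑ a, v a • E a := by
  classical
  obtain ⟨v, hv0, hv⟩ := exists_ne_zero_X_pow_dvd_sum_smul (fun a => branchEval c (ζ j₀) (E a))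
    (o j₀) K (ho j₀) hK
  refine ⟨v, hv0, hζ.dvd_of_lt_sum hi (fun j => o j + if j = j₀ then K else 0) (fun j => ?_) ?_⟩
  · simp only [map_sum, map_smul]
    split_ifs with hj
    · exact hj ▸ hv
    · exact Finset.dvd_sum fun a _ => (ho j a).trans (Dvd.intro_left (PowerSeries.C (v a))
        (PowerSeries.smul_eq_C_mul _ _).symm)
  · rw [Finset.sum_add_distrib, Finset.sum_ite_eq' Finset.univ j₀, if_pos (Finset.mem_univ _)]
    have hX : degX (∑ a, v a • E a) ≤ M :=
      degX_sum_le _ _ fun a _ => (degX_smul_le _ _).trans (hM a)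
    have hY : (∑ a, v a • E a).natDegree ≤ N :=
      natDegree_sum_le_of_forall_le _ _ fun a _ => (natDegree_smul_le _ _).trans (hN a)
    exact (add_le_add (Nat.mul_le_mul_left _ hX) (Nat.mul_le_mul_right _ hY)).trans_lt hlt

lemma not_dvd_sum_mul_pow (hζ : HasBranches h c ζ) (hi : Irreducible h) {j₀ : ι} {l q : ℕ}
    (hlq : l + (Fintype.card ι - 1) * degX h < q) {α : Type*} [Fintype α] {s f : α → k[X][Y]}
    (hs : ∀ a, s a ∈ onePoleSpace c ζ j₀ l) (hs0 : s ≠ 0)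
    (hf0 : ∀ a, branchEval c (ζ j₀) (f a) ≠ 0)
    (hinj : Function.Injective fun a => (branchEval c (ζ j₀) (f a)).order) :
    ¬ h ∣ ∑ a, s a * f a ^ q := by
  let z (a : α) : k⟦X⟧ := branchEval c (ζ j₀) (s a)
  let u (a : α) : k⟦X⟧ := branchEval c (ζ j₀) (f a)
  have hz (a) (ha : s a ≠ 0) : z a ≠ 0 := hζ.branchEval_ne_zero hi (hs a) ha
  have hzlt (a) (ha : s a ≠ 0) : (z a).order.toNat < q :=
    (hζ.le_of_X_pow_dvd_branchEval hi (hs a) ha PowerSeries.X_pow_order_dvd).trans_lt hlq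
  have horder (a) (ha : s a ≠ 0) :
      (z a * u a ^ q).order = ((z a).order.toNat + q * (u a).order.toNat : ℕ) := by
    rw [PowerSeries.order_mul, PowerSeries.order_pow, ← PowerSeries.coe_toNat_order (hz a ha),
      ← PowerSeries.coe_toNat_order (hf0 a)]
    simp
  suffices ∑ a, z a * u a ^ q ≠ 0 by
    refine mt (fun hdvd => ?_) this
    simpa [z, u] using hζ.branchEval_eq_zero_of_dvd hdvd j₀
  refine sum_ne_zero_of_injOn_order _ (fun a ha b hb hab => ?_) ?_
  · have hsa : s a ≠ 0 := fun h0 => ha (by simp [z, h0])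
    have hsb : s b ≠ 0 := fun h0 => hb (by simp [z, h0])
    have hq : 0 < q := (Nat.zero_le _).trans_lt hlq
    simp only [horder a hsa, horder b hsb, Nat.cast_inj] at hab
    have hdiv := congrArg (· / q) hab
    simp only [Nat.add_mul_div_left _ _ hq, Nat.div_eq_of_lt (hzlt a hsa),
      Nat.div_eq_of_lt (hzlt b hsb), zero_add] at hdiv
    exact hinj (((PowerSeries.coe_toNat_order (hf0 a)).symm.trans (congrArg _ hdiv)).trans
      (PowerSeries.coe_toNat_order (hf0 b)))
  · obtain ⟨a, ha⟩ := Function.ne_iff.1 hs0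
    exact ⟨a, mul_ne_zero (hz a ha) (pow_ne_zero _ (hf0 a))⟩

end HasBranches

/-- The points of the curve `h = 0` with first coordinate fixed by `F` at which `F` acts on the
second coordinate as the rational function `w / δ`. -/
structure IsTwistedPoint (F : k →+* k) (h : k[X][Y]) (δ : k[X]) (w : k[X][Y]) (x : k × k) :
    Prop where
  evalEval_eq_zero : evalEval x.1 x.2 h = 0
  map_fst : F x.1 = x.1
  eval_ne_zero : δ.eval x.1 ≠ 0
  eval_mul_map_snd : δ.eval x.1 * F x.2 = evalEval x.1 x.2 w

lemma eval_map_of_map_eq_self {F : k →+* k} {t : k} (ht : F t = t) (p : k[X]) :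
    (p.map F).eval t = F (p.eval t) := by
  have := eval_map_apply (p := p) (f := F) t
  rwa [ht] at this

lemma IsTwistedPoint.evalEval_frobeniusTwist {F : k →+* k} {h w f : k[X][Y]} {δ : k[X]}
    {x : k × k} (hx : IsTwistedPoint F h δ w x) {d : ℕ} (hf : f.natDegree < d) :
    evalEval x.1 x.2 (frobeniusTwist d F δ w f) = δ.eval x.1 ^ d * F (evalEval x.1 x.2 f) := by
  have hx' := hx.eval_mul_map_snd
  rw [← eval₂_evalRingHom] at hx' ⊢
  exact eval₂_frobeniusTwist hf (eval_map_of_map_eq_self hx.map_fst) hx'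

/-- Extracting `q`-th roots: the left hand side is `δ ^ d` times the `q`-th power of the value of
`∑ i, (∑ j, γ (i, j) • b j) * f i ^ q`. -/
lemma IsTwistedPoint.evalEval_sum_smul {φ : k →+* k} {q : ℕ} (hφ : ∀ x, φ x = x ^ q)
    {h w : k[X][Y]} {δ : k[X]} {x : k × k} (hx : IsTwistedPoint (φ.comp φ) h δ w x) {d : ℕ}
    {α β : Type*} [Fintype α] [Fintype β] (γ : α × β → k) (b : β → k[X][Y]) {f : α → k[X][Y]}
    (hf : ∀ i, (f i).natDegree < d) :
    evalEval x.1 x.2 (∑ a, γ a ^ q • (b a.2 ^ q * frobeniusTwist d (φ.comp φ) δ w (f a.1))) =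
      δ.eval x.1 ^ d * φ (evalEval x.1 x.2 (∑ i, (∑ j, γ (i, j) • b j) * f i ^ q)) := by
  simp only [evalEval_finsetSum, evalEval_smul, evalEval_mul, evalEval_pow, smul_eq_mul,
    hx.evalEval_frobeniusTwist (hf _), map_sum, map_mul, RingHom.comp_apply,
    Fintype.sum_prod_type, Finset.sum_mul, Finset.mul_sum]
  refine Finset.sum_congr rfl fun i _ => Finset.sum_congr rfl fun j _ => ?_
  simp only [hφ]
  ring

lemma X_pow_dvd_branchEval_frobeniusTwist {ι : Type*} [Fintype ι] {w : k[X][Y]} {δ : k[X]} {c : k}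
    {ζ : ι → k⟦X⟧} {m : ℕ} {F : k →+* k} (hc : F c = c) {π : ι → ι}
    (hπ : ∀ j, taylorSeries c δ * PowerSeries.map F (ζ (π j)) = branchEval c (ζ j) w) {j₀ : ι}
    {f : k[X][Y]} (hf : f ∈ onePoleSpace c ζ j₀ m) {j : ι} (hj : π j ≠ j₀) :
    PowerSeries.X ^ m ∣ branchEval c (ζ j) (frobeniusTwist (Fintype.card ι) F δ w f) := by
  have htwist : branchEval c (ζ j) (frobeniusTwist (Fintype.card ι) F δ w f) =
      taylorSeries c δ ^ Fintype.card ι * PowerSeries.map F (branchEval c (ζ (π j)) f) :=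
    eval₂_frobeniusTwist hf.1 (taylorSeries_map hc) (hπ j)
  rw [htwist]
  refine Dvd.dvd.mul_left ?_ _
  simpa using map_dvd (PowerSeries.map F) (hf.2.2 _ hj)

lemma onePoleSpace.sum_mul_pow_bounds {ι : Type*} [Fintype ι] {c : k} {ζ : ι → k⟦X⟧} {l m : ℕ}
    {j₀ : ι} {α : Type*} [Fintype α] {s f : α → k[X][Y]}
    (hs : ∀ a, s a ∈ onePoleSpace c ζ j₀ l) (hf : ∀ a, f a ∈ onePoleSpace c ζ j₀ m) (q : ℕ) :
    degX (∑ a, s a * f a ^ q) ≤ l + q * m ∧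
      (∑ a, s a * f a ^ q).natDegree ≤ (q + 1) * (Fintype.card ι - 1) ∧
      ∀ j ≠ j₀, PowerSeries.X ^ (l + q * m) ∣ branchEval c (ζ j) (∑ a, s a * f a ^ q) := by
  refine ⟨degX_sum_le _ _ fun a _ => ?_, natDegree_sum_le_of_forall_le _ _ fun a _ => ?_,
    fun j hj => ?_⟩
  · exact (degX_mul_le _ _).trans (add_le_add (hs a).2.1
      ((degX_pow_le _ _).trans (Nat.mul_le_mul_left q (hf a).2.1)))
  · refine (natDegree_mul_le.trans (add_le_add (Nat.le_sub_one_of_lt (hs a).1)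
      (natDegree_pow_le.trans (Nat.mul_le_mul_left q (Nat.le_sub_one_of_lt (hf a).1))))).trans ?_
    exact le_of_eq (by ring)
  · rw [map_sum]
    refine Finset.dvd_sum fun a _ => ?_
    rw [map_mul, map_pow, pow_add, mul_comm q m, pow_mul]
    exact mul_dvd_mul ((hs a).2.2 j hj) (pow_dvd_pow_of_dvd ((hf a).2.2 j hj) q)

namespace HasBranches

variable [IsAlgClosed k] {ι : Type*} [Fintype ι] {h w : k[X][Y]} {δ : k[X]} {c : k}
  {ζ : ι → k⟦X⟧} {B l m q : ℕ}

lemma exists_dvd_sum_smul_frobeniusTwist (hζ : HasBranches h c ζ) (hi : Irreducible h)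
    {F : k →+* k} (hc : F c = c) (hh : degX h ≤ B) (hδ : δ.natDegree ≤ B) (hwX : degX w ≤ B)
    (hwY : w.natDegree ≤ B) (π : Equiv.Perm ι)
    (hπ : ∀ j, taylorSeries c δ * PowerSeries.map F (ζ (π j)) = branchEval c (ζ j) w) {j₀ : ι}
    {α β : Type*} [Fintype α] [Fintype β] {b : β → k[X][Y]} {f : α → k[X][Y]}
    (hb : ∀ j, b j ∈ onePoleSpace c ζ j₀ l) (hf : ∀ i, f i ∈ onePoleSpace c ζ j₀ m)
    (hcard : l * q + m + 2 * Fintype.card ι ^ 2 * B +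
      (q * (Fintype.card ι - 1) + Fintype.card ι * B) * B + 1 < Fintype.card (α × β)) :
    ∃ v : α × β → k, v ≠ 0 ∧
      h ∣ ∑ a, v a • (b a.2 ^ q * frobeniusTwist (Fintype.card ι) F δ w (f a.1)) := by
  classical
  set d := Fintype.card ι
  refine hζ.exists_dvd_sum_smul hi j₀ _
    (fun j => (if j = j₀ then 0 else l * q) + if π j = j₀ then 0 else m) (fun j a => ?_)
    (M := l * q + (m + 2 * d * B)) (N := q * (d - 1) + d * B) (fun a => ?_) (fun a => ?_) hcard ?_
  · rw [map_mul, map_pow, pow_add]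
    refine mul_dvd_mul ?_ ?_ <;> split_ifs with hj
    · exact one_dvd _
    · rw [pow_mul]
      exact pow_dvd_pow_of_dvd ((hb _).2.2 j hj) q
    · exact one_dvd _
    · exact X_pow_dvd_branchEval_frobeniusTwist hc hπ (hf _) hj
  · refine (degX_mul_le _ _).trans (add_le_add ((degX_pow_le _ _).trans ?_)
      (degX_frobeniusTwist_le (hf _).2.1 hδ hwX))
    rw [mul_comm]
    exact Nat.mul_le_mul_right q (hb _).2.1
  · exact natDegree_mul_le.trans (add_le_add
      (natDegree_pow_le.trans (Nat.mul_le_mul_left q (Nat.le_sub_one_of_lt (hb _).1)))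
      (natDegree_frobeniusTwist_le hwY))
  · rw [Finset.sum_add_distrib, sum_ite_eq_add_card_sub_one_mul,
      Equiv.sum_comp π fun j => if j = j₀ then 0 else m, sum_ite_eq_add_card_sub_one_mul]
    have hN := Nat.mul_le_mul_left (q * (d - 1) + d * B) hh
    obtain ⟨e, he⟩ : ∃ e, d = e + 1 := Nat.exists_eq_add_one.2 (Fintype.card_pos_iff.2 ⟨j₀⟩)
    change d * _ + _ < 0 + (d - 1) * (l * q) + (0 + (d - 1) * m) + _
    rw [he, Nat.add_sub_cancel] at hN ⊢
    nlinarith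

lemma exists_sum_mul_pow_eq_zero (hζ : HasBranches h c ζ) (hi : Irreducible h) {φ : k →+* k}
    (hφ : ∀ x, φ x = x ^ q) (hq : 0 < q) (hc : φ (φ c) = c) (hh : degX h ≤ B)
    (hδ : δ.natDegree ≤ B) (hwX : degX w ≤ B) (hwY : w.natDegree ≤ B) (π : Equiv.Perm ι)
    (hπ : ∀ j, taylorSeries c δ * PowerSeries.map (φ.comp φ) (ζ (π j)) = branchEval c (ζ j) w)
    (j₀ : ι) (hcard : l * q + m + 2 * Fintype.card ι ^ 2 * B +
      (q * (Fintype.card ι - 1) + Fintype.card ι * B) * B + 1 < (m + 1) * (l + 1)) :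
    ∃ s f : Fin (m + 1) → k[X][Y], s ≠ 0 ∧ (∀ i, s i ∈ onePoleSpace c ζ j₀ l) ∧
      (∀ i, f i ∈ onePoleSpace c ζ j₀ m) ∧ (∀ i, branchEval c (ζ j₀) (f i) ≠ 0) ∧
      (Function.Injective fun i => (branchEval c (ζ j₀) (f i)).order) ∧
      ∀ x, IsTwistedPoint (φ.comp φ) h δ w x → evalEval x.1 x.2 (∑ i, s i * f i ^ q) = 0 := by
  obtain ⟨b, hbli, hb⟩ := exists_linearIndependent_onePoleSpace c ζ j₀ l
  obtain ⟨f, hf, hf0, hinj⟩ := hζ.exists_onePoleSpace_injective_order hi j₀ m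
  obtain ⟨v, hv0, hv⟩ := hζ.exists_dvd_sum_smul_frobeniusTwist hi (F := φ.comp φ) hc hh hδ hwX hwY
    π hπ (q := q) hb hf (by simpa using hcard)
  choose γ hγ using fun a => IsAlgClosed.exists_pow_nat_eq (v a) hq
  refine ⟨fun i => ∑ j, γ (i, j) • b j, f, fun hs => hv0 ?_, fun i => ?_, hf, hf0, hinj,
    fun x hx => ?_⟩
  · funext ⟨i, j⟩
    rw [← hγ, Fintype.linearIndependent_iff.1 hbli (fun j => γ (i, j)) (congrFun hs i) j,
      zero_pow hq.ne', Pi.zero_apply]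
  · exact Submodule.sum_mem _ fun j _ => Submodule.smul_mem _ _ (hb j)
  · have hvanish : evalEval x.1 x.2
        (∑ a, v a • (b a.2 ^ q * frobeniusTwist (Fintype.card ι) (φ.comp φ) δ w (f a.1))) = 0 := by
      obtain ⟨g, hg⟩ := hv
      rw [hg, evalEval_mul, hx.evalEval_eq_zero, zero_mul]
    simp only [← hγ] at hvanish
    rw [hx.evalEval_sum_smul hφ γ b fun i => (hf i).1] at hvanish
    exact (map_eq_zero φ).1
      ((mul_eq_zero.1 hvanish).resolve_left (pow_ne_zero _ hx.eval_ne_zero))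

theorem card_isTwistedPoint_le (hζ : HasBranches h c ζ) (hi : Irreducible h) {φ : k →+* k}
    (hφ : ∀ x, φ x = x ^ q) (hc : φ (φ c) = c) (hh : degX h ≤ B)
    (hδ : δ.natDegree ≤ B) (hwX : degX w ≤ B) (hwY : w.natDegree ≤ B) (π : Equiv.Perm ι)
    (hπ : ∀ j, taylorSeries c δ * PowerSeries.map (φ.comp φ) (ζ (π j)) = branchEval c (ζ j) w)
    (j₀ : ι) (hq : ((Fintype.card ι - 1) * B + 1) ^ 2 +
      (2 * Fintype.card ι ^ 2 * B + Fintype.card ι * B ^ 2 + 1) +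
      ((Fintype.card ι - 1) * B + 1) ≤ q)
    (P : Finset (k × k)) (hP : ∀ x ∈ P, x.1 ≠ c ∧ (h.map (evalRingHom x.1)).Separable ∧
      IsTwistedPoint (φ.comp φ) h δ w x) :
    P.card ≤ q ^ 2 + (3 * ((Fintype.card ι - 1) * B) + 1) * q := by
  classical
  set d := Fintype.card ι with hd
  set g := (d - 1) * B with hg
  obtain ⟨l, hl⟩ : ∃ l, q = l + (g + 1) := ⟨q - (g + 1), by omega⟩
  have hcard : l * q + (q + g) + 2 * d ^ 2 * B + (q * (d - 1) + d * B) * B + 1 <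
      (q + g + 1) * (l + 1) := by
    have hB : (q * (d - 1) + d * B) * B = q * g + d * B ^ 2 := by rw [hg]; ring
    have : (g + 1) ^ 2 + (2 * d ^ 2 * B + d * B ^ 2 + 1) ≤ l := by omega
    have hqg : (g + 1) ^ 2 + l * g = q * g + (g + 1) := by rw [hl]; ring
    rw [hB]
    nlinarith
  obtain ⟨s, f, hs0, hs, hf, hf0, hinj, hvanish⟩ := hζ.exists_sum_mul_pow_eq_zero hi hφ (by omega)
    hc hh hδ hwX hwY π hπ j₀ hcard
  obtain ⟨hX, hY, hord⟩ := onePoleSpace.sum_mul_pow_bounds hs hf q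
  have hlq : l + (d - 1) * degX h < q := by
    have := Nat.mul_le_mul_left (d - 1) hh
    omega
  have hcount := hζ.sum_add_card_le hi (hζ.not_dvd_sum_mul_pow hi hlq hs hs0 hf0 hinj)
    (fun j => if j = j₀ then 0 else l + q * (q + g)) (fun j => by
      split_ifs with hj
      exacts [one_dvd _, hord j hj]) P (fun x hx => (hP x hx).1) (fun x hx => (hP x hx).2.1)
    (fun x hx => (hP x hx).2.2.evalEval_eq_zero) (fun x hx => hvanish x (hP x hx).2.2)
  rw [sum_ite_eq_add_card_sub_one_mul, ← hd] at hcount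
  have hdX : d * degX (∑ i, s i * f i ^ q) ≤
      (l + q * (q + g)) + (d - 1) * (l + q * (q + g)) := by
    obtain ⟨e, he⟩ : ∃ e, d = e + 1 := Nat.exists_eq_add_one.2 (Fintype.card_pos_iff.2 ⟨j₀⟩)
    rw [he, Nat.add_sub_cancel]
    linarith [Nat.mul_le_mul_left (e + 1) hX]
  have hdY : (∑ i, s i * f i ^ q).natDegree * degX h ≤ (q + 1) * g :=
    (Nat.mul_le_mul hY hh).trans (by rw [hg, mul_assoc])
  nlinarith

end HasBranches

end Stepanov

/-! ### Twisted points on curves over finite fields -/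

section TwistSplitting

open Polynomial Bivariate
open scoped PowerSeries

section Basic

variable {R ι : Type*} [CommRing R] [Fintype ι]

/-- The polynomial `δ ^ d * h^F(Z) - ∏ i, (δ * Z - w i)` in `Z` with coefficients in `R[X][Y]`,
where `h^F` is `h` with `F` applied to its coefficients. -/
noncomputable def twistDefect (F : R →+* R) (h : R[X][Y]) (δ : R[X]) (w : ι → R[X][Y]) :
    R[X][Y][X] :=
  C (C δ) ^ Fintype.card ι * (h.map (mapRingHom F)).map C - ∏ i, (C (C δ) * X - C (w i))

/-- The conjugate `h^F` splits over the function field of the curve `h = 0`, with the roots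
`w i / δ`, and each of these roots generates that function field. -/
structure IsTwistSplitting (F : R →+* R) (h : R[X][Y]) (δ : R[X]) (w : ι → R[X][Y]) : Prop where
  monic : h.Monic
  irreducible : Irreducible h
  card_eq : Fintype.card ι = h.natDegree
  derivative_ne_zero : derivative h ≠ 0
  ne_zero : δ ≠ 0
  dvd_twistDefect : C h ∣ twistDefect F h δ w
  exists_inverse : ∀ i, ∃ (v : R[X][Y]) (δ' : R[X]), δ' ≠ 0 ∧ h ∣ v.comp (w i) - C δ' * X

variable {F : R →+* R} {h : R[X][Y]} {δ : R[X]} {w : ι → R[X][Y]}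

lemma IsTwistSplitting.pow_mul_eval₂ (hw : IsTwistSplitting F h δ w) {S : Type*} [CommRing S]
    {ψ : R[X][Y] →+* S} (h0 : ψ h = 0) (z : S) :
    ψ (C δ) ^ Fintype.card ι * h.eval₂ ((ψ.comp C).comp (mapRingHom F)) z =
      ∏ i, (ψ (C δ) * z - ψ (w i)) := by
  obtain ⟨g, hg⟩ := hw.dvd_twistDefect
  have := congrArg (eval₂ ψ z) hg
  rw [twistDefect, eval₂_sub, eval₂_mul, eval₂_mul, eval₂_C, h0, zero_mul, sub_eq_zero, eval₂_pow,
    eval₂_C, eval₂_finsetProd, eval₂_map, eval₂_map] at this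
  simpa using this

end Basic

variable {k ι : Type*} [Field k] [Fintype ι] {F : k →+* k} {h : k[X][Y]} {δ : k[X]}
  {w : ι → k[X][Y]}

namespace IsTwistSplitting

lemma exists_isTwistedPoint (hw : IsTwistSplitting F h δ w) {x : k × k}
    (hx : evalEval x.1 x.2 h = 0) (hF : F x.1 = x.1) (hδ : δ.eval x.1 ≠ 0) :
    ∃ i, IsTwistedPoint F h δ (w i) x := by
  have hhom : ((evalEvalRingHom x.1 x.2).comp C).comp (mapRingHom F) =
      F.comp (evalRingHom x.1) := by
    refine RingHom.ext fun p => ?_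
    simpa using eval_map_of_map_eq_self hF p
  have hprod := hw.pow_mul_eval₂ (ψ := evalEvalRingHom x.1 x.2) hx (F x.2)
  rw [hhom, ← hom_eval₂, eval₂_evalRingHom, hx, map_zero, mul_zero, eq_comm,
    Finset.prod_eq_zero_iff] at hprod
  obtain ⟨i, -, hi⟩ := hprod
  exact ⟨i, hx, hF, hδ, by simpa [sub_eq_zero] using hi⟩

variable {κ : Type*} [Fintype κ] {c : k} {ζ : κ → k⟦X⟧}

lemma exists_mul_map_branch_eq (hw : IsTwistSplitting F h δ w) (hζ : HasBranches h c ζ)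
    (hc : F c = c) (hδ : δ.eval c ≠ 0) (i : ι) (j : κ) :
    ∃ j', taylorSeries c δ * PowerSeries.map F (ζ j') = branchEval c (ζ j) (w i) := by
  obtain ⟨ε, hε⟩ : ∃ ε, taylorSeries c δ * ε = 1 := by
    refine IsUnit.exists_right_inv (PowerSeries.isUnit_iff_constantCoeff.2 ?_)
    exact isUnit_iff_ne_zero.2 (RingHom.congr_fun (constantCoeff_comp_taylorSeries c) δ ▸ hδ)
  have hhom : (((branchEval c (ζ j) : k[X][Y] →+* k⟦X⟧).comp C).comp (mapRingHom F)) =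
      (PowerSeries.map F).comp (taylorSeries c : k[X] →+* k⟦X⟧) := by
    refine RingHom.ext fun p => ?_
    simpa [branchEval_C] using taylorSeries_map hc p
  have hprod := hw.pow_mul_eval₂ (ψ := (branchEval c (ζ j) : k[X][Y] →+* k⟦X⟧))
    (hζ.branchEval_eq_zero_of_dvd dvd_rfl j) (ε * branchEval c (ζ j) (w i))
  have hzero : ∏ j', (ε * branchEval c (ζ j) (w i) - PowerSeries.map F (ζ j')) = 0 := by
    rw [Finset.prod_eq_zero (Finset.mem_univ i) (by simp [branchEval_C, ← mul_assoc, hε]), hhom,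
      eval₂_eq_eval_map, ← map_map, show h.map _ = _ from hζ] at hprod
    refine (mul_eq_zero.1 ?_).resolve_left
      (pow_ne_zero (Fintype.card ι) (left_ne_zero_of_mul_eq_one hε))
    simpa [branchEval_C, Polynomial.map_prod, eval_prod] using hprod
  obtain ⟨j', -, hj'⟩ := Finset.prod_eq_zero_iff.1 hzero
  exact ⟨j', by rw [← sub_eq_zero.1 hj', ← mul_assoc, hε, one_mul]⟩

lemma branchEval_injective (hw : IsTwistSplitting F h δ w) (hζ : HasBranches h c ζ)
    (hinj : Function.Injective ζ) (i : ι) :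
    Function.Injective fun j => branchEval c (ζ j) (w i) := by
  obtain ⟨v, δ', hδ', hv⟩ := hw.exists_inverse i
  have hinv (j : κ) : branchEval c (branchEval c (ζ j) (w i)) v = taylorSeries c δ' * ζ j := by
    have := hζ.branchEval_eq_zero_of_dvd hv j
    rw [map_sub, sub_eq_zero, map_mul, branchEval_C, branchEval_Y] at this
    rw [← this, ← branchEval_comp]
  refine fun j₁ j₂ hj => hinj (mul_left_cancel₀ (a := taylorSeries c δ') ?_ ?_)
  · simpa using (taylorSeries_injective c).ne hδ'
  · rw [← hinv, ← hinv]
    exact congrArg (branchEval c · v) hj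

lemma exists_perm_branches (hw : IsTwistSplitting F h δ w) (hζ : HasBranches h c ζ)
    (hinj : Function.Injective ζ) (hc : F c = c) (hδ : δ.eval c ≠ 0) (i : ι) :
    ∃ π : Equiv.Perm κ, ∀ j,
      taylorSeries c δ * PowerSeries.map F (ζ (π j)) = branchEval c (ζ j) (w i) := by
  choose π hπ using hw.exists_mul_map_branch_eq hζ hc hδ i
  have hπinj : Function.Injective π := fun j₁ j₂ hj =>
    hw.branchEval_injective hζ hinj i (by simp only [← hπ, hj])
  exact ⟨Equiv.ofBijective π (Finite.injective_iff_bijective.1 hπinj), hπ⟩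

end IsTwistSplitting

lemma exists_finset_mem_iff_pow_eq [IsAlgClosed k] {Q : ℕ} (hQ : 1 < Q) (hQk : (Q : k) = 0) :
    ∃ T : Finset k, T.card = Q ∧ ∀ x, x ∈ T ↔ x ^ Q = x := by
  classical
  have hsep : (X ^ Q - X : k[X]).Separable :=
    galois_poly_separable (ringChar k) Q (ringChar.dvd hQk)
  refine ⟨(X ^ Q - X : k[X]).roots.toFinset, ?_, fun x => ?_⟩
  · rw [Multiset.toFinset_card_of_nodup (nodup_roots hsep),
      splits_iff_card_roots.1 (IsAlgClosed.splits _),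
      FiniteField.X_pow_card_sub_X_natDegree_eq k hQ]
  · rw [Multiset.mem_toFinset, mem_roots (FiniteField.X_pow_card_sub_X_ne_zero k hQ)]
    simp [sub_eq_zero]

lemma exists_natDegree_le_separable_fibre (hi : Irreducible h) (hm : h.Monic)
    (hd : derivative h ≠ 0) : ∃ Δ : k[X], Δ ≠ 0 ∧ Δ.natDegree ≤ (2 * h.natDegree - 1) * degX h ∧
      ∀ t, Δ.eval t ≠ 0 → (h.map (evalRingHom t)).Separable := by
  have hpos : 0 < h.natDegree := Nat.pos_of_ne_zero (mt derivative_of_natDegree_zero hd)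
  refine ⟨resultant h (derivative h), fun h0 => ?_, ?_, fun t ht => ?_⟩
  · exact not_le_of_gt (natDegree_derivative_lt hpos.ne')
      (natDegree_le_of_dvd (dvd_of_resultant_eq_zero hm hi h0) hd)
  · calc (resultant h (derivative h)).natDegree
        ≤ h.natDegree * degX (derivative h) + (derivative h).natDegree * degX h :=
          natDegree_resultant_le _ _ _ _
      _ ≤ h.natDegree * degX h + (h.natDegree - 1) * degX h := by
          gcongr
          · exact degX_derivative_le h
          · exact natDegree_derivative_le h
      _ = (2 * h.natDegree - 1) * degX h := by rw [← add_mul]; congr 1; omega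
  · obtain ⟨p, q, -, -, hpq⟩ := exists_mul_add_mul_eq_C_resultant h (derivative h) le_rfl le_rfl
      (Or.inl hpos.ne')
    have hmap := congrArg (Polynomial.map (evalRingHom t)) hpq
    rw [Polynomial.map_add, Polynomial.map_mul, Polynomial.map_mul, Polynomial.map_C,
      ← derivative_map] at hmap
    refine ⟨C ((resultant h (derivative h)).eval t)⁻¹ * p.map (evalRingHom t),
      C ((resultant h (derivative h)).eval t)⁻¹ * q.map (evalRingHom t), ?_⟩
    calc _ = C ((resultant h (derivative h)).eval t)⁻¹ *
          (h.map (evalRingHom t) * p.map (evalRingHom t) +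
            derivative (h.map (evalRingHom t)) * q.map (evalRingHom t)) := by ring
      _ = 1 := by rw [hmap, ← C_mul, coe_evalRingHom, inv_mul_cancel₀ ht, C_1]

lemma exists_finset_mem_iff_evalEval_eq_zero [IsAlgClosed k] (hm : h.Monic) (T : Finset k)
    (hT : ∀ t ∈ T, (h.map (evalRingHom t)).Separable) :
    ∃ P : Finset (k × k), P.card = T.card * h.natDegree ∧
      ∀ x, x ∈ P ↔ x.1 ∈ T ∧ evalEval x.1 x.2 h = 0 := by
  classical
  let fibre (t : k) : Finset k := (h.map (evalRingHom t)).roots.toFinset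
  have hfibre (t) (ht : t ∈ T) : (fibre t).card = h.natDegree := by
    rw [Multiset.toFinset_card_of_nodup (nodup_roots (hT t ht)),
      splits_iff_card_roots.1 (IsAlgClosed.splits _), hm.natDegree_map]
  refine ⟨(T.sigma fibre).map (Equiv.sigmaEquivProd k k).toEmbedding, ?_, fun x => ?_⟩
  · rw [Finset.card_map, Finset.card_sigma, Finset.sum_congr rfl hfibre, Finset.sum_const,
      smul_eq_mul]
  · rw [Finset.mem_map_equiv, Finset.mem_sigma, Multiset.mem_toFinset,
      mem_roots (hm.map _).ne_zero, IsRoot.def]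
    simp [map_evalRingHom_eval]

lemma card_le_natDegree_mul_card_image_fst [DecidableEq k] (hm : h.Monic) (P : Finset (k × k))
    (hP : ∀ x ∈ P, evalEval x.1 x.2 h = 0) :
    P.card ≤ h.natDegree * (P.image Prod.fst).card := by
  refine Finset.card_le_mul_card_image _ _ fun t _ => ?_
  rw [← hm.natDegree_map (evalRingHom t)]
  refine le_trans (Finset.card_le_card_of_injOn Prod.snd (fun x hx => ?_) fun x hx y hy hxy => ?_)
    ((Multiset.toFinset_card_le _).trans (card_roots' (h.map (evalRingHom t))))
  · obtain ⟨hxP, rfl⟩ := Finset.mem_filter.1 hx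
    rw [Finset.mem_coe, Multiset.mem_toFinset, mem_roots (hm.map _).ne_zero, IsRoot.def,
      map_evalRingHom_eval]
    exact hP x hxP
  · exact Prod.ext ((Finset.mem_filter.1 hx).2.trans (Finset.mem_filter.1 hy).2.symm) hxy

namespace IsTwistSplitting

variable [IsAlgClosed k] {B q : ℕ}

lemma exists_good_parameters (hw : IsTwistSplitting F h δ w) (hq : 1 < q) (hqk : (q : k) = 0)
    (hF : ∀ x, F x = x ^ q) (hh : degX h ≤ B) (hδ : δ.natDegree ≤ B) :
    ∃ T : Finset k, q ≤ T.card + 2 * Fintype.card ι * B ∧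
      ∀ t ∈ T, F t = t ∧ δ.eval t ≠ 0 ∧ (h.map (evalRingHom t)).Separable := by
  classical
  obtain ⟨T, hT, hTF⟩ := exists_finset_mem_iff_pow_eq hq hqk
  obtain ⟨Δ, hΔ, hΔdeg, hsep⟩ :=
    exists_natDegree_le_separable_fibre hw.irreducible hw.monic hw.derivative_ne_zero
  have hpos : 0 < h.natDegree :=
    Nat.pos_of_ne_zero (mt derivative_of_natDegree_zero hw.derivative_ne_zero)
  have hbad : (Δ * δ).roots.toFinset.card ≤ 2 * Fintype.card ι * B := calc
    _ ≤ (Δ * δ).natDegree := (Multiset.toFinset_card_le _).trans (card_roots' _)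
    _ ≤ (2 * h.natDegree - 1) * degX h + B := natDegree_mul_le.trans (add_le_add hΔdeg hδ)
    _ ≤ (2 * h.natDegree - 1) * B + 1 * B := by rw [one_mul]; gcongr
    _ = 2 * Fintype.card ι * B := by rw [← add_mul, hw.card_eq]; congr 1; omega
  refine ⟨T \ (Δ * δ).roots.toFinset, ?_, fun t ht => ?_⟩
  · have := Finset.le_card_sdiff (Δ * δ).roots.toFinset T
    omega
  · rw [Finset.mem_sdiff, hTF, Multiset.mem_toFinset, mem_roots (mul_ne_zero hΔ hw.ne_zero),
      IsRoot.def, eval_mul, mul_eq_zero, not_or] at ht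
    exact ⟨(hF t).trans ht.1, ht.2.2, hsep t ht.2.1⟩

lemma card_mul_card_le_sum (hw : IsTwistSplitting F h δ w) (T : Finset k)
    (hT : ∀ t ∈ T, F t = t ∧ δ.eval t ≠ 0 ∧ (h.map (evalRingHom t)).Separable) :
    ∃ P : ι → Finset (k × k), Fintype.card ι * T.card ≤ ∑ i, (P i).card ∧
      ∀ i, ∀ x ∈ P i, x.1 ∈ T ∧ IsTwistedPoint F h δ (w i) x := by
  classical
  obtain ⟨P, hPcard, hP⟩ :=
    exists_finset_mem_iff_evalEval_eq_zero hw.monic T fun t ht => (hT t ht).2.2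
  have hcover : P ⊆ Finset.univ.biUnion fun i => P.filter (IsTwistedPoint F h δ (w i)) := by
    intro x hx
    obtain ⟨hxT, hx0⟩ := (hP x).1 hx
    obtain ⟨i, hi⟩ := hw.exists_isTwistedPoint hx0 (hT _ hxT).1 (hT _ hxT).2.1
    exact Finset.mem_biUnion.2 ⟨i, Finset.mem_univ i, Finset.mem_filter.2 ⟨hx, hi⟩⟩
  refine ⟨fun i => P.filter (IsTwistedPoint F h δ (w i)), ?_, fun i x hx => ?_⟩
  · rw [mul_comm, hw.card_eq, ← hPcard]
    exact (Finset.card_le_card hcover).trans Finset.card_biUnion_le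
  · obtain ⟨hxP, hx⟩ := Finset.mem_filter.1 hx
    exact ⟨((hP x).1 hxP).1, hx⟩

variable {φ : k →+* k}

lemma card_isTwistedPoint_le (hw : IsTwistSplitting (φ.comp φ) h δ w) (hφ : ∀ x, φ x = x ^ q)
    (hh : degX h ≤ B) (hδ : δ.natDegree ≤ B) (hwX : ∀ i, degX (w i) ≤ B)
    (hwY : ∀ i, (w i).natDegree ≤ B)
    (hq : ((Fintype.card ι - 1) * B + 1) ^ 2 +
      (2 * Fintype.card ι ^ 2 * B + Fintype.card ι * B ^ 2 + 1) +
      ((Fintype.card ι - 1) * B + 1) ≤ q)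
    {c : k} (hc : φ (φ c) = c) (hδc : δ.eval c ≠ 0) (hsep : (h.map (evalRingHom c)).Separable)
    (i : ι) (P : Finset (k × k))
    (hP : ∀ x ∈ P, x.1 ≠ c ∧ (h.map (evalRingHom x.1)).Separable ∧
      IsTwistedPoint (φ.comp φ) h δ (w i) x) :
    P.card ≤ q ^ 2 + (3 * ((Fintype.card ι - 1) * B) + 1) * q := by
  obtain ⟨ζ, hζinj, hζ⟩ := exists_hasBranches hw.monic hsep
  obtain ⟨π, hπ⟩ := hw.exists_perm_branches hζ (fun j₁ j₂ hj => hζinj (by simp only [hj])) hc hδc i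
  have hpos : 0 < h.natDegree :=
    Nat.pos_of_ne_zero (mt derivative_of_natDegree_zero hw.derivative_ne_zero)
  simp only [hw.card_eq.trans (Fintype.card_fin h.natDegree).symm] at hq ⊢
  exact hζ.card_isTwistedPoint_le hw.irreducible hφ hc hh hδ (hwX i) (hwY i) π hπ ⟨0, hpos⟩ hq
    P hP

lemma exists_isTwistedPoint_family (hw : IsTwistSplitting (φ.comp φ) h δ w)
    (hφ : ∀ x, φ x = x ^ q) (hqk : (q : k) = 0) (hh : degX h ≤ B) (hδ : δ.natDegree ≤ B)
    (hwX : ∀ i, degX (w i) ≤ B) (hwY : ∀ i, (w i).natDegree ≤ B)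
    (hq : ((Fintype.card ι - 1) * B + 1) ^ 2 +
      (2 * Fintype.card ι ^ 2 * B + Fintype.card ι * B ^ 2 + 1) +
      ((Fintype.card ι - 1) * B + 1) ≤ q)
    (hqB : 2 * Fintype.card ι * B + 2 ≤ q) :
    ∃ P : ι → Finset (k × k),
      Fintype.card ι * (q ^ 2 - (2 * Fintype.card ι * B + 1)) ≤ ∑ i, (P i).card ∧
      ∀ i, (P i).card ≤ q ^ 2 + (3 * ((Fintype.card ι - 1) * B) + 1) * q ∧
        ∀ x ∈ P i, IsTwistedPoint (φ.comp φ) h δ (w i) x := by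
  classical
  obtain ⟨T, hTcard, hT⟩ := hw.exists_good_parameters (q := q ^ 2)
    (one_lt_pow₀ (by omega) two_ne_zero) (by rw [Nat.cast_pow, hqk, zero_pow two_ne_zero])
    (fun x => by rw [RingHom.comp_apply, hφ, hφ, ← pow_mul, sq]) hh hδ
  obtain ⟨c, hcT⟩ : T.Nonempty :=
    Finset.card_pos.1 (by have := Nat.le_self_pow two_ne_zero q; omega)
  obtain ⟨hc, hδc, hcsep⟩ := hT c hcT
  obtain ⟨P, hPcard, hP⟩ := hw.card_mul_card_le_sum (T.erase c)
    fun t ht => hT t (Finset.mem_of_mem_erase ht)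
  refine ⟨P, le_trans (Nat.mul_le_mul_left _ ?_) hPcard, fun i => ⟨?_, fun x hx => (hP i x hx).2⟩⟩
  · rw [Finset.card_erase_of_mem hcT]
    omega
  · refine hw.card_isTwistedPoint_le hφ hh hδ hwX hwY hq hc hδc hcsep i (P i) fun x hx => ?_
    obtain ⟨hxc, hxT⟩ := Finset.mem_erase.1 (hP i x hx).1
    exact ⟨hxc, (hT _ hxT).2.2, (hP i x hx).2⟩

theorem exists_finset_isTwistedPoint (hw : IsTwistSplitting (φ.comp φ) h δ w)
    (hφ : ∀ x, φ x = x ^ q) (hqk : (q : k) = 0) (hh : degX h ≤ B) (hδ : δ.natDegree ≤ B)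
    (hwX : ∀ i, degX (w i) ≤ B) (hwY : ∀ i, (w i).natDegree ≤ B)
    (hq : 5 * ((Fintype.card ι + 1) * (B + 1)) ^ 2 ≤ q) (i : ι) :
    ∃ T : Finset k, (∀ t ∈ T, ∃ z, IsTwistedPoint (φ.comp φ) h δ (w i) (t, z)) ∧
      q ^ 2 ≤ Fintype.card ι * T.card + 5 * ((Fintype.card ι + 1) * (B + 1)) ^ 2 * q := by
  classical
  obtain ⟨e, he⟩ := Nat.exists_eq_add_one_of_ne_zero (Fintype.card_pos_iff.2 ⟨i⟩).ne'
  rw [he] at hq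
  obtain ⟨P, hPcard, hP⟩ := hw.exists_isTwistedPoint_family hφ hqk hh hδ hwX hwY
    (by rw [he, Nat.add_sub_cancel]; nlinarith) (by rw [he]; nlinarith)
  refine ⟨(P i).image Prod.fst, fun t ht => ?_, ?_⟩
  · obtain ⟨x, hx, rfl⟩ := Finset.mem_image.1 ht
    exact ⟨x.2, (hP i).2 x hx⟩
  · have hPi := card_le_natDegree_mul_card_image_fst hw.monic (P i)
      fun x hx => ((hP i).2 x hx).evalEval_eq_zero
    have hsum : ∑ j, (P j).card ≤
        (P i).card + (Fintype.card ι - 1) * (q ^ 2 + (3 * ((Fintype.card ι - 1) * B) + 1) * q) := by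
      rw [← Finset.add_sum_erase _ _ (Finset.mem_univ i)]
      refine Nat.add_le_add_left
        ((Finset.sum_le_card_nsmul _ _ _ fun j _ => (hP j).1).trans ?_) _
      rw [Finset.card_erase_of_mem (Finset.mem_univ i), Finset.card_univ, smul_eq_mul]
    rw [← hw.card_eq] at hPi
    rw [he] at hPcard hsum hPi ⊢
    simp only [Nat.add_sub_cancel] at hsum
    have hq_sq : q ^ 2 ≤ q ^ 2 - (2 * (e + 1) * B + 1) + (2 * (e + 1) * B + 1) := by omega
    have hmul := Nat.mul_le_mul_left (e + 1) hq_sq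
    have hq_pos : 1 ≤ q := lt_of_lt_of_le (by positivity) hq
    calc q ^ 2 ≤ (e + 1) * ((P i).image Prod.fst).card +
          (e * (3 * (e * B) + 1) + (e + 1) * (2 * (e + 1) * B + 1)) * q := by
          nlinarith [Nat.le_mul_of_pos_right ((e + 1) * (2 * (e + 1) * B + 1)) hq_pos]
      _ ≤ _ := by gcongr; ring_nf; omega

end IsTwistSplitting

end TwistSplitting

/-! ### Ultraproducts of fields -/

section Ultraproduct

open Polynomial Bivariate Filter

lemma map_eq_zero_iff_forall_mem_support {R S : Type*} [CommRing R] [CommRing S] (φ : R →+* S)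
    (f : R[X]) : f.map φ = 0 ↔ ∀ n ∈ f.support, φ (f.coeff n) = 0 := by
  simp only [Polynomial.ext_iff, coeff_map, coeff_zero, mem_support_iff]
  exact forall_congr' fun n => ⟨fun hn _ => hn, fun hn => by
    by_cases h0 : f.coeff n = 0 <;> simp_all⟩

section IsUltraproductMap

variable {I : Type*} {U : Ultrafilter I}
variable {R K : Type*} {A : I → Type*} [CommRing R] [CommRing K] [∀ i, CommRing (A i)]

/-- The map `φ` identifies `K` with the quotient of `R` by the elements that vanish in `U`-almost
all of the rings `A i`. This property is inherited by the induced maps of polynomial rings, although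
these rings are not ultraproducts. -/
structure IsUltraproductMap (U : Ultrafilter I) (φ : R →+* K) (ψ : ∀ i, R →+* A i) : Prop where
  surjective : Function.Surjective φ
  map_eq_zero_iff : ∀ r, φ r = 0 ↔ ∀ᶠ i in U, ψ i r = 0

namespace IsUltraproductMap

variable {φ : R →+* K} {ψ : ∀ i, R →+* A i}

lemma mapRingHom (h : IsUltraproductMap U φ ψ) :
    IsUltraproductMap U (mapRingHom φ) fun i => Polynomial.mapRingHom (ψ i) := by
  refine ⟨map_surjective _ h.surjective, fun f => ?_⟩
  simp only [coe_mapRingHom, map_eq_zero_iff_forall_mem_support, h.map_eq_zero_iff]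
  exact (eventually_all_finset f.support).symm

lemma map_eq_map_iff (h : IsUltraproductMap U φ ψ) {a b : R} :
    φ a = φ b ↔ ∀ᶠ i in U, ψ i a = ψ i b := by
  simp only [← sub_eq_zero (b := φ b), ← map_sub, h.map_eq_zero_iff]
  simp only [map_sub, sub_eq_zero]

lemma map_ne_zero_iff (h : IsUltraproductMap U φ ψ) {a : R} :
    φ a ≠ 0 ↔ ∀ᶠ i in U, ψ i a ≠ 0 := by
  rw [Ne, h.map_eq_zero_iff, Ultrafilter.eventually_not]

lemma eventually_dvd (h : IsUltraproductMap U φ ψ) {a b : R} (hab : φ a ∣ φ b) :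
    ∀ᶠ i in U, ψ i a ∣ ψ i b := by
  obtain ⟨c, hc⟩ := hab
  obtain ⟨c, rfl⟩ := h.surjective c
  rw [← map_mul, h.map_eq_map_iff] at hc
  exact hc.mono fun i hi => ⟨ψ i c, by rw [hi, map_mul]⟩

end IsUltraproductMap

end IsUltraproductMap

variable {I : Type*} (U : Ultrafilter I) (k : I → Type*) [∀ i, Field (k i)]

/-- The families that vanish `U`-almost everywhere. -/
def eventuallyZeroIdeal : Ideal (∀ i, k i) where
  carrier := {x | ∀ᶠ i in U, x i = 0}
  add_mem' ha hb := by
    filter_upwards [ha, hb] with i hai hbi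
    rw [Pi.add_apply, hai, hbi, add_zero]
  zero_mem' := Eventually.of_forall fun _ => rfl
  smul_mem' c x hx := hx.mono fun i hi => by rw [smul_eq_mul, Pi.mul_apply, hi, mul_zero]

instance : (eventuallyZeroIdeal U k).IsMaximal := by
  refine Ideal.isMaximal_iff.2 ⟨fun h => ?_, fun J x hJ hx hxJ => ?_⟩
  · obtain ⟨i, hi⟩ := Eventually.exists h
    exact one_ne_zero hi
  · have hsub : 1 - (fun i => (x i)⁻¹) * x ∈ J := by
      refine hJ (Eventually.mono (Ultrafilter.eventually_not.2 hx) fun i hi => ?_)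
      simp [inv_mul_cancel₀ hi]
    simpa using J.add_mem hsub (J.mul_mem_left (fun i => (x i)⁻¹) hxJ)

/-- The ultraproduct of a family of fields. -/
abbrev Ultraprod : Type _ := (∀ i, k i) ⧸ eventuallyZeroIdeal U k

namespace Ultraprod

noncomputable instance : Field (Ultraprod U k) := Ideal.Quotient.field _

/-- The class of a family in the ultraproduct. -/
noncomputable abbrev mk : (∀ i, k i) →+* Ultraprod U k := Ideal.Quotient.mk _

lemma isUltraproductMap_mk : IsUltraproductMap U (mk U k) (Pi.evalRingHom k) :=
  ⟨Ideal.Quotient.mk_surjective, fun _ => Ideal.Quotient.eq_zero_iff_mem⟩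

variable {k}

/-- The endomorphism of the ultraproduct induced by a family of endomorphisms. -/
noncomputable def map (F : ∀ i, k i →+* k i) : Ultraprod U k →+* Ultraprod U k :=
  Ideal.quotientMap _ (RingHom.pi fun i => (F i).comp (Pi.evalRingHom k i)) fun x hx =>
    Eventually.mono hx fun i hi => by
      change F i (x i) = 0
      rw [hi, map_zero]

lemma map_mk (F : ∀ i, k i →+* k i) (x : ∀ i, k i) :
    map U F (mk U k x) = mk U k fun i => F i (x i) := rfl

instance [∀ i, IsAlgClosed (k i)] : IsAlgClosed (Ultraprod U k) := by
  refine IsAlgClosed.of_exists_root _ fun f hf hfi => ?_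
  obtain ⟨f, rfl, hdeg, hfm⟩ := lifts_and_natDegree_eq_and_monic (f := mk U k)
    ((isUltraproductMap_mk U k).mapRingHom.surjective f) hf
  have hroot (i) : ∃ x, (f.map (Pi.evalRingHom k i)).eval x = 0 := by
    refine IsAlgClosed.exists_root _ ?_
    rw [degree_eq_natDegree (hfm.map _).ne_zero, hfm.natDegree_map, hdeg]
    exact_mod_cast hfi.natDegree_pos.ne'
  choose x hx using hroot
  refine ⟨mk U k x, ?_⟩
  rw [eval_map_apply, (isUltraproductMap_mk U k).map_eq_zero_iff]
  refine Eventually.of_forall fun i => ?_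
  rw [← eval_map_apply]
  exact hx i

end Ultraprod

end Ultraproduct

/-! ### Twisted points in ultraproducts -/

section UltraproductPoints

open Polynomial Bivariate Filter

lemma map_twistDefect {R S ι : Type*} [CommRing R] [CommRing S] [Fintype ι] (φ : R →+* S)
    {F : R →+* R} {G : S →+* S} (hφ : ∀ x, φ (F x) = G (φ x)) (h : R[X][Y]) (δ : R[X])
    (w : ι → R[X][Y]) :
    (twistDefect F h δ w).map (mapRingHom (mapRingHom φ)) =
      twistDefect G (h.map (mapRingHom φ)) (δ.map φ) fun i => (w i).map (mapRingHom φ) := by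
  have hcoeff : (mapRingHom φ).comp (mapRingHom F) = (mapRingHom G).comp (mapRingHom φ) := by
    ext x <;> simp [hφ]
  have hC : (mapRingHom (mapRingHom φ)).comp (C : R[X] →+* R[X][Y]) = C.comp (mapRingHom φ) :=
    RingHom.ext fun p => by simp
  have hmap : ((h.map (mapRingHom F)).map C).map (mapRingHom (mapRingHom φ)) =
      ((h.map (mapRingHom φ)).map (mapRingHom G)).map C := by
    rw [Polynomial.map_map, hC, Polynomial.map_map, RingHom.comp_assoc, hcoeff,
      ← Polynomial.map_map, ← Polynomial.map_map]
  simp [twistDefect, Polynomial.map_prod, hmap]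

lemma exists_factors_of_not_irreducible {k : Type*} [Field k] {h : k[X][Y]} (hm : h.Monic)
    (hpos : 0 < h.natDegree) (hi : ¬Irreducible h) :
    ∃ x : k[X][Y] × k[X][Y], x.1 * x.2 = h ∧ x.1.natDegree ≠ 0 ∧ x.2.natDegree ≠ 0 := by
  have h1 : h ≠ 1 := by rintro rfl; simp at hpos
  rw [hm.irreducible_iff_natDegree] at hi
  push Not at hi
  obtain ⟨f, g, -, -, hfg, hf, hg⟩ := hi h1
  exact ⟨(f, g), hfg, hf, hg⟩

section Lift

variable {I : Type*} {k : I → Type*} [∀ i, Field (k i)]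

lemma exists_map_evalRingHom_eq (f : ∀ i, (k i)[X][Y]) (m n : ℕ) :
    ∃ g : (∀ i, k i)[X][Y], ∀ i, degX (f i) ≤ m → (f i).natDegree ≤ n →
      g.map (mapRingHom (Pi.evalRingHom k i)) = f i := by
  refine ⟨∑ b ∈ Finset.range (n + 1), monomial b (∑ a ∈ Finset.range (m + 1),
    monomial a fun i => ((f i).coeff b).coeff a), fun i hX hY => ?_⟩
  simp only [Polynomial.map_sum, map_monomial, coe_mapRingHom, Pi.evalRingHom_apply]
  refine .trans ?_ ((f i).as_sum_range' (n + 1) (Nat.lt_succ_of_le hY)).symm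
  refine Finset.sum_congr rfl fun b _ => congrArg (monomial b) ?_
  exact (((f i).coeff b).as_sum_range' (m + 1)
    (Nat.lt_succ_of_le ((natDegree_coeff_le_degX _ b).trans hX))).symm

variable {U : Ultrafilter I}

theorem eventually_irreducible {h : (∀ i, k i)[X][Y]} (hm : h.Monic)
    (hi : Irreducible (h.map (mapRingHom (Ultraprod.mk U k)))) :
    ∀ᶠ i in U, Irreducible (h.map (mapRingHom (Pi.evalRingHom k i))) := by
  have hU := (Ultraprod.isUltraproductMap_mk U k).mapRingHom.mapRingHom
  have not_isUnit {g : (∀ i, k i)[X][Y]}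
      (hg : ∀ᶠ i in U, (g.map (mapRingHom (Pi.evalRingHom k i))).natDegree ≠ 0) :
      ¬IsUnit (g.map (mapRingHom (Ultraprod.mk U k))) := fun hu => by
    have hdvd := hU.eventually_dvd (a := g) (b := 1) (by simpa using hu.dvd)
    obtain ⟨i, hi, hdvd⟩ := (hg.and hdvd).exists
    exact hi (natDegree_eq_zero_of_isUnit (isUnit_of_dvd_one (by simpa using hdvd)))
  have hpos : 0 < h.natDegree := by
    rw [← hm.natDegree_map (mapRingHom (Ultraprod.mk U k))]
    exact ((hm.map _).natDegree_pos).2 hi.ne_one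
  by_contra hred
  rw [← Ultrafilter.eventually_not] at hred
  obtain ⟨x, hx⟩ := Filter.skolem.1 (hred.mono fun i hi =>
    exists_factors_of_not_irreducible (hm.map _) (by rwa [hm.natDegree_map]) hi)
  have exists_lift (f : ∀ i, (k i)[X][Y])
      (hf : ∀ᶠ i in U, f i ∣ h.map (mapRingHom (Pi.evalRingHom k i))) :
      ∃ g : (∀ i, k i)[X][Y], ∀ᶠ i in U, g.map (mapRingHom (Pi.evalRingHom k i)) = f i := by
    obtain ⟨g, hg⟩ := exists_map_evalRingHom_eq f (degX h) h.natDegree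
    exact ⟨g, hf.mono fun i hi =>
      hg i ((degX_le_of_dvd hi (hm.map _).ne_zero).trans (degX_map_le _ h))
      ((natDegree_le_of_dvd hi (hm.map _).ne_zero).trans natDegree_map_le)⟩
  obtain ⟨f, hf⟩ := exists_lift (fun i => (x i).1) (hx.mono fun i hi => hi.1 ▸ dvd_mul_right _ _)
  obtain ⟨g, hg⟩ := exists_lift (fun i => (x i).2) (hx.mono fun i hi => hi.1 ▸ dvd_mul_left _ _)
  have hfg : h.map (mapRingHom (Ultraprod.mk U k)) =
      f.map (mapRingHom (Ultraprod.mk U k)) * g.map (mapRingHom (Ultraprod.mk U k)) := by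
    rw [← Polynomial.map_mul]
    refine hU.map_eq_map_iff.2 ?_
    filter_upwards [hx, hf, hg] with i hi hfi hgi
    rw [coe_mapRingHom, Polynomial.map_mul, hfi, hgi, hi.1]
  rcases hi.isUnit_or_isUnit hfg with hu | hu
  · exact not_isUnit (by filter_upwards [hx, hf] with i hi hfi using hfi ▸ hi.2.1) hu
  · exact not_isUnit (by filter_upwards [hx, hg] with i hi hgi using hgi ▸ hi.2.2) hu

variable {ι : Type*} [Fintype ι] {F : ∀ i, k i →+* k i} {h : (∀ i, k i)[X][Y]}
  {δ : (∀ i, k i)[X]}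

lemma eventually_exists_inverse {w : (∀ i, k i)[X][Y]}
    (hw : ∃ (v : (Ultraprod U k)[X][Y]) (δ : (Ultraprod U k)[X]), δ ≠ 0 ∧
      h.map (mapRingHom (Ultraprod.mk U k)) ∣
        v.comp (w.map (mapRingHom (Ultraprod.mk U k))) - C δ * X) :
    ∀ᶠ i in U, ∃ (v : (k i)[X][Y]) (δ : (k i)[X]), δ ≠ 0 ∧
      h.map (mapRingHom (Pi.evalRingHom k i)) ∣
        v.comp (w.map (mapRingHom (Pi.evalRingHom k i))) - C δ * X := by
  have hU := (Ultraprod.isUltraproductMap_mk U k).mapRingHom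
  obtain ⟨v, δ, hδ, hv⟩ := hw
  obtain ⟨v, rfl⟩ := hU.mapRingHom.surjective v
  obtain ⟨δ, rfl⟩ := hU.surjective δ
  have hdvd := hU.mapRingHom.eventually_dvd (a := h) (b := v.comp w - C δ * X)
    (by simpa [Polynomial.map_comp] using hv)
  filter_upwards [hdvd, hU.map_ne_zero_iff.1 hδ] with i hi hδi
  exact ⟨_, _, hδi, by simpa [Polynomial.map_comp] using hi⟩

theorem IsTwistSplitting.eventually {w : ι → (∀ i, k i)[X][Y]} (hm : h.Monic)
    (hw : IsTwistSplitting (Ultraprod.map U F) (h.map (mapRingHom (Ultraprod.mk U k)))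
      (δ.map (Ultraprod.mk U k)) fun j => (w j).map (mapRingHom (Ultraprod.mk U k))) :
    ∀ᶠ i in U, IsTwistSplitting (F i) (h.map (mapRingHom (Pi.evalRingHom k i)))
      (δ.map (Pi.evalRingHom k i)) fun j => (w j).map (mapRingHom (Pi.evalRingHom k i)) := by
  have hU := (Ultraprod.isUltraproductMap_mk U k).mapRingHom
  have hderiv : ∀ᶠ i in U, (derivative h).map (mapRingHom (Pi.evalRingHom k i)) ≠ 0 :=
    hU.mapRingHom.map_ne_zero_iff.1 (by simpa [derivative_map] using hw.derivative_ne_zero)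
  have hdefect : ∀ᶠ i in U, (C h).map (mapRingHom (mapRingHom (Pi.evalRingHom k i))) ∣
      (twistDefect (RingHom.pi fun i => (F i).comp (Pi.evalRingHom k i)) h δ w).map
        (mapRingHom (mapRingHom (Pi.evalRingHom k i))) := by
    refine hU.mapRingHom.mapRingHom.eventually_dvd ?_
    simp only [coe_mapRingHom]
    rw [map_twistDefect (Ultraprod.mk U k) (G := Ultraprod.map U F) (fun _ => rfl), map_C]
    exact hw.dvd_twistDefect
  filter_upwards [eventually_irreducible hm hw.irreducible, hderiv,
    hU.map_ne_zero_iff.1 hw.ne_zero, hdefect,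
    eventually_all.2 fun j => eventually_exists_inverse (hw.exists_inverse j)]
    with i hirr hderiv hδ hdefect hinverse
  rw [map_twistDefect (Pi.evalRingHom k i) (G := F i) (fun _ => rfl), map_C] at hdefect
  exact
    { monic := hm.map _
      irreducible := hirr
      card_eq := by rw [hw.card_eq, hm.natDegree_map, hm.natDegree_map]
      derivative_ne_zero := by rwa [derivative_map]
      ne_zero := hδ
      dvd_twistDefect := hdefect
      exists_inverse := hinverse }

lemma isTwistedPoint_mk {w : (∀ i, k i)[X][Y]} {t z : ∀ i, k i}
    (hx : ∀ᶠ i in U, IsTwistedPoint (F i) (h.map (mapRingHom (Pi.evalRingHom k i)))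
      (δ.map (Pi.evalRingHom k i)) (w.map (mapRingHom (Pi.evalRingHom k i))) (t i, z i)) :
    IsTwistedPoint (Ultraprod.map U F) (h.map (mapRingHom (Ultraprod.mk U k)))
      (δ.map (Ultraprod.mk U k)) (w.map (mapRingHom (Ultraprod.mk U k)))
      (Ultraprod.mk U k t, Ultraprod.mk U k z) := by
  have hU := Ultraprod.isUltraproductMap_mk U k
  have eval_apply (p : (∀ i, k i)[X]) (i : I) :
      (p.map (Pi.evalRingHom k i)).eval (t i) = Pi.evalRingHom k i (p.eval t) :=
    eval_map_apply (f := Pi.evalRingHom k i) t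
  have evalEval_apply (f : (∀ i, k i)[X][Y]) (i : I) :
      (f.map (mapRingHom (Pi.evalRingHom k i))).evalEval (t i) (z i) =
        Pi.evalRingHom k i (f.evalEval t z) :=
    map_mapRingHom_evalEval (Pi.evalRingHom k i) f t z
  refine ⟨?_, ?_, ?_, ?_⟩
  · rw [map_mapRingHom_evalEval, hU.map_eq_zero_iff]
    exact hx.mono fun i hi => by rw [← evalEval_apply, hi.evalEval_eq_zero]
  · rw [Ultraprod.map_mk, hU.map_eq_map_iff]
    exact hx.mono fun i hi => hi.map_fst
  · rw [eval_map_apply, hU.map_ne_zero_iff]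
    exact hx.mono fun i hi => by rw [← eval_apply]; exact hi.eval_ne_zero
  · rw [eval_map_apply, map_mapRingHom_evalEval, Ultraprod.map_mk, ← map_mul, hU.map_eq_map_iff]
    refine hx.mono fun i hi => ?_
    rw [← evalEval_apply, map_mul, ← eval_apply]
    exact hi.eval_mul_map_snd

end Lift

lemma exists_bound_degX_natDegree {R ι : Type*} [CommRing R] [Finite ι] (h : R[X][Y]) (δ : R[X])
    (w : ι → R[X][Y]) : ∃ B, degX h ≤ B ∧ δ.natDegree ≤ B ∧
      ∀ i, degX (w i) ≤ B ∧ (w i).natDegree ≤ B := by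
  obtain ⟨D, hD⟩ := (Set.finite_range fun i => degX (w i) + (w i).natDegree).bddAbove
  refine ⟨degX h + δ.natDegree + D, by omega, by omega, fun i => ?_⟩
  have : degX (w i) + (w i).natDegree ≤ D := hD ⟨i, rfl⟩
  omega

section Points

variable {I : Type*} {U : Ultrafilter I} {k : I → Type*} [∀ i, Field (k i)]
  [∀ i, IsAlgClosed (k i)] {φ : ∀ i, k i →+* k i} {q : I → ℕ}

theorem exists_isTwistedPoint_ultraprod (hq : Tendsto q U atTop) (hφ : ∀ i x, φ i x = x ^ q i)
    (hqk : ∀ i, (q i : k i) = 0) {D : ∀ i, Finset (k i)}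
    (hD : ∀ C : ℕ, ∀ᶠ i in U, C * (D i).card ≤ q i ^ 2) {ι : Type*} [Fintype ι]
    {h : (Ultraprod U k)[X][Y]} {δ : (Ultraprod U k)[X]} {w : ι → (Ultraprod U k)[X][Y]}
    (hw : IsTwistSplitting (Ultraprod.map U fun i => (φ i).comp (φ i)) h δ w) (j : ι) :
    ∃ t : ∀ i, k i, (∀ᶠ i in U, t i ∉ D i) ∧
      ∃ z, IsTwistedPoint (Ultraprod.map U fun i => (φ i).comp (φ i)) h δ (w j)
        (Ultraprod.mk U k t, z) := by
  have hU := (Ultraprod.isUltraproductMap_mk U k).mapRingHom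
  obtain ⟨h, rfl, -, hm⟩ := lifts_and_natDegree_eq_and_monic
    (f := mapRingHom (Ultraprod.mk U k)) (hU.mapRingHom.surjective h) hw.monic
  obtain ⟨δ, rfl⟩ := hU.surjective δ
  choose w' hw' using fun i => hU.mapRingHom.surjective (w i)
  obtain rfl := funext hw'
  obtain ⟨B, hhB, hδB, hwB⟩ := exists_bound_degX_natDegree h δ w'
  have hpoint : ∀ᶠ i in U, ∃ x : k i × k i, x.1 ∉ D i ∧
      IsTwistedPoint ((φ i).comp (φ i)) (h.map (mapRingHom (Pi.evalRingHom k i)))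
        (δ.map (Pi.evalRingHom k i)) ((w' j).map (mapRingHom (Pi.evalRingHom k i))) x := by
    filter_upwards [hw.eventually hm, hD (3 * Fintype.card ι),
      hq.eventually_gt_atTop (3 * (5 * ((Fintype.card ι + 1) * (B + 1)) ^ 2))] with i hwi hDi hqi
    obtain ⟨T, hT, hTcard⟩ := hwi.exists_finset_isTwistedPoint (hφ i) (hqk i)
      ((degX_map_le _ h).trans hhB) (natDegree_map_le.trans hδB)
      (fun i => (degX_map_le _ _).trans (hwB i).1) (fun i => natDegree_map_le.trans (hwB i).2)
      (by omega) j
    obtain ⟨t, htT, htD⟩ : ∃ t ∈ T, t ∉ D i := by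
      by_contra! hTD
      have hcard := Nat.mul_le_mul_left (Fintype.card ι) (Finset.card_le_card hTD)
      nlinarith [Nat.mul_lt_mul_of_pos_right hqi (pos_of_gt hqi)]
    obtain ⟨z, hz⟩ := hT t htT
    exact ⟨(t, z), htD, hz⟩
  obtain ⟨x, hx⟩ := Filter.skolem.1 hpoint
  exact ⟨fun i => (x i).1, hx.mono fun i hi => hi.1, Ultraprod.mk U k fun i => (x i).2,
    isTwistedPoint_mk (hx.mono fun i hi => hi.2)⟩

end Points

end UltraproductPoints

/-! ### Algebraic extensions of difference fields -/

section FixedSubfield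

open Polynomial

/-- The subfield of elements fixed by the endomorphism `s`. -/
def fixedSubfield {M : Type*} [Field M] (s : M →+* M) : Subfield M :=
  s.eqLocusField (RingHom.id M)

variable {M : Type*} [Field M] (s : M →+* M)

lemma mem_fixedSubfield {x : M} : x ∈ fixedSubfield s ↔ s x = x := Iff.rfl

/-- `s` as an algebra endomorphism over its fixed subfield. -/
def fixedAlgHom : M →ₐ[fixedSubfield s] M where
  __ := s
  commutes' x := x.2

lemma isSeparable_fixedSubfield {x : M} (hx : IsAlgebraic (fixedSubfield s) x) :
    IsSeparable (fixedSubfield s) x := by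
  classical
  set T := ((minpoly (fixedSubfield s) x).aroots M).toFinset
  have hT : ∀ y, y ∈ T ↔ y ∈ (minpoly (fixedSubfield s) x).rootSet M := by
    simp [T, rootSet_def]
  have himage : T.image s = T := by
    refine Finset.eq_of_subset_of_card_le (Finset.image_subset_iff.2 fun y hy => ?_)
      (Finset.card_image_of_injective T s.injective).ge
    exact (hT _).2 (rootSet_mapsTo (fixedAlgHom s) ((hT y).1 hy))
  have hmap : (∏ y ∈ T, (X - C y)).map s = ∏ y ∈ T, (X - C y) := by
    conv_rhs => rw [← himage, Finset.prod_image s.injective.injOn]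
    simp [Polynomial.map_prod]
  obtain ⟨Q, hQ⟩ : ∃ Q : (fixedSubfield s)[X], Q.map (algebraMap _ M) = ∏ y ∈ T, (X - C y) := by
    refine (mem_lifts _).1 ((lifts_iff_coeff_lifts _).2 fun n => ⟨⟨coeff _ n, ?_⟩, rfl⟩)
    exact (coeff_map s n).symm.trans (congrArg (coeff · n) hmap)
  have hQsep : Q.Separable := by
    rw [← separable_map (algebraMap _ M), hQ]
    exact separable_prod_X_sub_C_iff'.2 fun _ _ _ _ h => h
  refine hQsep.of_dvd (minpoly.dvd _ _ ?_)
  rw [← eval_map_algebraMap, hQ, eval_prod]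
  refine Finset.prod_eq_zero ((hT x).2 ?_) (by simp)
  exact mem_rootSet.2 ⟨minpoly.ne_zero hx.isIntegral, minpoly.aeval _ _⟩

end FixedSubfield

section NormalHull

open Polynomial IntermediateField

variable {M K : Type*} [Field M] [Field K] [Algebra M K] (s : M →+* M)
  [Algebra.IsAlgebraic (fixedSubfield s) M]

lemma bijective_of_isAlgebraic_fixedSubfield : Function.Bijective s :=
  Algebra.IsAlgebraic.algHom_bijective (fixedAlgHom s)

lemma isSeparable_fixedSubfield_of_isSeparable {e : K} (he : IsSeparable M e) :
    IsSeparable (fixedSubfield s) e := by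
  have : Algebra.IsSeparable (fixedSubfield s) M :=
    ⟨fun x => isSeparable_fixedSubfield s (Algebra.IsAlgebraic.isAlgebraic x)⟩
  exact IsSeparable.of_algebra_isSeparable_of_isSeparable _ he

variable [IsAlgClosed K] {s} {σ : K →+* K}

/-- The minimal polynomials over the fixed subfield of `s` of finitely many elements have a
`σ`-stable set of roots, because `σ` extends `s`. -/
lemma exists_normal_isSeparable_le (hs : ∀ x, σ (algebraMap M K x) = algebraMap M K (s x))
    (S : Finset K) (hS : ∀ e ∈ S, IsSeparable M e) :
    ∃ L : IntermediateField M K, FiniteDimensional M L ∧ Normal M L ∧ Algebra.IsSeparable M L ∧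
      (∀ x ∈ L, σ x ∈ L) ∧ ∀ e ∈ S, e ∈ L := by
  have hS' e (he : e ∈ S) := isSeparable_fixedSubfield_of_isSeparable s (hS e he)
  let τ : K →ₐ[fixedSubfield s] K :=
    { σ with commutes' := fun c => (hs c).trans (congrArg (algebraMap M K) c.2) }
  set P : (fixedSubfield s)[X] := ∏ e ∈ S, minpoly (fixedSubfield s) e with hP
  have hP0 : P ≠ 0 := Finset.prod_ne_zero_iff.2 fun e he => minpoly.ne_zero (hS' e he).isIntegral
  have hroot x : x ∈ P.rootSet K ↔ ∃ e ∈ S, aeval x (minpoly (fixedSubfield s) e) = 0 := by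
    rw [mem_rootSet, and_iff_right hP0, hP, map_prod, Finset.prod_eq_zero_iff]
  have hmap : (P.map (algebraMap _ M)).rootSet K = P.rootSet K := by
    classical rw [rootSet_def, rootSet_def, aroots_map]
  have hsplit := adjoin_rootSet_isSplittingField (p := P.map (algebraMap _ M))
    (IsAlgClosed.splits ((P.map (algebraMap _ M)).map (algebraMap M K)))
  rw [hmap] at hsplit
  refine ⟨adjoin M (P.rootSet K), IsSplittingField.finiteDimensional _ (P.map (algebraMap _ M)),
    Normal.of_isSplittingField (P.map (algebraMap _ M)), ?_, ?_, fun e he => subset_adjoin _ _ ?_⟩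
  · rw [isSeparable_adjoin_iff_isSeparable]
    intro x hx
    obtain ⟨e, he, h0⟩ := (hroot x).1 hx
    exact IsSeparable.tower_top M ((hS' e he).of_dvd (minpoly.dvd _ _ h0))
  · intro x hx
    induction hx using adjoin_induction with
    | mem x hx => exact subset_adjoin _ _ (rootSet_mapsTo τ hx)
    | algebraMap a => exact hs a ▸ (adjoin M _).algebraMap_mem _
    | add x y _ _ hx hy => exact map_add σ x y ▸ add_mem hx hy
    | mul x y _ _ hx hy => exact map_mul σ x y ▸ mul_mem hx hy
    | inv x _ hx => exact map_inv₀ σ x ▸ inv_mem hx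
  · exact (hroot e).2 ⟨e, he, minpoly.aeval _ _⟩

end NormalHull

section Denominators

open Polynomial IntermediateField

variable (R : Type*) {M K : Type*} [CommRing R] [Field M] [Field K] [Algebra R M]
  [IsFractionRing R M] [Algebra R K] [Algebra M K] [IsScalarTower R M K]

variable {R} in
lemma adjoin_simple_algebraMap_mul {b : R} (hb : b ≠ 0) (x : K) :
    M⟮algebraMap R K b * x⟯ = M⟮x⟯ := by
  have hb0 : algebraMap R M b ≠ 0 := (map_ne_zero_iff _ (IsFractionRing.injective R M)).2 hb
  rw [IsScalarTower.algebraMap_apply R M K]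
  refine le_antisymm ?_ ?_ <;> rw [adjoin_simple_le_iff]
  · exact mul_mem (M⟮x⟯.algebraMap_mem _) (mem_adjoin_simple_self M x)
  · have := mul_mem (M⟮algebraMap M K (algebraMap R M b) * x⟯.algebraMap_mem (algebraMap R M b)⁻¹)
      (mem_adjoin_simple_self M (algebraMap M K (algebraMap R M b) * x))
    rwa [← mul_assoc, ← map_mul, inv_mul_cancel₀ hb0, map_one, one_mul] at this

variable [IsDomain R]

lemma exists_mul_eq_aeval {z u : K} (hz : IsAlgebraic M z) (hu : u ∈ M⟮z⟯) :
    ∃ b : R, b ≠ 0 ∧ ∃ P : R[X], algebraMap R K b * u = aeval z P := by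
  rw [← mem_toSubalgebra, adjoin_simple_toSubalgebra_of_isAlgebraic hz,
    Algebra.adjoin_singleton_eq_range_aeval] at hu
  obtain ⟨P, rfl⟩ := hu
  obtain ⟨b, hb, hP⟩ := IsLocalization.integerNormalization_spec (nonZeroDivisors R) P
  refine ⟨b, nonZeroDivisors.ne_zero hb,
    IsLocalization.integerNormalization (nonZeroDivisors R) P, ?_⟩
  rw [← aeval_map_algebraMap M z, hP, algebra_compatible_smul M b P, map_smul, Algebra.smul_def,
    ← IsScalarTower.algebraMap_apply]
  rfl

lemma exists_forall_mul_eq_aeval {z : K} (hz : IsAlgebraic M z) (T : Finset K)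
    (hT : ∀ u ∈ T, u ∈ M⟮z⟯) :
    ∃ b : R, b ≠ 0 ∧ ∀ u ∈ T, ∃ P : R[X], algebraMap R K b * u = aeval z P := by
  classical
  induction T using Finset.induction_on with
  | empty => exact ⟨1, one_ne_zero, by simp⟩
  | insert a T _ ih =>
    rw [Finset.forall_mem_insert] at hT
    obtain ⟨b, hb, hbT⟩ := ih hT.2
    obtain ⟨c, hc, P, hP⟩ := exists_mul_eq_aeval R hz hT.1
    refine ⟨b * c, mul_ne_zero hb hc, Finset.forall_mem_insert .. |>.2 ⟨⟨C b * P, ?_⟩, ?_⟩⟩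
    · rw [map_mul, map_mul, aeval_C, ← hP, mul_assoc]
    · intro u hu
      obtain ⟨Q, hQ⟩ := hbT u hu
      exact ⟨C c * Q, by rw [map_mul, map_mul, aeval_C, ← hQ]; ring⟩

lemma exists_isIntegral_adjoin_simple_eq (L : IntermediateField M K) [FiniteDimensional M L]
    [Algebra.IsSeparable M L] : ∃ z : K, IsIntegral R z ∧ M⟮z⟯ = L := by
  obtain ⟨α, hα⟩ := Field.exists_primitive_element M L
  have hαL : M⟮(α : K)⟯ = L := by
    simpa only [lift_adjoin_simple, lift_top] using congrArg lift hα
  have halg : IsAlgebraic R (α : K) :=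
    (IsFractionRing.isAlgebraic_iff R M K).2 ((IsAlgebraic.of_finite M α).algebraMap (A := K))
  obtain ⟨b, hb, hint⟩ := halg.exists_integral_multiple
  rw [Algebra.smul_def] at hint
  exact ⟨_, hint, (adjoin_simple_algebraMap_mul hb _).trans hαL⟩

end Denominators

section Conjugates

open Polynomial IntermediateField

variable {M K : Type*} [Field M] [Field K] [Algebra M K] {s : M →+* M} {σ : K →+* K}

lemma aeval_map_eq_of_commutes (hs : ∀ x, σ (algebraMap M K x) = algebraMap M K (s x)) (P : M[X])
    (z : K) : aeval (σ z) (P.map s) = σ (aeval z P) := by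
  rw [aeval_def, aeval_def, eval₂_map, hom_eval₂]
  exact congrArg (eval₂ · _ P) (RingHom.ext fun x => (hs x).symm)

lemma minpoly_eq_map_of_aeval_eq_zero (hs : Function.Bijective s) {z ω : K} (hz : IsIntegral M z)
    (hω : aeval ω ((minpoly M z).map s) = 0) : minpoly M ω = (minpoly M z).map s := by
  have hirr : Irreducible ((minpoly M z).map s) :=
    (MulEquiv.irreducible_iff (mapEquiv (RingEquiv.ofBijective s hs))).2 (minpoly.irreducible hz)
  exact (minpoly.eq_of_irreducible_of_monic hirr hω ((minpoly.monic hz).map s)).symm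

/-- Each root of the `s`-conjugate of `minpoly M z` has the degree of `z`, and lies in `L` because
its conjugate `σ z` does. -/
lemma adjoin_simple_eq_of_aeval_map_eq_zero [IsAlgClosed K]
    (hσ : ∀ x, σ (algebraMap M K x) = algebraMap M K (s x)) (hs : Function.Bijective s)
    {L : IntermediateField M K} [Normal M L] (hL : ∀ x ∈ L, σ x ∈ L) {z ω : K} (hzL : M⟮z⟯ = L)
    (hz : IsIntegral M z) (hω : aeval ω ((minpoly M z).map s) = 0) : M⟮ω⟯ = L := by
  have hzmem : z ∈ L := hzL ▸ mem_adjoin_simple_self M z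
  have hminω := minpoly_eq_map_of_aeval_eq_zero hs hz hω
  have hminσz := minpoly_eq_map_of_aeval_eq_zero hs hz (ω := σ z) <| by
    rw [aeval_map_eq_of_commutes hσ, minpoly.aeval, map_zero]
  have hωint : IsIntegral M ω := ⟨_, (minpoly.monic hz).map s, hω⟩
  have hωL : ω ∈ L := by
    have hsplit := Normal.splits ‹Normal M L› ⟨σ z, hL z hzmem⟩
    rw [← minpoly.algebraMap_eq (B' := K) (algebraMap L K).injective] at hsplit
    refine (splits_iff_mem (IsAlgClosed.splits _)).1 hsplit ω ?_
    change ω ∈ (minpoly M (σ z)).rootSet K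
    rw [hminσz, ← hminω]
    exact mem_rootSet.2 ⟨minpoly.ne_zero hωint, minpoly.aeval _ _⟩
  have : FiniteDimensional M L := hzL ▸ adjoin.finiteDimensional hz
  refine eq_of_le_of_finrank_eq (adjoin_simple_le_iff.2 hωL) ?_
  rw [← hzL, adjoin.finrank hωint, adjoin.finrank hz, hminω, (minpoly.monic hz).natDegree_map]

lemma exists_primitive_element_conjugates [IsAlgClosed K] (R : Type*) [CommRing R] [IsDomain R]
    [Algebra R M] [IsFractionRing R M] [Algebra R K] [IsScalarTower R M K]
    [Algebra.IsAlgebraic (fixedSubfield s) M]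
    (hσ : ∀ x, σ (algebraMap M K x) = algebraMap M K (s x)) (S : Finset K)
    (hS : ∀ e ∈ S, IsSeparable M e) :
    ∃ z : K, IsIntegral R z ∧ IsSeparable M z ∧ (∀ e ∈ S, e ∈ M⟮z⟯) ∧
      ∀ ω, aeval ω ((minpoly M z).map s) = 0 → M⟮ω⟯ = M⟮z⟯ := by
  obtain ⟨L, _, _, hLsep, hσL, hSL⟩ := exists_normal_isSeparable_le hσ S hS
  obtain ⟨z, hz, hzL⟩ := exists_isIntegral_adjoin_simple_eq R L
  have hzmem : z ∈ L := hzL ▸ mem_adjoin_simple_self M z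
  refine ⟨z, hz, ?_, hzL ▸ hSL, fun ω hω => ?_⟩
  · have hsep := Algebra.IsSeparable.isSeparable M (⟨z, hzmem⟩ : L)
    rw [IsSeparable, ← minpoly.algebraMap_eq (B' := K) (algebraMap L K).injective] at hsep
    exact hsep
  · rw [hzL]
    exact adjoin_simple_eq_of_aeval_map_eq_zero hσ (bijective_of_isAlgebraic_fixedSubfield s) hσL
      hzL hz.tower_top hω

end Conjugates

section TwistSplitting

open Polynomial IntermediateField

variable {A M K : Type*} [Field A] [Field M] [Field K] [Algebra A[X] M] [IsFractionRing A[X] M]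

lemma isAlgebraic_fixedSubfield_of_isFractionRing {F : A →+* A} {s : M →+* M}
    [Algebra.IsAlgebraic (fixedSubfield F) A]
    (hs : ∀ P : A[X], s (algebraMap A[X] M P) = algebraMap A[X] M (P.map F)) :
    Algebra.IsAlgebraic (fixedSubfield s) M := by
  have hC a : s (algebraMap A[X] M (C a)) = algebraMap A[X] M (C (F a)) := by rw [hs, map_C]
  let ι : fixedSubfield F →+* fixedSubfield s :=
    (((algebraMap A[X] M).comp C).comp (fixedSubfield F).subtype).codRestrict _ fun a =>
      (hC a).trans (congrArg (fun x => algebraMap A[X] M (C x)) a.2)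
  have hpoly (P : A[X]) : algebraMap A[X] M P ∈ algebraicClosure (fixedSubfield s) M := by
    induction P using Polynomial.induction_on' with
    | add P Q hP hQ => exact map_add (algebraMap A[X] M) P Q ▸ add_mem hP hQ
    | monomial n a =>
      rw [← C_mul_X_pow_eq_monomial, map_mul, map_pow]
      refine mul_mem (mem_algebraicClosure_iff.2 ?_) (pow_mem (mem_algebraicClosure_iff.2 ?_) n)
      · exact (Algebra.IsAlgebraic.isAlgebraic (R := fixedSubfield F) a).ringHom_of_comp_eq ι
          ((algebraMap A[X] M).comp C) ι.injective rfl
      · have hX : algebraMap A[X] M X ∈ fixedSubfield s := by rw [mem_fixedSubfield, hs, map_X]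
        exact isAlgebraic_algebraMap (A := M) (⟨_, hX⟩ : fixedSubfield s)
  refine ⟨fun x => mem_algebraicClosure_iff.1 ?_⟩
  obtain ⟨P, Q, -, rfl⟩ := IsFractionRing.div_surjective (A := A[X]) x
  exact div_mem (hpoly P) (hpoly Q)

variable [Algebra A[X] K] {F : A →+* A} {h : A[X][X]} {δ : A[X]} {ι : Type*} [Fintype ι]
  {w : ι → A[X][X]} {z : K}

lemma C_dvd_twistDefect (hz : ∀ P : A[X][X], aeval z P = 0 → h ∣ P) {ω : ι → K}
    (hω : (h.map (mapRingHom F)).map (algebraMap A[X] K) = ∏ i, (X - C (ω i)))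
    (hw : ∀ i, algebraMap A[X] K δ * ω i = aeval z (w i)) :
    C h ∣ twistDefect F h δ w := by
  have hzero : (twistDefect F h δ w).map (aeval z : A[X][X] →ₐ[A[X]] K).toRingHom = 0 := by
    have hcomp : (aeval z : A[X][X] →ₐ[A[X]] K).toRingHom.comp C = algebraMap A[X] K :=
      RingHom.ext fun P => aeval_C z P
    have hfactor i : map (aeval z : A[X][X] →ₐ[A[X]] K).toRingHom (C (C δ) * X - C (w i)) =
        C (algebraMap A[X] K δ) * (X - C (ω i)) := by
      simp [← hw, mul_sub]
    rw [twistDefect, Polynomial.map_sub, Polynomial.map_mul, Polynomial.map_map, hcomp, hω,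
      Polynomial.map_prod, Finset.prod_congr rfl fun i _ => hfactor i, Finset.prod_mul_distrib]
    simp
  refine C_dvd_iff_dvd_coeff _ _ |>.2 fun n => hz _ ?_
  simpa using congrArg (coeff · n) hzero

lemma exists_prod_X_sub_C_eq [IsAlgClosed K] {P : K[X]} (hP : P.Monic) {n : ℕ}
    (hn : P.natDegree = n) : ∃ ω : Fin n → K, P = ∏ i, (X - C (ω i)) := by
  subst hn
  have hs := IsAlgClosed.splits P
  have hlen : P.roots.toList.length = P.natDegree := by
    rw [Multiset.length_toList, ← hs.natDegree_eq_card_roots]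
  refine ⟨fun i => P.roots.toList.get (i.cast hlen.symm), ?_⟩
  conv_lhs => rw [hs.eq_prod_roots_of_monic hP, ← Multiset.coe_toList P.roots]
  rw [Multiset.map_coe, Multiset.prod_coe, ← List.prod_ofFn]
  congr 1
  exact List.ext_get (by simp [hlen]) fun n _ _ => by simp

variable [Algebra M K] [IsScalarTower A[X] M K] {s : M →+* M} {σ : K →+* K}

lemma aeval_map_minpoly_eq_eval
    (hs : ∀ P : A[X], s (algebraMap A[X] M P) = algebraMap A[X] M (P.map F))
    (hz : IsIntegral A[X] z) (ω : K) :
    aeval ω ((minpoly M z).map s) =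
      eval ω (((minpoly A[X] z).map (mapRingHom F)).map (algebraMap A[X] K)) := by
  have : FaithfulSMul A[X] K := FaithfulSMul.trans A[X] M K
  have hcomp : s.comp (algebraMap A[X] M) = (algebraMap A[X] M).comp (mapRingHom F) :=
    RingHom.ext hs
  rw [minpoly.isIntegrallyClosed_eq_field_fractions' M hz, Polynomial.map_map, hcomp,
    ← Polynomial.map_map, aeval_map_algebraMap, eval_map_algebraMap]

lemma derivative_minpoly_ne_zero (hz : IsIntegral A[X] z) (hsep : IsSeparable M z) :
    derivative (minpoly A[X] z) ≠ 0 := by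
  have : FaithfulSMul A[X] K := FaithfulSMul.trans A[X] M K
  rw [IsSeparable, separable_iff_derivative_ne_zero (minpoly.irreducible hz.tower_top),
    minpoly.isIntegrallyClosed_eq_field_fractions' M hz, derivative_map] at hsep
  exact fun h0 => hsep (by rw [h0, Polynomial.map_zero])

/-- The conjugates `ω i` of `z` span the same field as `z`, hence are fractions `w i / δ`, and
conversely. -/
lemma exists_isTwistSplitting_of_adjoin_eq (hz : IsIntegral A[X] z) (hsep : IsSeparable M z)
    {n : ℕ} (hn : (minpoly A[X] z).natDegree = n) {ω : Fin n → K}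
    (hω : ((minpoly A[X] z).map (mapRingHom F)).map (algebraMap A[X] K) = ∏ i, (X - C (ω i)))
    (hadj : ∀ i, M⟮ω i⟯ = M⟮z⟯) (S : Finset K) (hS : ∀ e ∈ S, e ∈ M⟮z⟯) :
    ∃ (δ : A[X]) (w : Fin n → A[X][X]), IsTwistSplitting F (minpoly A[X] z) δ w ∧
      (∀ i, algebraMap A[X] K δ * ω i = aeval z (w i)) ∧
      ∀ e ∈ S, ∃ P : A[X][X], algebraMap A[X] K δ * e = aeval z P := by
  classical
  have : FaithfulSMul A[X] K := FaithfulSMul.trans A[X] M K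
  have hzM : IsAlgebraic M z := hz.tower_top.isAlgebraic
  have hωz i : ω i ∈ M⟮z⟯ := hadj i ▸ mem_adjoin_simple_self M (ω i)
  have hdvd (P : A[X][X]) (hP : aeval z P = 0) : minpoly A[X] z ∣ P :=
    minpoly.isIntegrallyClosed_dvd hz hP
  obtain ⟨δ, hδ, hδS⟩ := exists_forall_mul_eq_aeval A[X] hzM (S ∪ Finset.univ.image ω) <| by
    simpa [or_imp, forall_and] using ⟨hS, hωz⟩
  choose w hw using fun i => hδS (ω i) (by simp)
  refine ⟨δ, w, ⟨minpoly.monic hz, minpoly.irreducible hz, by simp [hn],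
    derivative_minpoly_ne_zero hz hsep, hδ, C_dvd_twistDefect hdvd hω hw, fun i => ?_⟩, hw,
    fun e he => hδS e (by simp [he])⟩
  have hadj' : M⟮algebraMap A[X] K δ * ω i⟯ = M⟮z⟯ :=
    (adjoin_simple_algebraMap_mul hδ _).trans (hadj i)
  have hωalg : IsAlgebraic M (algebraMap A[X] K δ * ω i) := by
    have := isAlgebraic_adjoin_simple hzM.isIntegral
    exact isAlgebraic_iff.1 <| Algebra.IsAlgebraic.isAlgebraic
      (⟨_, hadj' ▸ mem_adjoin_simple_self M _⟩ : M⟮z⟯)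
  obtain ⟨δ', hδ', v, hv⟩ := exists_mul_eq_aeval A[X] hωalg
    (hadj'.symm ▸ mem_adjoin_simple_self M z)
  refine ⟨v, δ', hδ', hdvd _ ?_⟩
  rw [map_sub, aeval_comp, ← hw, ← hv, map_mul, aeval_C, aeval_X, sub_self]

variable [IsAlgClosed K] [Algebra.IsAlgebraic (fixedSubfield F) A]

lemma exists_isTwistSplitting
    (hs : ∀ P : A[X], s (algebraMap A[X] M P) = algebraMap A[X] M (P.map F))
    (hσ : ∀ x, σ (algebraMap M K x) = algebraMap M K (s x))
    (S : Finset K) (hS : ∀ e ∈ S, IsSeparable M e) :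
    ∃ (z : K) (h : A[X][X]) (δ : A[X]) (w : Fin h.natDegree → A[X][X]) (i : Fin h.natDegree),
      IsTwistSplitting F h δ w ∧ (∀ P, aeval z P = 0 ↔ h ∣ P) ∧
      algebraMap A[X] K δ * σ z = aeval z (w i) ∧
      ∀ e ∈ S, ∃ P : A[X][X], algebraMap A[X] K δ * e = aeval z P := by
  have : FaithfulSMul A[X] K := FaithfulSMul.trans A[X] M K
  have : Algebra.IsAlgebraic (fixedSubfield s) M := isAlgebraic_fixedSubfield_of_isFractionRing hs
  obtain ⟨z, hz, hsep, hSz, hconj⟩ := exists_primitive_element_conjugates A[X] hσ S hS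
  have hmonic := ((minpoly.monic hz).map (mapRingHom F)).map (algebraMap A[X] K)
  obtain ⟨ω, hω⟩ := exists_prod_X_sub_C_eq hmonic (n := (minpoly A[X] z).natDegree) <| by
    rw [((minpoly.monic hz).map _).natDegree_map, (minpoly.monic hz).natDegree_map]
  have hroot ω' : aeval ω' ((minpoly M z).map s) = 0 ↔ ∃ i, ω' = ω i := by
    simp [aeval_map_minpoly_eq_eval hs hz, hω, eval_prod, Finset.prod_eq_zero_iff, sub_eq_zero]
  obtain ⟨δ, w, hw, hδ, hδS⟩ := exists_isTwistSplitting_of_adjoin_eq hz hsep rfl hω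
    (fun i => hconj _ ((hroot _).2 ⟨i, rfl⟩)) S hSz
  obtain ⟨i, hi⟩ := (hroot (σ z)).1 <| by
    rw [aeval_map_eq_of_commutes hσ, minpoly.aeval, map_zero]
  exact ⟨z, minpoly A[X] z, δ, w, i, hw, fun P => minpoly.isIntegrallyClosed_dvd_iff hz P,
    hi ▸ hδ i, hδS⟩

end TwistSplitting

/-! ### Extending equivariant maps by one element -/

section BaseChange

open Polynomial Bivariate

lemma nonempty_algHom_of_isAlgClosed (A : Type*) [Field A] [IsAlgClosed A] (B : Type*) [CommRing B]
    [Nontrivial B] [Algebra A B] [Algebra.FiniteType A B] : Nonempty (B →ₐ[A] A) := by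
  obtain ⟨m, hm⟩ := Ideal.exists_maximal B
  let : Field (B ⧸ m) := Ideal.Quotient.field m
  have : Module.Finite A (B ⧸ m) := finite_of_finite_type_of_isJacobsonRing A (B ⧸ m)
  let e : A ≃ₐ[A] (B ⧸ m) := AlgEquiv.ofBijective (Algebra.ofId A (B ⧸ m))
    IsAlgClosed.algebraMap_bijective_of_isIntegral
  exact ⟨e.symm.toAlgHom.comp (Ideal.Quotient.mkₐ A m)⟩

variable {A K : Type*} [Field A] [Field K]

lemma exists_finset_forall_subalgebra_map_eq (A : Type*) [Field A] [Algebra A K] (P : K[X][Y]) :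
    ∃ T : Finset K, ∀ B : Subalgebra A K, (T : Set K) ⊆ B →
      ∃ P' : B[X][Y], P'.map (mapRingHom (B.val : B →+* K)) = P := by
  classical
  refine ⟨P.support.biUnion fun i => (P.coeff i).coeffs, fun B hB => (mem_lifts _).1 ?_⟩
  refine (lifts_iff_coeff_lifts _).2 fun i => (mem_lifts _).1 <| (lifts_iff_coeff_lifts _).2 ?_
  intro j
  by_cases h0 : (P.coeff i).coeff j = 0
  · exact h0 ▸ ⟨0, map_zero _⟩
  · refine ⟨⟨_, hB (Finset.mem_coe.2 (Finset.mem_biUnion.2 ⟨i, ?_, coeff_mem_coeffs h0⟩))⟩, rfl⟩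
    exact mem_support_iff.2 fun hi => h0 (by rw [hi, coeff_zero])

lemma monic_of_map_monic {B : Type*} [CommRing B] {f : B →+* K} (hf : Function.Injective f)
    {P : B[X][Y]} (hP : (P.map (mapRingHom f)).Monic) : P.Monic :=
  monic_of_injective (map_injective f hf) hP

variable [IsAlgClosed A]

/-- A factorization over `K` is defined over a finitely generated `A`-algebra, hence specializes to
a factorization over `A`. -/
theorem irreducible_map_of_isAlgClosed (g : A →+* K) {h : A[X][Y]} (hm : h.Monic)
    (hi : Irreducible h) : Irreducible (h.map (mapRingHom g)) := by
  classical
  let := g.toAlgebra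
  rw [hm.irreducible_iff_natDegree'] at hi
  rw [(hm.map _).irreducible_iff_natDegree']
  refine ⟨fun h1 => hi.1 (map_injective _ (map_injective g g.injective) (by simpa using h1)),
    fun P Q hP hQ hPQ hdeg => ?_⟩
  obtain ⟨TP, hTP⟩ := exists_finset_forall_subalgebra_map_eq A P
  obtain ⟨TQ, hTQ⟩ := exists_finset_forall_subalgebra_map_eq A Q
  let B := Algebra.adjoin A ((TP ∪ TQ : Finset K) : Set K)
  have hB : ((TP ∪ TQ : Finset K) : Set K) ⊆ B := Algebra.subset_adjoin
  rw [Finset.coe_union, Set.union_subset_iff] at hB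
  obtain ⟨P, rfl⟩ := hTP B hB.1
  obtain ⟨Q, rfl⟩ := hTQ B hB.2
  have hinj : Function.Injective (B.val : B →+* K) := Subtype.val_injective
  have : Algebra.FiniteType A B := Algebra.FiniteType.adjoin_of_finite (Finset.finite_toSet _)
  obtain ⟨ρ⟩ := nonempty_algHom_of_isAlgClosed A B
  have hPQB : P * Q = h.map (mapRingHom (algebraMap A B)) := by
    refine map_injective (mapRingHom (B.val : B →+* K)) (map_injective _ hinj) ?_
    rw [Polynomial.map_mul, hPQ, Polynomial.map_map, mapRingHom_comp]
    rfl
  have hPQA : P.map (mapRingHom (ρ : B →+* A)) * Q.map (mapRingHom (ρ : B →+* A)) = h := by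
    rw [← Polynomial.map_mul, hPQB, Polynomial.map_map, mapRingHom_comp, AlgHom.comp_algebraMap]
    simp
  refine hi.2 _ _ ((monic_of_map_monic hinj hP).map _) ((monic_of_map_monic hinj hQ).map _) hPQA ?_
  rwa [(monic_of_map_monic hinj hQ).natDegree_map, ← (monic_of_map_monic hinj hQ).natDegree_map
    (mapRingHom (B.val : B →+* K)), ← hm.natDegree_map (mapRingHom g)]

lemma IsTwistSplitting.map {ι : Type*} [Fintype ι] {F : A →+* A} {G : K →+* K} (g : A →+* K)
    (hg : ∀ a, g (F a) = G (g a)) {h : A[X][Y]} {δ : A[X]} {w : ι → A[X][Y]}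
    (hw : IsTwistSplitting F h δ w) :
    IsTwistSplitting G (h.map (mapRingHom g)) (δ.map g) fun i => (w i).map (mapRingHom g) where
  monic := hw.monic.map _
  irreducible := irreducible_map_of_isAlgClosed g hw.monic hw.irreducible
  card_eq := hw.card_eq.trans (hw.monic.natDegree_map _).symm
  derivative_ne_zero := by
    rw [derivative_map]
    exact (Polynomial.map_ne_zero_iff (map_injective g g.injective)).2 hw.derivative_ne_zero
  ne_zero := (Polynomial.map_ne_zero_iff g.injective).2 hw.ne_zero
  dvd_twistDefect := by
    rw [← map_twistDefect g hg, ← coe_mapRingHom]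
    simpa using _root_.map_dvd (mapRingHom (mapRingHom (mapRingHom g))) hw.dvd_twistDefect
  exists_inverse i := by
    obtain ⟨v, δ', hδ', hv⟩ := hw.exists_inverse i
    refine ⟨v.map (mapRingHom g), δ'.map g, (Polynomial.map_ne_zero_iff g.injective).2 hδ', ?_⟩
    simpa [Polynomial.map_comp] using Polynomial.map_dvd (mapRingHom g) hv

end BaseChange

section EquivariantGraph

open Polynomial Bivariate

variable {E K : Type*} [Field E] [Field K]

/-- The subring `G` of `E × K` is the graph of a ring homomorphism to `(K, σ)` defined on an
`s`-stable subring of `E` and intertwining `s` and `σ`. -/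
structure IsEquivariantGraph (s : E →+* E) (σ : K →+* K) (G : Subring (E × K)) : Prop where
  snd_eq_zero : ∀ x ∈ G, x.1 = 0 → x.2 = 0
  map_mem : ∀ x ∈ G, s.prodMap σ x ∈ G

/-- The ring of fractions of a subring of `K × K`; denominators are nonzero in the second factor,
hence also in the first when the subring is the graph of a homomorphism. -/
def fractionSubring (G : Subring (K × K)) : Subring (K × K) where
  carrier := {x | ∃ s ∈ G, s.2 ≠ 0 ∧ s * x ∈ G}
  mul_mem' := by
    rintro x y ⟨s, hs, hs0, hx⟩ ⟨t, ht, ht0, hy⟩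
    exact ⟨s * t, mul_mem hs ht, mul_ne_zero hs0 ht0, mul_mul_mul_comm s x t y ▸ mul_mem hx hy⟩
  one_mem' := ⟨1, one_mem G, one_ne_zero, by simp [one_mem]⟩
  add_mem' := by
    rintro x y ⟨s, hs, hs0, hx⟩ ⟨t, ht, ht0, hy⟩
    refine ⟨s * t, mul_mem hs ht, mul_ne_zero hs0 ht0, ?_⟩
    rw [show s * t * (x + y) = t * (s * x) + s * (t * y) by ring]
    exact add_mem (mul_mem ht hx) (mul_mem hs hy)
  zero_mem' := ⟨1, one_mem G, one_ne_zero, by simp [zero_mem]⟩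
  neg_mem' := by
    rintro x ⟨s, hs, hs0, hx⟩
    exact ⟨s, hs, hs0, mul_neg s x ▸ neg_mem hx⟩

variable {G : Subring (K × K)}

lemma le_fractionSubring : G ≤ fractionSubring G :=
  fun x hx => ⟨1, one_mem G, one_ne_zero, by rwa [one_mul]⟩

lemma mem_fractionSubring_of_mul_mem {s x : K × K} (hs : s ∈ fractionSubring G) (hs0 : s.2 ≠ 0)
    (hx : s * x ∈ fractionSubring G) : x ∈ fractionSubring G := by
  obtain ⟨t, ht, ht0, hts⟩ := hs
  obtain ⟨u, hu, hu0, hux⟩ := hx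
  refine ⟨u * (t * s), mul_mem hu hts, mul_ne_zero hu0 (mul_ne_zero ht0 hs0), ?_⟩
  rw [show u * (t * s) * x = t * (u * (s * x)) by ring]
  exact mul_mem ht hux

lemma isEquivariantGraph_fractionSubring {σ : K →+* K} (h0 : ∀ x ∈ G, x.1 = 0 → x.2 = 0)
    (hσ : ∀ x ∈ G, σ.prodMap σ x ∈ fractionSubring G) :
    IsEquivariantGraph σ σ (fractionSubring G) where
  snd_eq_zero := by
    rintro x ⟨s, -, hs0, hx⟩ hx0
    have := h0 _ hx (by rw [Prod.fst_mul, hx0, mul_zero])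
    exact (mul_eq_zero.1 this).resolve_left hs0
  map_mem := by
    rintro x ⟨s, hs, hs0, hx⟩
    exact mem_fractionSubring_of_mul_mem (hσ s hs) (by simpa using hs0)
      (map_mul (σ.prodMap σ) s x ▸ hσ _ hx)

variable {A : Type*} [Field A] {F : A →+* A} {σ : K →+* K}

lemma isEquivariantGraph_fractionSubring_range {ψ : A[X][Y] →+* K × K} {δ : A[X]} {w : A[X][Y]}
    (h0 : ∀ P, (ψ P).1 = 0 → (ψ P).2 = 0)
    (hC : ∀ P, σ.prodMap σ (ψ (C P)) = ψ (C (P.map F))) (hδ : (ψ (C δ)).2 ≠ 0)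
    (hY : ψ (C δ) * σ.prodMap σ (ψ X) = ψ w) :
    IsEquivariantGraph σ σ (fractionSubring ψ.range) := by
  refine isEquivariantGraph_fractionSubring (by rintro _ ⟨P, rfl⟩; exact h0 P) ?_
  have hψ P : ψ P ∈ fractionSubring ψ.range := le_fractionSubring ⟨P, rfl⟩
  have hX : σ.prodMap σ (ψ X) ∈ fractionSubring ψ.range :=
    mem_fractionSubring_of_mul_mem (hψ (C δ)) hδ (hY ▸ hψ w)
  rintro _ ⟨P, rfl⟩
  induction P using Polynomial.induction_on' with
  | add P Q hP hQ => rw [map_add, map_add]; exact add_mem hP hQ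
  | monomial n P =>
    rw [← C_mul_X_pow_eq_monomial, map_mul, map_mul, map_pow, map_pow, hC]
    exact mul_mem (hψ _) (pow_mem hX n)

/-- The difference field `(K, σ)` has, for each twist splitting, twisted points with first
coordinate in `T`. -/
def HasTwistedPoints (σ : K →+* K) (T : Set K) : Prop :=
  ∀ ⦃n : ℕ⦄ ⦃h : K[X][Y]⦄ ⦃δ : K[X]⦄ ⦃w : Fin n → K[X][Y]⦄, IsTwistSplitting σ h δ w →
    ∀ i, ∃ t ∈ T, ∃ z, IsTwistedPoint σ h δ (w i) (t, z)

variable {M : Type*} [Field M] [Algebra A[X] M] [IsFractionRing A[X] M] [Algebra A[X] K]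
  [Algebra M K] [IsScalarTower A[X] M K]

lemma exists_ringHom_of_isFractionRing (hF : Function.Injective F) (σ : K →+* K)
    (hσ : ∀ P, σ (algebraMap A[X] K P) = algebraMap A[X] K (P.map F)) :
    ∃ s : M →+* M, (∀ P : A[X], s (algebraMap A[X] M P) = algebraMap A[X] M (P.map F)) ∧
      ∀ x, σ (algebraMap M K x) = algebraMap M K (s x) := by
  let s : M →+* M := IsFractionRing.map (K := M) (L := M) (j := mapRingHom F) (map_injective F hF)
  have hs P : s (algebraMap A[X] M P) = algebraMap A[X] M (P.map F) := IsLocalization.map_eq _ P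
  refine ⟨s, hs, fun x => ?_⟩
  obtain ⟨P, Q, -, rfl⟩ := IsFractionRing.div_surjective (A := A[X]) x
  rw [map_div₀, map_div₀, map_div₀, map_div₀, hs, hs]
  simp only [← IsScalarTower.algebraMap_apply, hσ]

variable (M)

lemma exists_forall_isSeparable_pow (q : ℕ) [ExpChar M q] {x : K} (hx : IsAlgebraic M x) :
    ∃ n, ∀ m ≥ n, IsSeparable M (x ^ q ^ m) := by
  obtain ⟨f, hf, n, hn⟩ := (minpoly.irreducible hx.isIntegral).hasSeparableContraction q
  have h0 : IsSeparable M (x ^ q ^ n) :=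
    hf.of_dvd (minpoly.dvd _ _ (by rw [← expand_aeval, hn, minpoly.aeval]))
  refine ⟨n, fun m hm => ?_⟩
  obtain ⟨c, rfl⟩ := Nat.exists_eq_add_of_le hm
  rw [← mem_separableClosure_iff] at h0 ⊢
  rw [pow_add, pow_mul]
  exact pow_mem h0 _

variable [IsAlgClosed A] [IsAlgClosed K] [Algebra.IsAlgebraic (fixedSubfield F) A] {T : Set K}

lemma exists_isEquivariantGraph_of_isSeparable (hT : HasTwistedPoints σ T)
    (hσ : ∀ P, σ (algebraMap A[X] K P) = algebraMap A[X] K (P.map F)) (g : A →+* K)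
    (hg : ∀ a, g (F a) = σ (g a)) (S : Finset K) (hS : ∀ e ∈ S, IsSeparable M e) :
    ∃ G, IsEquivariantGraph σ σ G ∧ (∀ a, (algebraMap A[X] K (C a), g a) ∈ G) ∧
      (∃ t ∈ T, (algebraMap A[X] K X, t) ∈ G) ∧ ∀ e ∈ S, ∃ u, (e, u) ∈ G := by
  obtain ⟨s, hs, hσs⟩ := exists_ringHom_of_isFractionRing (M := M) F.injective σ hσ
  obtain ⟨z, h, δ, w, i, hw, hker, hδz, hS⟩ := exists_isTwistSplitting hs hσs S hS
  obtain ⟨t, htT, u, hu⟩ := hT (hw.map g hg) i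
  let pt : A[X][Y] →+* K := (evalEvalRingHom t u).comp (mapRingHom (mapRingHom g))
  let ψ : A[X][Y] →+* K × K := (aeval z : A[X][Y] →ₐ[A[X]] K).toRingHom.prod pt
  have hpt_C (P : A[X]) : pt (C P) = (P.map g).eval t := by simp [pt]
  have hψ_C (P : A[X]) : ψ (C P) = (algebraMap A[X] K P, (P.map g).eval t) :=
    Prod.ext (aeval_C z P) (hpt_C P)
  have hψ P : ψ P ∈ fractionSubring ψ.range := le_fractionSubring ⟨P, rfl⟩
  have hpt_δ : (ψ (C δ)).2 ≠ 0 := hψ_C δ ▸ hu.eval_ne_zero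
  refine ⟨fractionSubring ψ.range, isEquivariantGraph_fractionSubring_range (F := F) (δ := δ)
    (w := w i) (fun P hP => ?_) (fun P => ?_) hpt_δ (Prod.ext ?_ ?_), fun a => ?_, ⟨t, htT, ?_⟩,
    fun e he => ?_⟩
  · obtain ⟨Q, rfl⟩ := (hker P).1 hP
    have hpt_h : pt h = 0 := hu.evalEval_eq_zero
    exact (map_mul pt h Q).trans (by rw [hpt_h, zero_mul])
  · rw [hψ_C, hψ_C]
    refine Prod.ext (hσ P) ?_
    have hσg : σ.comp g = g.comp F := RingHom.ext fun a => (hg a).symm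
    have hσt : σ t = t := hu.map_fst
    change σ ((P.map g).eval t) = ((P.map F).map g).eval t
    rw [Polynomial.map_map, ← hσg, ← Polynomial.map_map, ← eval_map_apply, hσt]
  · rw [hψ_C]
    simpa [ψ] using hδz
  · rw [hψ_C]
    simpa [ψ, pt] using hu.eval_mul_map_snd
  · simpa [hψ_C] using hψ (C (C a))
  · simpa [hψ_C] using hψ (C X)
  · obtain ⟨P, hP⟩ := hS e he
    refine ⟨pt P / pt (C δ), mem_fractionSubring_of_mul_mem (hψ (C δ)) hpt_δ ?_⟩
    convert hψ P using 1
    refine Prod.ext ((congr_arg (· * e) (aeval_C z δ)).trans hP) (mul_div_cancel₀ _ hpt_δ)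

/-- Some Frobenius power makes the elements of `S` separable over `M`; the graph obtained for these
powers is pulled back along the same power of Frobenius. -/
theorem exists_isEquivariantGraph (hT : HasTwistedPoints σ T)
    (hσ : ∀ P, σ (algebraMap A[X] K P) = algebraMap A[X] K (P.map F)) (g : A →+* K)
    (hg : ∀ a, g (F a) = σ (g a)) (S : Finset K) (hS : ∀ e ∈ S, IsAlgebraic M e) :
    ∃ G, IsEquivariantGraph σ σ G ∧ (∀ a, (algebraMap A[X] K (C a), g a) ∈ G) ∧
      (∃ t ∈ T, (algebraMap A[X] K X, t) ∈ G) ∧ ∀ e ∈ S, ∃ u, (e, u) ∈ G := by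
  classical
  let q := ringExpChar M
  have : ExpChar K q := expChar_of_injective_algebraMap (algebraMap M K).injective q
  choose! n hn using fun e he => exists_forall_isSeparable_pow M q (hS e he)
  let fr : K →+* K := iterateFrobenius K q (S.sup n)
  have hfr x : fr x = x ^ q ^ S.sup n := iterateFrobenius_def q _ x
  obtain ⟨G, hG, hgG, ⟨t, ht, htG⟩, hSG⟩ := exists_isEquivariantGraph_of_isSeparable M hT hσ g hg
    (S.image fr) (by simpa [hfr] using fun e he => hn e he _ (Finset.le_sup he))
  refine ⟨G.comap (fr.prodMap fr), ⟨fun x hx hx0 => ?_, fun x hx => ?_⟩, fun a => ?_, ⟨t, ht, ?_⟩,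
    fun e he => ?_⟩
  · exact (map_eq_zero fr).1 (hG.snd_eq_zero _ hx ((map_eq_zero fr).2 hx0))
  · simpa [hfr, Prod.map] using hG.map_mem _ hx
  · simpa [hfr] using hgG (a ^ q ^ S.sup n)
  · simpa [hfr] using pow_mem htG (q ^ S.sup n)
  · obtain ⟨u', hu'⟩ := hSG _ (Finset.mem_image_of_mem _ he)
    obtain ⟨u, rfl⟩ := IsAlgClosed.exists_pow_nat_eq u' (pow_pos (expChar_pos K q) (S.sup n))
    exact ⟨u, by simpa [hfr] using hu'⟩

end EquivariantGraph

section Saturation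

open Filter

variable {U : Ultrafilter ℕ}

/-- Countable saturation: the `n`-th component satisfies as many of the first `n` conditions as
possible. -/
lemma exists_forall_eventually {J : Type*} [Countable J] {X : ℕ → Type*} (hU : ↑U ≤ atTop (α := ℕ))
    {Q : J → ∀ n, X n → Prop}
    (h : ∀ s : Finset J, ∃ x : ∀ n, X n, ∀ j ∈ s, ∀ᶠ n in U, Q j n (x n)) :
    ∃ x : ∀ n, X n, ∀ j, ∀ᶠ n in U, Q j n (x n) := by
  classical
  have := Encodable.ofCountable J
  let s (m : ℕ) : Finset J :=
    (Finset.range m).preimage Encodable.encode Encodable.encode_injective.injOn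
  have hs (j : J) (m : ℕ) : j ∈ s m ↔ Encodable.encode j < m := by simp [s]
  let R (n m : ℕ) : Prop := ∃ x : X n, ∀ j ∈ s m, Q j n x
  obtain ⟨x₀, -⟩ := h ∅
  have hR0 (n : ℕ) : R n 0 := ⟨x₀ n, by simp [hs]⟩
  choose x hx using fun n => Nat.findGreatest_spec (P := R n) (Nat.zero_le n) (hR0 n)
  refine ⟨x, fun j => ?_⟩
  obtain ⟨y, hy⟩ := h (s (Encodable.encode j + 1))
  filter_upwards [(eventually_all_finset _).2 hy, hU (eventually_ge_atTop (Encodable.encode j + 1))]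
    with n hyn hjn
  exact hx n j ((hs _ _).2 (Nat.le_findGreatest hjn ⟨y n, hyn⟩))

variable {E K : Type*} [Field E] [Field K]

lemma IsEquivariantGraph.exists_fun {s : E →+* E} {σ : K →+* K} {G : Subring (E × K)}
    (hG : IsEquivariantGraph s σ G) : ∃ u : E → K, ∀ e v, (e, v) ∈ G → u e = v := by
  have huniq (e : E) : ∃ u, ∀ v, (e, v) ∈ G → u = v := by
    by_cases h : ∃ u, (e, u) ∈ G
    · obtain ⟨u, hu⟩ := h
      refine ⟨u, fun v hv => sub_eq_zero.1 (hG.snd_eq_zero _ (sub_mem hu hv) (sub_self e))⟩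
    · exact ⟨0, fun v hv => (h ⟨v, hv⟩).elim⟩
  choose u hu using huniq
  exact ⟨u, hu⟩

variable (U) {k : ℕ → Type*} [∀ n, Field (k n)]

/-- The elements of the ultraproduct that avoid the sets `D n`. -/
def Ultraprod.avoiding (D : ∀ n, Finset (k n)) : Set (Ultraprod U k) :=
  {x | ∃ t, Ultraprod.mk U k t = x ∧ ∀ᶠ n in U, t n ∉ D n}

variable {U} {F : ∀ n, k n →+* k n} {D : ∀ n, Finset (k n)} {s : E →+* E} {A : Type*} [Field A]
  {i : A →+* E} {g : A →+* Ultraprod U k} {y : E}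

lemma exists_ringHom_of_eventually {x : ∀ n, E → k n} {r : A → ∀ n, k n}
    (hr : ∀ a, Ultraprod.mk U k (r a) = g a)
    (hadd : ∀ a b, ∀ᶠ n in U, x n (a + b) = x n a + x n b)
    (hmul : ∀ a b, ∀ᶠ n in U, x n (a * b) = x n a * x n b)
    (hmap : ∀ a, ∀ᶠ n in U, x n (s a) = F n (x n a)) (hA : ∀ a, ∀ᶠ n in U, x n (i a) = r a n)
    (hy : ∀ᶠ n in U, x n y ∉ D n) :
    ∃ g' : E →+* Ultraprod U k, (∀ e, g' (s e) = Ultraprod.map U F (g' e)) ∧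
      (∀ a, g' (i a) = g a) ∧ g' y ∈ Ultraprod.avoiding U D := by
  have hmk := Ultraprod.isUltraproductMap_mk U k
  let f (e : E) : Ultraprod U k := Ultraprod.mk U k fun n => x n e
  have hfi a : f (i a) = g a := (hmk.map_eq_map_iff.2 (hA a)).trans (hr a)
  have hfadd a b : f (a + b) = f a + f b :=
    (hmk.map_eq_map_iff.2 (hadd a b)).trans (map_add _ (fun n => x n a) fun n => x n b)
  have hfmul a b : f (a * b) = f a * f b :=
    (hmk.map_eq_map_iff.2 (hmul a b)).trans (map_mul _ (fun n => x n a) fun n => x n b)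
  let g' : E →+* Ultraprod U k :=
    { toFun := f
      map_one' := by rw [← map_one i, hfi, map_one]
      map_zero' := by rw [← map_zero i, hfi, map_zero]
      map_add' := hfadd
      map_mul' := hfmul }
  exact ⟨g', fun e => hmk.map_eq_map_iff.2 (hmap e), hfi, _, rfl, hy⟩

theorem exists_ringHom_of_forall_finset [Countable E] (hU : ↑U ≤ atTop (α := ℕ))
    (h : ∀ S : Finset E, ∃ G, IsEquivariantGraph s (Ultraprod.map U F) G ∧ (∀ a, (i a, g a) ∈ G) ∧
      (∃ t ∈ Ultraprod.avoiding U D, (y, t) ∈ G) ∧ ∀ e ∈ S, ∃ u, (e, u) ∈ G) :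
    ∃ g' : E →+* Ultraprod U k, (∀ e, g' (s e) = Ultraprod.map U F (g' e)) ∧
      (∀ a, g' (i a) = g a) ∧ g' y ∈ Ultraprod.avoiding U D := by
  classical
  have : Countable A := i.injective.countable
  have hmk := Ultraprod.isUltraproductMap_mk U k
  choose r hr using fun a => hmk.surjective (g a)
  let Q (j : E × E × A) (n : ℕ) (x : E → k n) : Prop :=
    x (j.1 + j.2.1) = x j.1 + x j.2.1 ∧ x (j.1 * j.2.1) = x j.1 * x j.2.1 ∧
      x (s j.1) = F n (x j.1) ∧ x (i j.2.2) = r j.2.2 n ∧ x y ∉ D n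
  obtain ⟨x, hx⟩ := exists_forall_eventually (Q := Q) hU fun J => by
    obtain ⟨G, hG, hiG, ⟨_, ⟨t, rfl, ht⟩, hyG⟩, hJG⟩ := h (J.image (·.1) ∪ J.image (·.2.1))
    obtain ⟨u, hu⟩ := hG.exists_fun
    choose v hv using fun e => hmk.surjective (u e)
    have hvG {e w} (hew : (e, Ultraprod.mk U k w) ∈ G) : ∀ᶠ n in U, v e n = w n :=
      hmk.map_eq_map_iff.1 ((hv e).trans (hu _ _ hew))
    have hJG' e (he : e ∈ J.image (·.1) ∪ J.image (·.2.1)) : (e, Ultraprod.mk U k (v e)) ∈ G := by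
      obtain ⟨w, hw⟩ := hJG e he
      rwa [hv, hu e w hw]
    refine ⟨fun n e => v e n, fun j hj => ?_⟩
    have h₁ := hJG' j.1 (Finset.mem_union_left _ (Finset.mem_image_of_mem _ hj))
    have h₂ := hJG' j.2.1 (Finset.mem_union_right _ (Finset.mem_image_of_mem _ hj))
    filter_upwards [hvG (w := v j.1 + v j.2.1) (add_mem h₁ h₂),
      hvG (w := v j.1 * v j.2.1) (mul_mem h₁ h₂), hvG (hG.map_mem _ h₁),
      hvG ((hr j.2.2).symm ▸ hiG j.2.2), hvG hyG, ht] with n h_add h_mul h_map h_A h_y h_t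
    exact ⟨h_add, h_mul, h_map, h_A, (congrArg (· ∉ D n) h_y).mpr h_t⟩
  exact exists_ringHom_of_eventually hr (fun a b => (hx (a, b, 0)).mono fun n hn => hn.1)
    (fun a b => (hx (a, b, 0)).mono fun n hn => hn.2.1)
    (fun a => (hx (a, 0, 0)).mono fun n hn => hn.2.2.1)
    (fun a => (hx (0, 0, a)).mono fun n hn => hn.2.2.2.1)
    ((hx (0, 0, 0)).mono fun n hn => hn.2.2.2.2)

end Saturation

/-! ### Partial isomorphisms of difference fields -/

section PartialIsomorphism

open Polynomial

variable {A K : Type*} [Field A] [Field K] {σ : K →+* K}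

/-- The embeddings `f` and `g` represent the isomorphism `f a ↦ g a` between two difference
subfields of `(K, σ)`. Both subfields are isomorphic to `(A, s)`, which is required to be countable,
algebraically closed, and algebraic over its fixed subfield. -/
structure IsPartialIsomorphism (σ : K →+* K) (s : A →+* A) (f g : A →+* K) : Prop where
  countable : Countable A
  isAlgClosed : IsAlgClosed A
  isAlgebraic : Algebra.IsAlgebraic (fixedSubfield s) A
  map_left : ∀ a, σ (f a) = f (s a)
  map_right : ∀ a, σ (g a) = g (s a)

section AlgebraicClosure

variable {L : Type*} [Field L] [Algebra L K] {t : L →+* L}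

lemma mem_algebraicClosure_of_commutes (hσ : ∀ x, σ (algebraMap L K x) = algebraMap L K (t x))
    {x : K} (hx : x ∈ algebraicClosure L K) : σ x ∈ algebraicClosure L K := by
  obtain ⟨P, hP, hPx⟩ := mem_algebraicClosure_iff.1 hx
  refine mem_algebraicClosure_iff.2
    ⟨P.map t, (Polynomial.map_ne_zero_iff t.injective).2 hP, ?_⟩
  rw [aeval_map_eq_of_commutes hσ, hPx, map_zero]

lemma isAlgebraic_fixedSubfield_algebraicClosure [Algebra.IsAlgebraic (fixedSubfield t) L]
    {s : algebraicClosure L K →+* algebraicClosure L K}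
    (hs : ∀ x, s (algebraMap L _ x) = algebraMap L _ (t x)) :
    Algebra.IsAlgebraic (fixedSubfield s) (algebraicClosure L K) := by
  have : Algebra.IsAlgebraic (fixedSubfield t) (algebraicClosure L K) :=
    Algebra.IsAlgebraic.trans (fixedSubfield t) L _
  let ι : fixedSubfield t →+* fixedSubfield s :=
    ((algebraMap L (algebraicClosure L K)).comp (fixedSubfield t).subtype).codRestrict _ fun a =>
      (hs a).trans (congrArg (algebraMap L _) a.2)
  exact ⟨fun x => (Algebra.IsAlgebraic.isAlgebraic (R := fixedSubfield t) x).ringHom_of_comp_eq ι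
    (RingHom.id _) ι.injective rfl⟩

variable [IsAlgClosed K]

lemma exists_isPartialIsomorphism_algebraicClosure [Countable L]
    [Algebra.IsAlgebraic (fixedSubfield t) L]
    (hσ : ∀ x, σ (algebraMap L K x) = algebraMap L K (t x)) :
    ∃ s, IsPartialIsomorphism σ s (algebraMap (algebraicClosure L K) K) (algebraMap _ K) := by
  let s : algebraicClosure L K →+* algebraicClosure L K :=
    (σ.comp (algebraMap _ K)).codRestrict _ fun x => mem_algebraicClosure_of_commutes hσ x.2
  exact ⟨s, ((Algebraic.countable L K).mono fun _ => mem_algebraicClosure_iff.1).to_subtype,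
    (algebraicClosure.isAlgClosure L K).isAlgClosed,
    isAlgebraic_fixedSubfield_algebraicClosure fun x => Subtype.ext (hσ x), fun _ => rfl,
    fun _ => rfl⟩

end AlgebraicClosure

lemma countable_fractionRing_polynomial (A : Type*) [Field A] [Countable A] :
    Countable (FractionRing A[X]) := by
  have : Countable A[X] := Cardinal.mk_le_aleph0_iff.1 <| Polynomial.cardinalMk_le_max.trans
    (max_le (Cardinal.mk_le_aleph0_iff.2 ‹_›) le_rfl)
  refine Function.Surjective.countable
    (f := fun x : A[X] × A[X] => algebraMap A[X] (FractionRing A[X]) x.1 / algebraMap _ _ x.2)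
    fun z => ?_
  obtain ⟨x, y, -, rfl⟩ := IsFractionRing.div_surjective (A := A[X]) z
  exact ⟨(x, y), rfl⟩

lemma injective_eval₂_of_notMem_range [IsAlgClosed A] [IsAlgClosed K] {f : A →+* K} {y : K}
    (hy : y ∉ Set.range f) : Function.Injective (eval₂RingHom f y) := by
  let := f.toAlgebra
  refine (injective_iff_map_eq_zero _).2 fun P hP => by_contra fun hP0 => hy ?_
  have hmem : y ∈ algebraicClosure A K := mem_algebraicClosure_iff.2 ⟨P, hP0, hP⟩
  rwa [(IsAlgClosed.algebraicClosure_eq_bot_iff A K).2 inferInstance] at hmem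

lemma IsEquivariantGraph.comap {E E' K : Type*} [Field E] [Field E'] [Field K] {s : E →+* E}
    {s' : E' →+* E'} {σ : K →+* K} {G : Subring (E × K)} (hG : IsEquivariantGraph s σ G)
    {φ : E' →+* E} (hφ : ∀ x, s (φ x) = φ (s' x)) :
    IsEquivariantGraph s' σ (G.comap (φ.prodMap (RingHom.id K))) where
  snd_eq_zero x hx hx0 := hG.snd_eq_zero _ hx (by simp [hx0])
  map_mem x hx := by simpa [hφ, Prod.map] using hG.map_mem _ hx

variable {U : Ultrafilter ℕ} {k : ℕ → Type*} [∀ n, Field (k n)] [∀ n, IsAlgClosed (k n)]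
  {F : ∀ n, k n →+* k n} {D : ∀ n, Finset (k n)} {s : A →+* A} {f g : A →+* Ultraprod U k}
  {y : Ultraprod U k}

theorem IsPartialIsomorphism.exists_extension (hU : ↑U ≤ Filter.atTop (α := ℕ))
    (hT : HasTwistedPoints (Ultraprod.map U F) (Ultraprod.avoiding U D))
    (h : IsPartialIsomorphism (Ultraprod.map U F) s f g) (hσy : Ultraprod.map U F y = y)
    (hy : y ∉ Set.range f) :
    ∃ (E : Subfield (Ultraprod U k)) (s' : E →+* E) (g' : E →+* Ultraprod U k) (i : A →+* E)
      (e : E), IsPartialIsomorphism (Ultraprod.map U F) s' E.subtype g' ∧ (∀ a, i a = f a) ∧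
        (∀ a, g' (i a) = g a) ∧ e = y ∧ g' e ∈ Ultraprod.avoiding U D := by
  classical
  obtain ⟨_, _, _, hf, hg⟩ := h
  let K := Ultraprod U k
  let M := FractionRing A[X]
  let : Algebra A[X] K := (eval₂RingHom f y).toAlgebra
  have : FaithfulSMul A[X] K :=
    (faithfulSMul_iff_algebraMap_injective _ _).2 (injective_eval₂_of_notMem_range hy)
  let : Algebra M K := FractionRing.liftAlgebra A[X] K
  have hσ (P : A[X]) : Ultraprod.map U F (algebraMap A[X] K P) = algebraMap A[X] K (P.map s) := by
    change Ultraprod.map U F (P.eval₂ f y) = (P.map s).eval₂ f y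
    rw [hom_eval₂, eval₂_map, hσy, show (Ultraprod.map U F).comp f = f.comp s from RingHom.ext hf]
  obtain ⟨t, ht, hσt⟩ := exists_ringHom_of_isFractionRing (M := M) s.injective _ hσ
  have := isAlgebraic_fixedSubfield_of_isFractionRing ht
  have : Countable M := countable_fractionRing_polynomial A
  let E := algebraicClosure M K
  obtain ⟨s', hE⟩ := exists_isPartialIsomorphism_algebraicClosure hσt
  have := hE.countable
  obtain ⟨g', hg's', hg'i, hg'y⟩ := exists_ringHom_of_forall_finset (s := s') (g := g)
    (i := (algebraMap A[X] E).comp C) (y := algebraMap A[X] E X) hU fun S => by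
      obtain ⟨G, hG, hgG, hyG, hSG⟩ := exists_isEquivariantGraph M hT hσ g (fun a => (hg a).symm)
        (S.image (algebraMap E K)) fun e he => by
          obtain ⟨e, -, rfl⟩ := Finset.mem_image.1 he
          exact mem_algebraicClosure_iff.1 e.2
      exact ⟨_, hG.comap hE.map_left, hgG, hyG,
        fun e he => hSG _ (Finset.mem_image_of_mem _ he)⟩
  exact ⟨E.toSubfield, s', g', (algebraMap A[X] E).comp C, algebraMap A[X] E X,
    { hE with map_right := fun e => (hg's' e).symm }, fun a => eval₂_C f y, hg'i, eval₂_X f y, hg'y⟩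

end PartialIsomorphism

section Corresponds

universe u

variable {K : Type u} [Field K] {σ : K →+* K} {ι : Type*} {a b : ι → K}

/-- The tuples `a` and `b` correspond to each other under a partial isomorphism of `(K, σ)`. -/
def Corresponds (σ : K →+* K) (a b : ι → K) : Prop :=
  ∃ (A : Type u) (_ : Field A) (s : A →+* A) (f g : A →+* K) (c : ι → A),
    IsPartialIsomorphism σ s f g ∧ f ∘ c = a ∧ g ∘ c = b

namespace Corresponds

lemma symm (h : Corresponds σ a b) : Corresponds σ b a := by
  obtain ⟨A, _, s, f, g, c, h, rfl, rfl⟩ := h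
  exact ⟨A, _, s, g, f, c, { h with map_left := h.map_right, map_right := h.map_left }, rfl, rfl⟩

lemma comp (h : Corresponds σ a b) {κ : Type*} (e : κ → ι) : Corresponds σ (a ∘ e) (b ∘ e) := by
  obtain ⟨A, _, s, f, g, c, h, rfl, rfl⟩ := h
  exact ⟨A, _, s, f, g, c ∘ e, h, rfl, rfl⟩

lemma map_eq (h : Corresponds σ a b) {i : ι} (ha : σ (a i) = a i) : σ (b i) = b i := by
  obtain ⟨A, _, s, f, g, c, h, rfl, rfl⟩ := h
  have hc : s (c i) = c i := f.injective ((h.map_left _).symm.trans ha)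
  exact (h.map_right _).trans (congrArg g hc)

end Corresponds

lemma comp_option_elim {α β : Type*} (f : α → β) (y : α) (a : ι → α) :
    (f ∘ fun o : Option ι => o.elim y a) = fun o => o.elim (f y) (f ∘ a) := by
  funext o
  cases o <;> rfl

lemma exists_isPartialIsomorphism_of_map_eq [IsAlgClosed K] [Countable ι]
    (ha : ∀ i, σ (a i) = a i) :
    ∃ s, IsPartialIsomorphism σ s
      (algebraMap (algebraicClosure (Subfield.closure (Set.range a)) K) K) (algebraMap _ K) := by
  have : Countable (Subfield.closure (Set.range a)) := Cardinal.mk_le_aleph0_iff.1 <|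
    (Subfield.cardinalMk_closure_le_max _).trans (max_le (Cardinal.mk_le_aleph0_iff.2
      (Set.countable_range a).to_subtype) le_rfl)
  have : Algebra.IsAlgebraic (fixedSubfield (RingHom.id (Subfield.closure (Set.range a)))) _ :=
    ⟨fun x => isAlgebraic_algebraMap (⟨x, rfl⟩ : fixedSubfield (RingHom.id _))⟩
  have hfix : Subfield.closure (Set.range a) ≤ fixedSubfield σ :=
    Subfield.closure_le.2 (Set.range_subset_iff.2 ha)
  exact exists_isPartialIsomorphism_algebraicClosure (t := RingHom.id _) fun x => hfix x.2

variable {U : Ultrafilter ℕ} {k : ℕ → Type*} [∀ n, Field (k n)] [∀ n, IsAlgClosed (k n)]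
  {F : ∀ n, k n →+* k n} {D : ∀ n, Finset (k n)} {a b : ι → Ultraprod U k} {y : Ultraprod U k}

lemma IsPartialIsomorphism.exists_corresponds {A : Type*} [Field A] {s : A →+* A}
    {f g : A →+* Ultraprod U k} (hU : ↑U ≤ Filter.atTop (α := ℕ))
    (hT : HasTwistedPoints (Ultraprod.map U F) (Ultraprod.avoiding U D))
    (h : IsPartialIsomorphism (Ultraprod.map U F) s f g) (c : ι → A)
    (hσy : Ultraprod.map U F y = y) (hy : y ∉ Set.range f) :
    ∃ y' ∈ Ultraprod.avoiding U D, Corresponds (Ultraprod.map U F)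
      (fun o : Option ι => o.elim y (f ∘ c)) (fun o => o.elim y' (g ∘ c)) := by
  obtain ⟨E, s', g', i, e, h', hif, hg'i, rfl, he⟩ := h.exists_extension hU hT hσy hy
  refine ⟨g' e, he, E, _, s', E.subtype, g', fun o => o.elim e (i ∘ c), h', ?_, ?_⟩
  · rw [comp_option_elim, show E.subtype ∘ i ∘ c = f ∘ c from funext fun j => hif (c j)]
    rfl
  · rw [comp_option_elim, show g' ∘ i ∘ c = g ∘ c from funext fun j => hg'i (c j)]

theorem Corresponds.exists_option (hU : ↑U ≤ Filter.atTop (α := ℕ))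
    (hT : HasTwistedPoints (Ultraprod.map U F) (Ultraprod.avoiding U D))
    (h : Corresponds (Ultraprod.map U F) a b) (hσy : Ultraprod.map U F y = y) :
    ∃ y', Corresponds (Ultraprod.map U F) (fun o : Option ι => o.elim y a)
      (fun o => o.elim y' b) := by
  obtain ⟨A, _, s, f, g, c, h, rfl, rfl⟩ := h
  by_cases hy : y ∈ Set.range f
  · obtain ⟨x, rfl⟩ := hy
    exact ⟨g x, A, _, s, f, g, fun o => o.elim x c, h, comp_option_elim .., comp_option_elim ..⟩
  · obtain ⟨y', -, hy'⟩ := h.exists_corresponds hU hT c hσy hy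
    exact ⟨y', hy'⟩

theorem exists_corresponds_avoiding [Countable ι] (hU : ↑U ≤ Filter.atTop (α := ℕ))
    (hT : HasTwistedPoints (Ultraprod.map U F) (Ultraprod.avoiding U D))
    (ha : ∀ i, Ultraprod.map U F (a i) = a i) (hσy : Ultraprod.map U F y = y)
    (hy : y ∉ algebraicClosure (Subfield.closure (Set.range a)) (Ultraprod U k)) :
    ∃ y' ∈ Ultraprod.avoiding U D, Corresponds (Ultraprod.map U F)
      (fun o : Option ι => o.elim y a) (fun o => o.elim y' a) := by
  obtain ⟨s, h⟩ := exists_isPartialIsomorphism_of_map_eq ha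
  refine h.exists_corresponds hU hT (fun i => algebraMap (Subfield.closure (Set.range a)) _
    ⟨a i, Subfield.subset_closure ⟨i, rfl⟩⟩) hσy ?_
  rintro ⟨x, rfl⟩
  exact hy x.2

end Corresponds

/-! ### Ultraproducts of finite fields of square order -/

section Frobenius

open Polynomial

variable (F L : Type*) [Field F] [Finite F] [Field L] [Algebra F L]

/-- The power map `x ↦ x ^ #F` of an extension field of the finite field `F`. -/
noncomputable def cardFrobenius : L →+* L :=
  let := Fintype.ofFinite F
  FiniteField.frobeniusAlgHom F L

variable {F L}

lemma cardFrobenius_apply (x : L) : cardFrobenius F L x = x ^ Nat.card F := by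
  let := Fintype.ofFinite F
  exact congrArg (x ^ ·) Nat.card_eq_fintype_card.symm

lemma cardFrobenius_eq_self_iff {x : L} :
    cardFrobenius F L x = x ↔ x ∈ Set.range (algebraMap F L) := by
  let := Fintype.ofFinite F
  rw [cardFrobenius_apply, Nat.card_eq_fintype_card]
  refine ⟨fun hx => ?_, ?_⟩
  · have hsplit : (X ^ Fintype.card F - X : F[X]).Splits := by
      rw [splits_iff_card_roots, FiniteField.roots_X_pow_card_sub_X,
        FiniteField.X_pow_card_sub_X_natDegree_eq F Fintype.one_lt_card]
      rfl
    refine hsplit.mem_range_of_isRoot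
      (FiniteField.X_pow_card_sub_X_ne_zero F Fintype.one_lt_card) ?_
    simp [hx]
  · rintro ⟨y, rfl⟩
    rw [← map_pow, FiniteField.pow_card]

variable {q : ℕ}

lemma cast_eq_zero_of_card_eq_sq (hF : Nat.card F = q ^ 2) : (q : L) = 0 := by
  let := Fintype.ofFinite F
  have hq : (q : F) ^ 2 = 0 := by
    rw [← Nat.cast_pow, ← hF, Nat.card_eq_fintype_card, FiniteField.cast_card_eq_zero]
  rw [← map_natCast (algebraMap F L), pow_eq_zero_iff two_ne_zero |>.1 hq, map_zero]

lemma exists_ringHom_pow_of_card_eq_sq (hF : Nat.card F = q ^ 2) :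
    ∃ φ : L →+* L, (∀ x, φ x = x ^ q) ∧ φ.comp φ = cardFrobenius F L := by
  let := Fintype.ofFinite F
  obtain ⟨p, hp⟩ := CharP.exists F
  obtain ⟨m, hpp, hm⟩ := FiniteField.card F p
  have := Fact.mk hpp
  have := charP_of_injective_algebraMap (algebraMap F L).injective p
  obtain ⟨j, -, rfl⟩ := (Nat.dvd_prime_pow hpp).1 <| (dvd_pow_self q two_ne_zero).trans
    (hF.symm.trans (Nat.card_eq_fintype_card.trans hm)).dvd
  refine ⟨iterateFrobenius L p j, iterateFrobenius_def p j, RingHom.ext fun x => ?_⟩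
  rw [RingHom.comp_apply, iterateFrobenius_def, iterateFrobenius_def, cardFrobenius_apply, hF,
    ← pow_mul, sq]

end Frobenius

section FiniteFields

open Filter

variable (F : ℕ → Type) [∀ n, Field (F n)]

/-- The ultraproduct of the algebraic closures of the fields `F n`. -/
abbrev ClosureUltraprod : Type :=
  Ultraprod (hyperfilter ℕ) fun n => AlgebraicClosure (F n)

/-- The ultraproduct of the fields `F n`, as a family of elements of the ultraproduct of their
algebraic closures. -/
noncomputable def ofSeq : (∀ n, F n) →+* ClosureUltraprod F :=
  (Ultraprod.mk _ _).comp (RingHom.pi fun n => (algebraMap (F n) _).comp (Pi.evalRingHom F n))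

variable {F}

lemma ofSeq_eq_ofSeq_iff {a b : ∀ n, F n} :
    ofSeq F a = ofSeq F b ↔ ∀ᶠ n in hyperfilter ℕ, a n = b n :=
  (Ultraprod.isUltraproductMap_mk _ _).map_eq_map_iff.trans <| eventually_congr <|
    Eventually.of_forall fun n => (algebraMap (F n) (AlgebraicClosure (F n))).injective.eq_iff

variable (F) [∀ n, Finite (F n)]

/-- The ultraproduct of the Frobenius maps `x ↦ x ^ #(F n)`. -/
noncomputable def ultraFrobenius : ClosureUltraprod F →+* ClosureUltraprod F :=
  Ultraprod.map _ fun n => cardFrobenius (F n) (AlgebraicClosure (F n))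

variable {F}

lemma ultraFrobenius_eq_self_iff {x : ClosureUltraprod F} :
    ultraFrobenius F x = x ↔ x ∈ Set.range (ofSeq F) := by
  have hmk := Ultraprod.isUltraproductMap_mk (hyperfilter ℕ) fun n => AlgebraicClosure (F n)
  refine ⟨fun hx => ?_, ?_⟩
  · obtain ⟨t, rfl⟩ := hmk.surjective x
    have hfix : ∀ᶠ n in hyperfilter ℕ, cardFrobenius (F n) _ (t n) = t n :=
      hmk.map_eq_map_iff.1 hx
    obtain ⟨y, hy⟩ := skolem.1 (hfix.mono fun n hn => cardFrobenius_eq_self_iff.1 hn)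
    exact ⟨y, hmk.map_eq_map_iff.2 hy⟩
  · rintro ⟨a, rfl⟩
    exact hmk.map_eq_map_iff.2 (Eventually.of_forall fun n =>
      cardFrobenius_eq_self_iff.2 ⟨a n, rfl⟩)

lemma ultraFrobenius_ofSeq (a : ∀ n, F n) : ultraFrobenius F (ofSeq F a) = ofSeq F a :=
  ultraFrobenius_eq_self_iff.2 ⟨a, rfl⟩

/-- The finite fields `F n` have the square orders `q n ^ 2`, which tend to infinity along the
ultrafilter. -/
structure HasSquareOrders (F : ℕ → Type) (q : ℕ → ℕ) : Prop where
  tendsto : Tendsto q (hyperfilter ℕ) atTop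
  card_eq : ∀ n, Nat.card (F n) = q n ^ 2

variable {q : ℕ → ℕ}

lemma HasSquareOrders.hasTwistedPoints (hF : HasSquareOrders F q)
    {D : ∀ n, Finset (AlgebraicClosure (F n))} (hD : ∀ n, n * (D n).card ≤ q n ^ 2) :
    HasTwistedPoints (ultraFrobenius F) (Ultraprod.avoiding (hyperfilter ℕ) D) := by
  intro m h δ w hw i
  choose φ hφ hφφ using fun n =>
    exists_ringHom_pow_of_card_eq_sq (L := AlgebraicClosure (F n)) (hF.card_eq n)
  have hσ : ultraFrobenius F = Ultraprod.map _ fun n => (φ n).comp (φ n) := by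
    simp only [hφφ, ultraFrobenius]
  rw [hσ] at hw ⊢
  have hDC (C : ℕ) : ∀ᶠ n in hyperfilter ℕ, C * (D n).card ≤ q n ^ 2 := by
    filter_upwards [Nat.hyperfilter_le_atTop (eventually_ge_atTop C)] with n hn
    exact (Nat.mul_le_mul_right _ hn).trans (hD n)
  obtain ⟨t, ht, z, hz⟩ := exists_isTwistedPoint_ultraprod hF.tendsto hφ
    (fun n => cast_eq_zero_of_card_eq_sq (hF.card_eq n)) hDC hw i
  exact ⟨_, ⟨t, rfl, ht⟩, z, hz⟩

variable {ι : Type*} {a b : ι → ∀ n, F n}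

lemma HasSquareOrders.exists_corresponds_option (hF : HasSquareOrders F q)
    (h : Corresponds (ultraFrobenius F) (ofSeq F ∘ a) (ofSeq F ∘ b)) (y : ∀ n, F n) :
    ∃ y', Corresponds (ultraFrobenius F) (ofSeq F ∘ fun o : Option ι => o.elim y a)
      (ofSeq F ∘ fun o => o.elim y' b) := by
  obtain ⟨y', hy'⟩ := h.exists_option Nat.hyperfilter_le_atTop
    (hF.hasTwistedPoints (D := fun _ => ∅) (by simp)) (ultraFrobenius_ofSeq y)
  obtain ⟨y', rfl⟩ := ultraFrobenius_eq_self_iff.1 (hy'.map_eq (i := none) (ultraFrobenius_ofSeq y))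
  exact ⟨y', by rwa [comp_option_elim, comp_option_elim]⟩

lemma HasSquareOrders.exists_corresponds_notMem [Countable ι] (hF : HasSquareOrders F q)
    {D : ∀ n, Finset (F n)} (hD : ∀ n, n * (D n).card ≤ q n ^ 2) {y : ∀ n, F n}
    (hy : ofSeq F y ∉ algebraicClosure (Subfield.closure (Set.range (ofSeq F ∘ a))) _) :
    ∃ y', (∀ᶠ n in hyperfilter ℕ, y' n ∉ D n) ∧
      Corresponds (ultraFrobenius F) (ofSeq F ∘ fun o : Option ι => o.elim y a)
        (ofSeq F ∘ fun o => o.elim y' a) := by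
  obtain ⟨_, ⟨t, rfl, ht⟩, hcor⟩ := exists_corresponds_avoiding Nat.hyperfilter_le_atTop
    (hF.hasTwistedPoints (D := fun n => (D n).map ⟨algebraMap (F n) _, RingHom.injective _⟩)
      (by simpa using hD))
    (fun i => ultraFrobenius_ofSeq (a i)) (ultraFrobenius_ofSeq y) hy
  obtain ⟨y', hy'⟩ := ultraFrobenius_eq_self_iff.1
    (hcor.map_eq (i := none) (ultraFrobenius_ofSeq y))
  refine ⟨y', ?_, ?_⟩
  · filter_upwards [ht, (Ultraprod.isUltraproductMap_mk _ _).map_eq_map_iff.1 hy']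
      with n hn (hny' : algebraMap (F n) _ (y' n) = t n) hmem
    exact hn (hny' ▸ Finset.mem_map_of_mem _ hmem)
  · rw [comp_option_elim, comp_option_elim, hy']
    exact hcor

end FiniteFields

/-! ### Invariance of formulas -/

section Invariant

open Filter

variable {ι κ : Type*}

/-- The value in a ring of a term in the language of rings. -/
noncomputable def termValue {R : Type*} [CommRing R] (t : Language.ring.Term ι) (v : ι → R) : R :=
  let := Ring.compatibleRingOfRing R
  t.realize v

lemma map_termValue {R S : Type*} [CommRing R] [CommRing S] (f : R →+* S)
    (t : Language.ring.Term ι) (v : ι → R) : f (termValue t v) = termValue t (f ∘ v) := by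
  let := Ring.compatibleRingOfRing R
  let := Ring.compatibleRingOfRing S
  change f (t.realize v) = t.realize (f ∘ v)
  induction t with
  | var i => rfl
  | @func l g ts ih =>
    simp only [Language.Term.realize, ← ih]
    cases g
    · exact map_add f _ _
    · exact map_mul f _ _
    · exact map_neg f _
    · exact map_zero f
    · exact map_one f

lemma Corresponds.termValue_eq_iff {K : Type*} [Field K] {σ : K →+* K} {a b : ι → K}
    (h : Corresponds σ a b) (t u : Language.ring.Term ι) :
    termValue t a = termValue u a ↔ termValue t b = termValue u b := by
  obtain ⟨A, _, s, f, g, c, -, rfl, rfl⟩ := h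
  simp only [← map_termValue, f.injective.eq_iff, g.injective.eq_iff]

lemma termValue_ofSeq_eq_iff {F : ℕ → Type} [∀ n, Field (F n)] {t u : Language.ring.Term ι}
    {a : ι → ∀ n, F n} : termValue t (ofSeq F ∘ a) = termValue u (ofSeq F ∘ a) ↔
      ∀ᶠ n in hyperfilter ℕ, termValue t (fun i => a i n) = termValue u fun i => a i n := by
  rw [← map_termValue, ← map_termValue, ofSeq_eq_ofSeq_iff]
  have h (t : Language.ring.Term ι) n : termValue t a n = termValue t fun i => a i n :=
    map_termValue (Pi.evalRingHom F n) t a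
  simp only [h]

lemma succ_le_ncard_iff {α : Type*} {s : Set α} (hs : s.Finite) {C : ℕ} :
    C + 1 ≤ s.ncard ↔ ∃ y ∈ s, C ≤ (s \ {y}).ncard := by
  refine ⟨fun h => ?_, fun ⟨y, hy, h⟩ => ?_⟩
  · obtain ⟨y, hy⟩ := Set.nonempty_of_ncard_ne_zero (s := s) (by omega)
    exact ⟨y, hy, by rwa [← Set.ncard_sdiff_singleton_add_one hy hs, Nat.add_le_add_iff_right] at h⟩
  · rwa [← Set.ncard_sdiff_singleton_add_one hy hs, Nat.add_le_add_iff_right]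

/-- A property of `ι`-tuples of elements of fields. -/
abbrev FieldPredicate (ι : Type*) := ∀ (F : Type) [Field F], (ι → F) → Prop

namespace FieldPredicate

/-- A predicate is invariant if, in ultraproducts of finite fields of square order, it is preserved
by partial isomorphisms of the ultraproduct of the algebraic closures. -/
def IsInvariant (P : FieldPredicate ι) : Prop :=
  ∀ ⦃F : ℕ → Type⦄ [∀ n, Field (F n)] [∀ n, Finite (F n)] ⦃q : ℕ → ℕ⦄, HasSquareOrders F q →
    ∀ ⦃a b : ι → ∀ n, F n⦄, Corresponds (ultraFrobenius F) (ofSeq F ∘ a) (ofSeq F ∘ b) →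
      (∀ᶠ n in hyperfilter ℕ, P (F n) fun i => a i n) →
        ∀ᶠ n in hyperfilter ℕ, P (F n) fun i => b i n

/-- The elements that extend the tuple `a` to a tuple satisfying `P`. -/
def fiber (P : FieldPredicate (Option ι)) {F : Type} [Field F] (a : ι → F) : Set F :=
  {y | P F fun o => o.elim y a}

lemma option_elim_apply_iff_mem_fiber (P : FieldPredicate (Option ι)) {F : ℕ → Type}
    [∀ n, Field (F n)] {a : ι → ∀ n, F n} {y : ∀ n, F n} {n : ℕ} :
    P (F n) (fun o => o.elim y a n) ↔ y n ∈ P.fiber fun i => a i n :=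
  iff_of_eq (congrArg (P (F n)) (comp_option_elim (fun z : ∀ n, F n => z n) y a))

namespace IsInvariant

variable {P Q : FieldPredicate ι}

lemma congr (hP : P.IsInvariant)
    (hPQ : ∀ (F : Type) [Field F] [Finite F] (a : ι → F), P F a ↔ Q F a) : Q.IsInvariant := by
  intro F _ _ q hF a b hab hQ
  simp only [← hPQ] at hQ ⊢
  exact hP hF hab hQ

lemma not (hP : P.IsInvariant) : IsInvariant fun F _ (a : ι → F) => ¬ P F a := by
  intro F _ _ q hF a b hab hPa
  rw [Ultrafilter.eventually_not] at hPa ⊢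
  exact fun hPb => hPa (hP hF hab.symm hPb)

lemma and (hP : P.IsInvariant) (hQ : Q.IsInvariant) :
    IsInvariant fun F _ (a : ι → F) => P F a ∧ Q F a := fun _ _ _ _ hF _ _ hab h =>
  (hP hF hab (h.mono fun _ h => h.1)).and (hQ hF hab (h.mono fun _ h => h.2))

lemma imp (hP : P.IsInvariant) (hQ : Q.IsInvariant) :
    IsInvariant fun F _ (a : ι → F) => P F a → Q F a :=
  (hP.and hQ.not).not.congr fun F _ _ a => by tauto

lemma comp (hP : P.IsInvariant) (e : ι → κ) : IsInvariant fun F _ (a : κ → F) => P F (a ∘ e) :=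
  fun _ _ _ _ hF _ _ hab h => hP hF (hab.comp e) h

lemma true : IsInvariant fun F _ (_ : ι → F) => True :=
  fun _ _ _ _ _ _ _ _ _ => Eventually.of_forall fun _ => trivial

lemma nonempty_fiber {P : FieldPredicate (Option ι)} (hP : P.IsInvariant) :
    IsInvariant fun F _ (a : ι → F) => (P.fiber a).Nonempty := by
  intro F _ _ q hF a b hab hne
  obtain ⟨y, hy⟩ := skolem.1 hne
  obtain ⟨y', hy'⟩ := hF.exists_corresponds_option hab y
  have hb := hP hF hy' (hy.mono fun n hn => P.option_elim_apply_iff_mem_fiber.2 hn)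
  exact hb.mono fun n hn => ⟨y' n, P.option_elim_apply_iff_mem_fiber.1 hn⟩

lemma termValue_eq (t u : Language.ring.Term ι) :
    IsInvariant fun F _ (a : ι → F) => termValue t a = termValue u a :=
  fun _ _ _ _ _ _ _ hab h =>
    termValue_ofSeq_eq_iff.1 ((hab.termValue_eq_iff t u).1 (termValue_ofSeq_eq_iff.2 h))

lemma apply_eq (i j : ι) : IsInvariant fun F _ (a : ι → F) => a i = a j :=
  termValue_eq (.var i) (.var j)

lemma le_ncard_fiber (C : ℕ) {P : FieldPredicate (Option ι)} (hP : P.IsInvariant) :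
    IsInvariant fun F _ (a : ι → F) => C ≤ (P.fiber a).ncard := by
  induction C generalizing ι with
  | zero => exact true.congr (by simp)
  | succ C ih =>
    let e (o : Option ι) : Option (Option ι) := o.elim none (some ∘ some)
    refine (hP.and (ih ((hP.comp e).and (apply_eq none (some none)).not))).nonempty_fiber.congr
      fun F _ _ a => ?_
    have he (y z : F) : (fun o : Option (Option ι) => o.elim z fun o => o.elim y a) ∘ e =
      fun o => o.elim z a := by
      funext o
      cases o <;> rfl
    rw [succ_le_ncard_iff (Set.toFinite _)]
    simp only [fiber, he]
    rfl

end IsInvariant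

/-- The predicate defined by a formula in the language of rings. -/
def ofFormula {n : ℕ} (φ : Language.ring.BoundedFormula ι n) : FieldPredicate (ι ⊕ Fin n) :=
  fun F _ a =>
    let := Ring.compatibleRingOfRing F
    φ.Realize (a ∘ Sum.inl) (a ∘ Sum.inr)

theorem IsInvariant.ofFormula {n : ℕ} (φ : Language.ring.BoundedFormula ι n) :
    IsInvariant (ofFormula φ) := by
  induction φ with
  | falsum => exact true.not.congr fun _ _ _ _ => not_true
  | equal t u =>
    refine (termValue_eq t u).congr fun F _ _ a => ?_
    rw [← Sum.elim_comp_inl_inr a]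
    rfl
  | rel r => exact r.elim
  | imp φ ψ hφ hψ => exact hφ.imp hψ
  | @all n φ hφ =>
    let e : ι ⊕ Fin (n + 1) → Option (ι ⊕ Fin n) :=
      Sum.elim (some ∘ Sum.inl)
        (Fin.snoc (α := fun _ => Option (ι ⊕ Fin n)) (some ∘ Sum.inr) none)
    refine (hφ.comp e).not.nonempty_fiber.not.congr fun F _ _ a => ?_
    have he (y : F) : (fun o : Option _ => o.elim y a) ∘ e ∘ Sum.inr =
        (Fin.snoc (a ∘ Sum.inr) y : Fin (n + 1) → F) := by
      funext i
      refine Fin.lastCases ?_ (fun i => ?_) i <;> simp [e]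
    rw [Set.not_nonempty_iff_eq_empty, Set.eq_empty_iff_forall_notMem]
    refine forall_congr' fun y => not_not.trans ?_
    let := Ring.compatibleRingOfRing F
    exact iff_of_eq (congrArg (φ.Realize _) (he y))

end FieldPredicate
end Invariant

/-! ### Sizes of definable sets -/

section Counting

open Filter

section Dichotomy

variable {F : ℕ → Type} [∀ n, Field (F n)]

lemma exists_forall_mem_ofSeq_notMem {D : ∀ n, Finset (F n)} (hD : ∀ n, n < (D n).card)
    {T : Set (ClosureUltraprod F)} (hT : T.Countable) :
    ∃ y : ∀ n, F n, (∀ n, y n ∈ D n) ∧ ofSeq F y ∉ T := by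
  classical
  obtain ⟨e, he⟩ := Set.countable_iff_exists_subset_range.1 hT
  let t (j : ℕ) : ∀ n, F n := Function.invFun (ofSeq F) (e j)
  have hex n : ∃ y ∈ D n, y ∉ (Finset.range n).image fun j => t j n :=
    Finset.exists_mem_notMem_of_card_lt_card <|
      Finset.card_image_le.trans_lt (by simpa using hD n)
  choose y hyD hyt using hex
  refine ⟨y, hyD, fun hyT => ?_⟩
  obtain ⟨j, hj⟩ := he hyT
  have hty : ofSeq F (t j) = ofSeq F y := (Function.invFun_eq ⟨y, hj.symm⟩).trans hj
  obtain ⟨n, hn, hjn⟩ := ((ofSeq_eq_ofSeq_iff.1 hty).and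
    (Nat.hyperfilter_le_atTop (eventually_gt_atTop j))).exists
  exact hyt n (Finset.mem_image.2 ⟨j, Finset.mem_range.2 hjn, hn⟩)

variable {ι : Type*} [Countable ι] {P : FieldPredicate (Option ι)}

lemma FieldPredicate.IsInvariant.exists_lt_mul_ncard_fiber [∀ n, Finite (F n)] {q : ℕ → ℕ}
    (hP : P.IsInvariant) (hF : HasSquareOrders F q) {a : ∀ n, ι → F n}
    (ha : ∀ n, n < (P.fiber (a n)).ncard) : ∃ n, q n ^ 2 < n * (P.fiber (a n)).ncard := by
  by_contra! hcard
  have hfin n : (P.fiber (a n)).Finite := Set.toFinite _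
  let D n : Finset (F n) := (hfin n).toFinset
  have hD n : (D n).card = (P.fiber (a n)).ncard := (Set.ncard_eq_toFinset_card _ _).symm
  let a' (i : ι) (n : ℕ) : F n := a n i
  obtain ⟨s, hs⟩ := exists_isPartialIsomorphism_of_map_eq (σ := ultraFrobenius F)
    (a := ofSeq F ∘ a') fun i => ultraFrobenius_ofSeq (a' i)
  have := hs.countable
  obtain ⟨y, hyD, hy⟩ := exists_forall_mem_ofSeq_notMem (fun n => (ha n).trans_eq (hD n).symm)
    (Set.to_countable
      (algebraicClosure (Subfield.closure (Set.range (ofSeq F ∘ a'))) (ClosureUltraprod F) : Set _))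
  obtain ⟨y', hy'D, hy'⟩ := hF.exists_corresponds_notMem (D := D)
    (by simpa only [hD] using hcard) hy
  have hPy : ∀ᶠ n in hyperfilter ℕ, P (F n) fun o => o.elim y' a' n :=
    hP hF hy' <| Eventually.of_forall fun n =>
      P.option_elim_apply_iff_mem_fiber.2 ((hfin n).mem_toFinset.1 (hyD n))
  obtain ⟨n, hn, hnD⟩ := (hPy.and hy'D).exists
  exact hnD ((hfin n).mem_toFinset.2 (P.option_elim_apply_iff_mem_fiber.1 hn))

theorem FieldPredicate.IsInvariant.ncard_fiber_le_or_ge (hP : P.IsInvariant) :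
    ∃ C, 0 < C ∧ ∀ (F : Type) [Field F] [Finite F] (q : ℕ), Nat.card F = q ^ 2 → ∀ a : ι → F,
      (P.fiber a).ncard ≤ C ∨ q ^ 2 ≤ C * (P.fiber a).ncard := by
  by_contra! hcon
  choose F _ _ q hF a hlt hgt using fun n : ℕ => hcon (n + 1) n.succ_pos
  have hq n : n ≤ q n := by nlinarith [hlt n, hgt n]
  have hSq : HasSquareOrders F q :=
    ⟨tendsto_atTop_mono hq Nat.hyperfilter_le_atTop, hF⟩
  obtain ⟨n, hn⟩ := hP.exists_lt_mul_ncard_fiber hSq fun n => n.lt_succ_self.trans (hlt n)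
  exact hn.not_ge ((Nat.mul_le_mul_right _ n.le_succ).trans (hgt n).le)

end Dichotomy

/-- The number `c` is zero or, up to the factor `C`, a power of `Q`. -/
def IsPowerSized (C Q c : ℕ) : Prop :=
  c = 0 ∨ ∃ j, Q ^ j ≤ C * c ∧ c ≤ C * Q ^ j

namespace IsPowerSized

variable {B C C' Q c c' q : ℕ}

lemma mono (h : IsPowerSized C Q c) (hC : C ≤ C') : IsPowerSized C' Q c :=
  h.imp_right fun ⟨j, h₁, h₂⟩ =>
    ⟨j, h₁.trans (Nat.mul_le_mul_right _ hC), h₂.trans (Nat.mul_le_mul_right _ hC)⟩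

lemma add (hQ : 0 < Q) (h : IsPowerSized C Q c) (h' : IsPowerSized C' Q c') :
    IsPowerSized (C + C') Q (c + c') := by
  rcases h with rfl | ⟨j, h₁, h₂⟩
  · rw [zero_add]
    exact h'.mono (Nat.le_add_left _ _)
  rcases h' with rfl | ⟨j', h₁', h₂'⟩
  · exact mono (.inr ⟨j, h₁, h₂⟩) (Nat.le_add_right _ _)
  refine .inr ⟨max j j', ?_, ?_⟩
  · rcases max_choice j j' with h | h <;> rw [h]
    · exact h₁.trans (by gcongr <;> exact Nat.le_add_right _ _)
    · exact h₁'.trans (by gcongr <;> exact Nat.le_add_left _ _)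
  · calc c + c' ≤ C * Q ^ j + C' * Q ^ j' := add_le_add h₂ h₂'
      _ ≤ C * Q ^ max j j' + C' * Q ^ max j j' := by
        gcongr
        exacts [le_max_left _ _, le_max_right _ _]
      _ = (C + C') * Q ^ max j j' := (add_mul _ _ _).symm

lemma sum {α : Type*} {s : Finset α} {w : α → ℕ} (hs : IsPowerSized C Q s.card) (i : ℕ)
    (hle : ∀ x ∈ s, Q ^ i ≤ B * w x) (hge : ∀ x ∈ s, w x ≤ B * Q ^ i) :
    IsPowerSized (B * C) Q (∑ x ∈ s, w x) := by
  rcases hs with hs | ⟨j, h₁, h₂⟩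
  · exact .inl (by simp [Finset.card_eq_zero.1 hs])
  refine .inr ⟨j + i, ?_, ?_⟩
  · calc Q ^ (j + i) ≤ C * s.card * Q ^ i := by rw [pow_add]; gcongr
      _ = C * (s.card • Q ^ i) := by rw [smul_eq_mul, mul_assoc]
      _ ≤ C * ∑ x ∈ s, B * w x := by gcongr; exact s.card_nsmul_le_sum _ _ hle
      _ = B * C * ∑ x ∈ s, w x := by rw [← Finset.mul_sum]; ring
  · calc ∑ x ∈ s, w x ≤ s.card • (B * Q ^ i) := s.sum_le_card_nsmul _ _ hge
      _ ≤ C * Q ^ j * (B * Q ^ i) := by rw [smul_eq_mul]; gcongr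
      _ = B * C * Q ^ (j + i) := by ring

lemma sum_univ {α : Type*} [Fintype α] {w : α → ℕ} (hw : ∀ x, w x ≤ Q) (hQ : 0 < Q) (hB : 0 < B)
    (hor : ∀ x, w x ≤ B ∨ Q ≤ B * w x)
    (hsmall : IsPowerSized C Q {x | 1 ≤ w x ∧ ¬ B + 1 ≤ w x}.ncard)
    (hlarge : IsPowerSized C' Q {x | B + 1 ≤ w x}.ncard) :
    IsPowerSized (B * C + B * C') Q (∑ x, w x) := by
  rw [Set.ncard_eq_toFinset_card', Set.toFinset_ofPred] at hsmall hlarge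
  have hsum : ∑ x with ¬ B + 1 ≤ w x, w x = ∑ x with 1 ≤ w x ∧ ¬ B + 1 ≤ w x, w x := by
    rw [Finset.sum_filter, Finset.sum_filter]
    refine Finset.sum_congr rfl fun x _ => ?_
    split_ifs <;> omega
  rw [← Finset.sum_filter_not_add_sum_filter _ fun x => B + 1 ≤ w x, hsum]
  refine (hsmall.sum 0 (fun x hx => ?_) fun x hx => ?_).add hQ
    (hlarge.sum 1 (fun x hx => ?_) fun x _ => ?_)
  · exact Nat.mul_pos hB (Finset.mem_filter.1 hx).2.1
  · rw [pow_zero, mul_one]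
    exact Nat.le_of_lt_succ (not_le.1 (Finset.mem_filter.1 hx).2.2)
  · rw [pow_one]
    exact (hor x).resolve_left (Nat.not_le_of_lt (Finset.mem_filter.1 hx).2)
  · rw [pow_one]
    exact (hw x).trans (Nat.le_mul_of_pos_left _ hB)

lemma le_of_sq (h : IsPowerSized C (q ^ 2) q) : q ≤ C := by
  rcases q.eq_zero_or_pos with rfl | hq
  · exact C.zero_le
  obtain hq' | ⟨_ | j, h₁, h₂⟩ := h
  · omega
  · simpa using h₂
  · have hqC : q * q ≤ C * q := calc
      q * q = q ^ 2 := (sq q).symm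
      _ ≤ (q ^ 2) ^ (j + 1) := Nat.le_self_pow j.succ_ne_zero _
      _ ≤ C * q := h₁
    exact Nat.le_of_mul_le_mul_right hqC hq

end IsPowerSized

lemma FieldPredicate.ncard_setOf_eq_sum_ncard_fiber {ι F : Type} [Field F] [Finite F]
    [Fintype (ι → F)] (P : FieldPredicate (Option ι)) :
    {a | P F a}.ncard = ∑ a : ι → F, (P.fiber a).ncard := by
  have helim (a : Option ι → F) : (fun o => o.elim (a none) (a ∘ some)) = a := by
    funext o
    cases o <;> rfl
  let e : {a | P F a} ≃ Σ a : ι → F, P.fiber a :=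
    { toFun := fun a => ⟨a.1 ∘ some, a.1 none, (helim a.1).symm ▸ a.2⟩
      invFun := fun z => ⟨fun o => o.elim z.2.1 z.1, z.2.2⟩
      left_inv := fun a => Subtype.ext (helim a.1)
      right_inv := fun z => rfl }
  exact (Nat.card_congr e).trans Nat.card_sigma

theorem FieldPredicate.IsInvariant.exists_isPowerSized {ι : Type} [Finite ι]
    {P : FieldPredicate ι} (hP : P.IsInvariant) :
    ∃ C, ∀ (F : Type) [Field F] [Finite F] (q : ℕ), Nat.card F = q ^ 2 →
      IsPowerSized C (q ^ 2) {a | P F a}.ncard := by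
  induction ι using Finite.induction_empty_option with
  | @of_equiv α β e ih =>
    obtain ⟨C, hC⟩ := ih (hP.comp e.symm)
    refine ⟨C, fun F _ _ q hF => ?_⟩
    convert hC F q hF using 1
    exact (Nat.card_congr ((e.arrowCongr (.refl F)).subtypeEquiv fun a => Iff.rfl)).symm
  | h_empty =>
    refine ⟨1, fun F _ _ _ _ => ?_⟩
    have hle := Set.ncard_le_card {a : PEmpty → F | P F a}
    rw [Nat.card_unique] at hle
    obtain h | h := Nat.le_one_iff_eq_zero_or_eq_one.1 hle
    · exact .inl h
    · exact .inr ⟨0, by simp [h]⟩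
  | @h_option α _ ih =>
    obtain ⟨B, hB, hor⟩ := hP.ncard_fiber_le_or_ge
    obtain ⟨Cs, hsmall⟩ := ih ((hP.le_ncard_fiber 1).and (hP.le_ncard_fiber (B + 1)).not)
    obtain ⟨Cl, hlarge⟩ := ih (hP.le_ncard_fiber (B + 1))
    refine ⟨B * Cs + B * Cl, fun F _ _ q hF => ?_⟩
    have := Fintype.ofFinite (α → F)
    rw [FieldPredicate.ncard_setOf_eq_sum_ncard_fiber]
    exact .sum_univ (fun a => hF ▸ Set.ncard_le_card _) (hF ▸ Nat.card_pos) hB (hor F q hF)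
      (hsmall F q hF) (hlarge F q hF)

theorem exists_isPowerSized_ringFormulaCount {m : ℕ} (φ : Language.ring.Formula (Fin m)) :
    ∃ C, ∀ (F : Type) [Field F] [Finite F] (q : ℕ), Nat.card F = q ^ 2 →
      IsPowerSized C (q ^ 2) (ringFormulaCount φ F) := by
  obtain ⟨C, hC⟩ := ((FieldPredicate.IsInvariant.ofFormula φ).comp
    (Sum.elim id Fin.elim0)).exists_isPowerSized
  refine ⟨C, fun F _ _ q hF => ?_⟩
  convert hC F q hF using 1
  let := Ring.compatibleRingOfRing F
  refine Nat.card_congr (Equiv.subtypeEquivRight fun x => ?_)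
  exact iff_of_eq (congrArg (Language.BoundedFormula.Realize φ x) (Subsingleton.elim _ _))

end Counting

end Felgner

/-- Many-variable strengthening of the negative answer to Felgner's problem: for every
formula `φ` with `m ≥ 1` free variables there is `N` so that for all prime powers
`q = p^k ≥ N`, the number of satisfying `m`-tuples over the field with `q^2` elements is
never exactly `q`. -/
theorem felgner_negative_many_variables (m : ℕ) (hm : 1 ≤ m)
    (φ : Language.ring.Formula (Fin m)) :
    ∃ N : ℕ, ∀ (p : ℕ) [Fact p.Prime], ∀ k : ℕ, 1 ≤ k → N ≤ p ^ k →
      ringFormulaCount φ (GaloisField p (2 * k)) ≠ p ^ k := by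
  obtain ⟨C, hC⟩ := Felgner.exists_isPowerSized_ringFormulaCount φ
  refine ⟨C + 1, fun p _ k hk hN hcount => ?_⟩
  have hcard : Nat.card (GaloisField p (2 * k)) = (p ^ k) ^ 2 := by
    rw [GaloisField.card p _ (by omega), ← pow_mul, mul_comm]
  have : Finite (GaloisField p (2 * k)) := Nat.finite_of_card_ne_zero <| by
    rw [hcard]
    exact pow_ne_zero _ (pow_ne_zero _ (Fact.out : p.Prime).ne_zero)
  have hsize := hC (GaloisField p (2 * k)) (p ^ k) hcard
  rw [hcount] at hsize
  exact absurd hsize.le_of_sq (by omega)
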